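/- arXiv:1902.08064 — 5 statements merged into one kernel-verified Lean document; each statement's English description precedes it below -/
import Mathlib

section
/- Suppose N ∈ ℕ and λ ∈ ℝ satisfy N > λ > 0. Then there is a constant d_{λ,N} > 0 such that for all n ∈ ℕ with n ≥ N, sup_{x∈[−1,1]} |C_n^λ(x)| ≤ d_{λ,N} · ‖C_{n−N}^{λ+N}‖_{L²_{λ+N}} · n^{λ−N}. -/
open MeasureTheory

/-- The Gegenbauer (ultraspherical) polynomial `C_n^λ(x)` (real form). -/
noncomputable def gegenbauerR (l : ℝ) (n : ℕ) (x : ℝ) : ℝ :=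
  ∑ k ∈ Finset.range (n / 2 + 1),
    ((-1 : ℝ) ^ k * (ascPochhammer ℝ (n - k)).eval l /
      ((Nat.factorial k : ℝ) * (Nat.factorial (n - 2 * k) : ℝ))) * (2 * x) ^ (n - 2 * k)

/-- The `L²_λ` norm of `C_n^λ`:
`‖C_n^λ‖_{L²_λ} = (∫_{-1}^1 C_n^λ(x)² (1-x²)^{λ-1/2} dx)^{1/2}`. -/
noncomputable def gegL2Norm (l : ℝ) (n : ℕ) : ℝ :=
  Real.sqrt (∫ x in (-1 : ℝ)..1, gegenbauerR l n x ^ 2 * (1 - x ^ 2) ^ (l - 1 / 2 : ℝ))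

/-!
Let `λ > 0`. By the Gegenbauer equation, Sonin's function `n(n+2λ) C_n² + (1-x²) (C_n')²` has
derivative `4λx (C_n')²`, so it increases on `[0, 1]`; with parity, `|C_n^λ|` attains its maximum
over `[-1, 1]` at `1`, where it equals `(2λ)_n / n!`. For `μ > -1/2`, orthogonality and the ladder
relations, integrated against the weight, give the norms `(n+μ) ‖C_n^μ‖² = μ ‖C_0^μ‖² (2μ)_n / n!`.
Euler's limit for the Gamma function says that `(a)_n / n!` is of exact order `n^(a-1)`. Thus the
supremum has order `n^(2λ-1)` and, for `μ ≠ 0`, the norm has order `n^(μ-1)`, and the bound is the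
comparison of the two at `μ = λ + N`; a single constant covers all degrees because no norm vanishes.
-/

section Identities

open Polynomial
open scoped Nat

variable (l : ℝ)

/-- The summand of the Gegenbauer polynomial `C_{2k+j}^l` of degree `j`, namely
`(-1)^k (l)_{k+j} / (k! j!) (2X)^j`. Indexing by `(k, j)` instead of `(n, k)` avoids truncated
subtraction in the termwise identities. -/
noncomputable def gegenbauerTerm (k j : ℕ) : ℝ[X] :=
  C ((-1) ^ k * (ascPochhammer ℝ (k + j)).eval l / (k ! * j !)) * (2 * X) ^ j

/-- The Gegenbauer polynomial `C_n^l` as an element of `ℝ[X]`; `gegenbauerR l n` is the associated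
function. -/
noncomputable def gegenbauer (n : ℕ) : ℝ[X] :=
  ∑ k ∈ Finset.range (n / 2 + 1), gegenbauerTerm l k (n - 2 * k)

theorem gegenbauerR_eq_eval (n : ℕ) (x : ℝ) : gegenbauerR l n x = (gegenbauer l n).eval x := by
  rw [gegenbauerR, gegenbauer, eval_finsetSum]
  refine Finset.sum_congr rfl fun k hk => ?_
  rw [Finset.mem_range] at hk
  simp [gegenbauerTerm, show k + (n - 2 * k) = n - k by omega]

theorem gegenbauer_zero : gegenbauer l 0 = 1 := by
  simp [gegenbauer, gegenbauerTerm]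

theorem derivative_gegenbauerTerm_zero (k : ℕ) : derivative (gegenbauerTerm l k 0) = 0 := by
  simp [gegenbauerTerm]

theorem X_mul_derivative_gegenbauerTerm (k j : ℕ) :
    X * derivative (gegenbauerTerm l k j) = (j : ℝ[X]) * gegenbauerTerm l k j := by
  cases j with
  | zero => simp [derivative_gegenbauerTerm_zero]
  | succ j =>
    simp only [gegenbauerTerm, derivative_pow_succ, derivative_mul, derivative_C,
      derivative_ofNat, derivative_X, map_add, map_natCast, map_one]
    push_cast
    ring

theorem derivative_gegenbauerTerm_succ (k j : ℕ) :
    derivative (gegenbauerTerm l k (j + 1)) =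
      2 * (C l + (k + j : ℕ)) * gegenbauerTerm l k j := by
  have hcoeff : (-1) ^ k * (ascPochhammer ℝ (k + (j + 1))).eval l / (k ! * (j + 1)!) * (j + 1) =
      (l + (k + j : ℕ)) * ((-1) ^ k * (ascPochhammer ℝ (k + j)).eval l / (k ! * j !)) := by
    rw [← add_assoc, ascPochhammer_succ_eval, Nat.factorial_succ]
    push_cast
    field_simp
  have hC := congrArg C hcoeff
  simp only [map_mul, map_add, map_natCast, map_one] at hC
  simp only [gegenbauerTerm, derivative_pow_succ, derivative_mul, derivative_C,
    derivative_ofNat, derivative_X, map_add, map_natCast, map_one]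
  linear_combination 2 * (2 * X) ^ j * hC

theorem derivative_gegenbauerTerm_succ' (k j : ℕ) :
    derivative (gegenbauerTerm l k (j + 1)) =
      -2 * (k + 1 : ℕ) * gegenbauerTerm l (k + 1) j := by
  have hcoeff : (l + (k + j : ℕ)) * ((-1) ^ k * (ascPochhammer ℝ (k + j)).eval l / (k ! * j !)) =
      -(k + 1 : ℕ) *
        ((-1) ^ (k + 1) * (ascPochhammer ℝ (k + 1 + j)).eval l / ((k + 1)! * j !)) := by
    rw [add_right_comm, ascPochhammer_succ_eval, Nat.factorial_succ, pow_succ]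
    push_cast
    field_simp
  have hC := congrArg C hcoeff
  simp only [map_mul, map_neg, map_add, map_natCast] at hC
  rw [derivative_gegenbauerTerm_succ, gegenbauerTerm, gegenbauerTerm]
  linear_combination 2 * (2 * X) ^ j * hC

theorem derivative_gegenbauer (n : ℕ) :
    derivative (gegenbauer l n) =
      ∑ k ∈ Finset.range (n / 2 + 1), derivative (gegenbauerTerm l k (n - 2 * k)) := by
  rw [gegenbauer, derivative_sum]

theorem derivative_gegenbauer_succ_eq_sum (n : ℕ) :
    derivative (gegenbauer l (n + 1)) =
      ∑ k ∈ Finset.range (n / 2 + 1), 2 * (C l + (n - k : ℕ)) * gegenbauerTerm l k (n - 2 * k) := by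
  rw [derivative_gegenbauer,
    ← Finset.sum_subset (Finset.range_mono (by omega : n / 2 + 1 ≤ (n + 1) / 2 + 1))]
  · refine Finset.sum_congr rfl fun k hk => ?_
    rw [Finset.mem_range] at hk
    rw [show n + 1 - 2 * k = n - 2 * k + 1 by omega, derivative_gegenbauerTerm_succ,
      show k + (n - 2 * k) = n - k by omega]
  · intro k _ hk
    rw [Finset.mem_range] at hk
    rw [show n + 1 - 2 * k = 0 by omega, derivative_gegenbauerTerm_zero]

theorem derivative_gegenbauer_eq_sum (n : ℕ) :
    derivative (gegenbauer l n) =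
      ∑ k ∈ Finset.range ((n + 1) / 2 + 1),
        -2 * (k : ℝ[X]) * gegenbauerTerm l k (n + 1 - 2 * k) := by
  rw [derivative_gegenbauer, Finset.sum_range_succ' _ ((n + 1) / 2), Nat.cast_zero, mul_zero,
    zero_mul, add_zero,
    ← Finset.sum_subset (Finset.range_mono (by omega : (n + 1) / 2 ≤ n / 2 + 1))]
  · refine Finset.sum_congr rfl fun k hk => ?_
    rw [Finset.mem_range] at hk
    rw [show n - 2 * k = n + 1 - 2 * (k + 1) + 1 by omega, derivative_gegenbauerTerm_succ']
  · intro k _ hk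
    rw [Finset.mem_range] at hk
    rw [show n - 2 * k = 0 by omega, derivative_gegenbauerTerm_zero]

theorem derivative_gegenbauer_succ_sub (n : ℕ) :
    derivative (gegenbauer l (n + 1)) - X * derivative (gegenbauer l n) =
      ((n : ℝ[X]) + 2 * C l) * gegenbauer l n := by
  rw [derivative_gegenbauer_succ_eq_sum, derivative_gegenbauer, gegenbauer, Finset.mul_sum,
    Finset.mul_sum, ← Finset.sum_sub_distrib]
  refine Finset.sum_congr rfl fun k hk => ?_
  rw [Finset.mem_range] at hk
  rw [X_mul_derivative_gegenbauerTerm, Nat.cast_sub (by omega), Nat.cast_sub (by omega)]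
  push_cast
  ring

theorem X_mul_derivative_gegenbauer_succ_sub (n : ℕ) :
    X * derivative (gegenbauer l (n + 1)) - derivative (gegenbauer l n) =
      ((n : ℝ[X]) + 1) * gegenbauer l (n + 1) := by
  rw [derivative_gegenbauer, derivative_gegenbauer_eq_sum, gegenbauer, Finset.mul_sum,
    Finset.mul_sum, ← Finset.sum_sub_distrib]
  refine Finset.sum_congr rfl fun k hk => ?_
  rw [Finset.mem_range] at hk
  rw [X_mul_derivative_gegenbauerTerm, Nat.cast_sub (by omega)]
  push_cast
  ring

theorem one_sub_sq_mul_derivative_gegenbauer (n : ℕ) :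
    (1 - X ^ 2) * derivative (gegenbauer l n) =
      ((n : ℝ[X]) + 2 * C l) * X * gegenbauer l n - ((n : ℝ[X]) + 1) * gegenbauer l (n + 1) := by
  linear_combination X * derivative_gegenbauer_succ_sub l n -
    X_mul_derivative_gegenbauer_succ_sub l n

theorem one_sub_sq_mul_derivative_gegenbauer_succ (n : ℕ) :
    (1 - X ^ 2) * derivative (gegenbauer l (n + 1)) =
      ((n : ℝ[X]) + 2 * C l) * gegenbauer l n - ((n : ℝ[X]) + 1) * X * gegenbauer l (n + 1) := by
  linear_combination derivative_gegenbauer_succ_sub l n -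
    X * X_mul_derivative_gegenbauer_succ_sub l n

theorem gegenbauer_add_two (n : ℕ) :
    ((n : ℝ[X]) + 2) * gegenbauer l (n + 2) =
      2 * ((n : ℝ[X]) + 1 + C l) * X * gegenbauer l (n + 1) -
        ((n : ℝ[X]) + 2 * C l) * gegenbauer l n := by
  have h := one_sub_sq_mul_derivative_gegenbauer l (n + 1)
  push_cast at h
  linear_combination h - one_sub_sq_mul_derivative_gegenbauer_succ l n

theorem gegenbauer_ode (n : ℕ) :
    (1 - X ^ 2) * derivative (derivative (gegenbauer l n)) -
        (2 * C l + 1) * X * derivative (gegenbauer l n) +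
      (n : ℝ[X]) * ((n : ℝ[X]) + 2 * C l) * gegenbauer l n = 0 := by
  have h := congrArg derivative (one_sub_sq_mul_derivative_gegenbauer l n)
  simp only [derivative_mul, derivative_sub, derivative_add, derivative_one, derivative_X_pow,
    derivative_natCast, derivative_ofNat, derivative_C, derivative_X, Nat.cast_ofNat,
    map_ofNat] at h
  linear_combination h - (n + 1) * derivative_gegenbauer_succ_sub l n

theorem gegenbauer_eval_one (n : ℕ) :
    (gegenbauer l n).eval 1 = (ascPochhammer ℝ n).eval (2 * l) / n ! := by
  induction n with
  | zero => simp [gegenbauer_zero]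
  | succ n ih =>
    have h := congrArg (eval 1) (one_sub_sq_mul_derivative_gegenbauer l n)
    simp only [eval_mul, eval_sub, eval_add, eval_pow, eval_one, eval_X, eval_natCast, eval_ofNat,
      eval_C, ih] at h
    rw [ascPochhammer_succ_eval, Nat.factorial_succ]
    push_cast
    field_simp at h ⊢
    linear_combination h

theorem abs_gegenbauer_eval_neg (n : ℕ) (x : ℝ) :
    |(gegenbauer l n).eval (-x)| = |(gegenbauer l n).eval x| := by
  have hparity : (gegenbauer l n).eval (-x) = (-1) ^ n * (gegenbauer l n).eval x := by
    rw [gegenbauer, eval_finsetSum, eval_finsetSum, Finset.mul_sum]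
    refine Finset.sum_congr rfl fun k hk => ?_
    rw [Finset.mem_range] at hk
    have hsign : (-1 : ℝ) ^ n = (-1) ^ (n - 2 * k) := by
      rw [← Nat.sub_add_cancel (by omega : 2 * k ≤ n), pow_add, Nat.add_sub_cancel,
        (even_two_mul k).neg_one_pow, mul_one]
    simp only [gegenbauerTerm, eval_mul, eval_C, eval_pow, eval_ofNat, eval_X, hsign, mul_neg,
      neg_pow (2 * x)]
    ring
  rw [hparity, abs_mul, abs_pow, abs_neg, abs_one, one_pow, one_mul]

end Identities

section AscPochhammer

theorem ascPochhammer_eval_eq_prod_range {R : Type*} [CommSemiring R] (a : R) (n : ℕ) :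
    (ascPochhammer R n).eval a = ∏ j ∈ Finset.range n, (a + j) := by
  induction n with
  | zero => simp
  | succ n ih => rw [ascPochhammer_succ_eval, ih, Finset.prod_range_succ]

theorem ascPochhammer_eval_ne_zero {R : Type*} [CommRing R] [IsDomain R] {a : R}
    (ha : ∀ m : ℕ, a ≠ -m) (n : ℕ) : (ascPochhammer R n).eval a ≠ 0 := by
  rw [ascPochhammer_eval_eq_prod_range]
  exact Finset.prod_ne_zero_iff.2 fun j _ h => ha j (eq_neg_of_add_eq_zero_left h)

end AscPochhammer

section SupBound

open Polynomial

/-- Sonin's function `n(n+2l) C_n² + (1-X²) (C_n')²`, which dominates `n(n+2l) C_n²` on `[-1, 1]`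
and agrees with it at the endpoints. -/
noncomputable def gegenbauerSonin (l : ℝ) (n : ℕ) : ℝ[X] :=
  (n : ℝ[X]) * ((n : ℝ[X]) + 2 * C l) * gegenbauer l n ^ 2 +
    (1 - X ^ 2) * derivative (gegenbauer l n) ^ 2

theorem derivative_gegenbauerSonin (l : ℝ) (n : ℕ) :
    derivative (gegenbauerSonin l n) = 4 * C l * X * derivative (gegenbauer l n) ^ 2 := by
  simp only [gegenbauerSonin, derivative_mul, derivative_sub, derivative_add, derivative_one,
    derivative_sq, derivative_natCast, derivative_ofNat, derivative_C, derivative_X, map_ofNat]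
  linear_combination 2 * derivative (gegenbauer l n) * gegenbauer_ode l n

theorem gegenbauerSonin_monotoneOn {l : ℝ} (hl : 0 ≤ l) (n : ℕ) :
    MonotoneOn (fun x => (gegenbauerSonin l n).eval x) (Set.Icc 0 1) := by
  refine monotoneOn_of_deriv_nonneg (convex_Icc 0 1) (gegenbauerSonin l n).continuousOn
    (gegenbauerSonin l n).differentiable.differentiableOn fun x hx => ?_
  rw [interior_Icc] at hx
  have hx0 := hx.1
  rw [Polynomial.deriv, derivative_gegenbauerSonin]
  simp only [eval_mul, eval_pow, eval_ofNat, eval_C, eval_X]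
  positivity

theorem abs_gegenbauer_eval_le_eval_one {l : ℝ} (hl : 0 ≤ l) (n : ℕ) {x : ℝ}
    (hx : x ∈ Set.Icc (-1 : ℝ) 1) :
    |(gegenbauer l n).eval x| ≤ |(gegenbauer l n).eval 1| := by
  rcases n.eq_zero_or_pos with rfl | hn
  · simp [gegenbauer_zero]
  wlog h0 : 0 ≤ x generalizing x
  · rw [← abs_gegenbauer_eval_neg]
    exact this ⟨by linarith [hx.2], by linarith [hx.1]⟩ (by linarith)
  have hmono := gegenbauerSonin_monotoneOn hl n ⟨h0, hx.2⟩ ⟨zero_le_one, le_rfl⟩ hx.2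
  simp only [gegenbauerSonin, eval_mul, eval_sub, eval_add, eval_pow, eval_one, eval_X,
    eval_natCast, eval_ofNat, eval_C] at hmono
  have hderiv : 0 ≤ (1 - x ^ 2) * (derivative (gegenbauer l n)).eval x ^ 2 :=
    mul_nonneg (by nlinarith [hx.2]) (sq_nonneg _)
  have hpos : 0 < (n : ℝ) * (n + 2 * l) := by positivity
  exact sq_le_sq.1 (le_of_mul_le_mul_left (by linarith) hpos)

end SupBound

section Norm

open Polynomial intervalIntegral
open scoped Nat

theorem intervalIntegrable_one_sub_sq_rpow {s : ℝ} (hs : -1 < s) :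
    IntervalIntegrable (fun x : ℝ => (1 - x ^ 2) ^ s) volume (-1) 1 := by
  have hright : IntervalIntegrable (fun x : ℝ => (1 - x ^ 2) ^ s) volume 0 1 := by
    have hsing : IntervalIntegrable (fun x : ℝ => (1 - x) ^ s) volume 0 1 := by
      simpa using ((intervalIntegrable_rpow' hs : IntervalIntegrable _ volume 0 1).comp_sub_left
        1).symm
    have hcont : ContinuousOn (fun x : ℝ => (1 + x) ^ s) (Set.uIcc 0 1) := by
      refine ContinuousOn.rpow_const (by fun_prop) fun x hx => Or.inl ?_
      rw [Set.uIcc_of_le zero_le_one] at hx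
      linarith [hx.1]
    refine (hsing.continuousOn_mul hcont).congr fun x hx => ?_
    rw [Set.uIoc_of_le zero_le_one] at hx
    have hx0 := hx.1
    rw [← Real.mul_rpow (by linarith) (by linarith [hx.2])]
    ring_nf
  have hleft : IntervalIntegrable (fun x : ℝ => (1 - x ^ 2) ^ s) volume (-1) 0 := by
    simpa using (IntervalIntegrable.comp_sub_left hright 0).symm
  exact hleft.trans hright

theorem intervalIntegrable_eval_mul_one_sub_sq_rpow {l : ℝ} (hl : -1 / 2 < l) (p : ℝ[X]) :
    IntervalIntegrable (fun x : ℝ => p.eval x * (1 - x ^ 2) ^ (l - 1 / 2)) volume (-1) 1 :=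
  (intervalIntegrable_one_sub_sq_rpow (by linarith)).continuousOn_mul p.continuousOn

/-- Integration against the Gegenbauer weight `(1 - x²)^(l - 1/2)` on `[-1, 1]`, as a linear
functional on polynomials. -/
noncomputable def gegenbauerIntegral {l : ℝ} (hl : -1 / 2 < l) : ℝ[X] →ₗ[ℝ] ℝ where
  toFun p := ∫ x in (-1 : ℝ)..1, p.eval x * (1 - x ^ 2) ^ (l - 1 / 2)
  map_add' p q := by
    rw [← integral_add (intervalIntegrable_eval_mul_one_sub_sq_rpow hl p)
      (intervalIntegrable_eval_mul_one_sub_sq_rpow hl q)]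
    simp only [eval_add, add_mul]
  map_smul' c p := by
    rw [RingHom.id_apply, smul_eq_mul, ← intervalIntegral.integral_const_mul]
    simp only [eval_smul, smul_eq_mul, mul_assoc]

section Functional

variable {l : ℝ} (hl : -1 / 2 < l)

theorem gegenbauerIntegral_C_mul (c : ℝ) (p : ℝ[X]) :
    gegenbauerIntegral hl (C c * p) = c * gegenbauerIntegral hl p := by
  rw [← smul_eq_C_mul, map_smul, smul_eq_mul]

theorem hasDerivAt_eval_mul_one_sub_sq_rpow (l : ℝ) (p : ℝ[X]) {x : ℝ} (hx : x ∈ Set.Ioo (-1) 1) :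
    HasDerivAt (fun x : ℝ => p.eval x * (1 - x ^ 2) ^ (l + 1 / 2))
      (((1 - X ^ 2) * derivative p - (2 * C l + 1) * X * p).eval x * (1 - x ^ 2) ^ (l - 1 / 2))
      x := by
  have hpos : 0 < 1 - x ^ 2 := by nlinarith [hx.1, hx.2]
  have hbase : HasDerivAt (fun x : ℝ => 1 - x ^ 2) (-(2 * x)) x := by
    simpa using (hasDerivAt_pow 2 x).const_sub 1
  refine ((p.hasDerivAt x).mul (hbase.rpow_const (p := l + 1 / 2) (Or.inl hpos.ne'))).congr_deriv ?_
  have hexp : (1 - x ^ 2) ^ (l + 1 / 2) = (1 - x ^ 2) ^ (l - 1 / 2) * (1 - x ^ 2) := by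
    rw [← Real.rpow_add_one hpos.ne']
    ring_nf
  rw [hexp, show l + 1 / 2 - 1 = l - 1 / 2 by ring]
  simp only [eval_mul, eval_sub, eval_add, eval_pow, eval_one, eval_X, eval_ofNat, eval_C]
  ring

theorem gegenbauerIntegral_derivative (p : ℝ[X]) :
    gegenbauerIntegral hl ((1 - X ^ 2) * derivative p) =
      gegenbauerIntegral hl ((2 * C l + 1) * X * p) := by
  have hexp : 0 < l + 1 / 2 := by linarith
  have hcont : ContinuousOn (fun x : ℝ => p.eval x * (1 - x ^ 2) ^ (l + 1 / 2)) (Set.Icc (-1) 1) :=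
    p.continuousOn.mul (ContinuousOn.rpow_const (by fun_prop) fun _ _ => Or.inr hexp.le)
  rw [← sub_eq_zero, ← map_sub]
  change ∫ x in (-1 : ℝ)..1, _ = 0
  rw [integral_eq_sub_of_hasDerivAt_of_le (by norm_num) hcont
    (fun x hx => hasDerivAt_eval_mul_one_sub_sq_rpow l p hx)
    (intervalIntegrable_eval_mul_one_sub_sq_rpow hl _)]
  simp only [one_pow, neg_one_sq, sub_self, Real.zero_rpow hexp.ne', mul_zero]

theorem gegenbauerIntegral_mul_eq_zero {m n : ℕ} (hmn : m ≠ n) :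
    gegenbauerIntegral hl (gegenbauer l m * gegenbauer l n) = 0 := by
  have hwronskian := gegenbauerIntegral_derivative hl
    (derivative (gegenbauer l m) * gegenbauer l n - gegenbauer l m * derivative (gegenbauer l n))
  have heigen : C (((n : ℝ) - m) * (m + n + 2 * l)) * (gegenbauer l m * gegenbauer l n) =
      (1 - X ^ 2) * derivative (derivative (gegenbauer l m) * gegenbauer l n -
          gegenbauer l m * derivative (gegenbauer l n)) -
        (2 * C l + 1) * X * (derivative (gegenbauer l m) * gegenbauer l n -
          gegenbauer l m * derivative (gegenbauer l n)) := by
    simp only [map_mul, map_sub, map_add, map_natCast, map_ofNat, derivative_mul]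
    linear_combination gegenbauer l m * gegenbauer_ode l n - gegenbauer l n * gegenbauer_ode l m
  rw [← sub_eq_zero, ← map_sub, ← heigen, gegenbauerIntegral_C_mul] at hwronskian
  have hsum : (1 : ℝ) ≤ m + n := by exact_mod_cast (by omega : 1 ≤ m + n)
  have hdiff : (n : ℝ) - m ≠ 0 := sub_ne_zero.2 (by exact_mod_cast hmn.symm)
  exact (mul_eq_zero.1 hwronskian).resolve_left (mul_ne_zero hdiff (by linarith))

theorem gegenbauerIntegral_X_mul_mul_succ (n : ℕ) :
    2 * (n + 1 + l) * gegenbauerIntegral hl (X * (gegenbauer l n * gegenbauer l (n + 1))) =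
      (n + 2 * l) * gegenbauerIntegral hl (gegenbauer l n ^ 2) := by
  have hrec : C (2 * ((n : ℝ) + 1 + l)) * (X * (gegenbauer l n * gegenbauer l (n + 1))) =
      C ((n : ℝ) + 2) * (gegenbauer l (n + 2) * gegenbauer l n) +
        C ((n : ℝ) + 2 * l) * gegenbauer l n ^ 2 := by
    simp only [map_mul, map_add, map_natCast, map_ofNat, map_one]
    linear_combination -gegenbauer l n * gegenbauer_add_two l n
  rw [← gegenbauerIntegral_C_mul, hrec, map_add, gegenbauerIntegral_C_mul,
    gegenbauerIntegral_C_mul, gegenbauerIntegral_mul_eq_zero hl (by omega), mul_zero, zero_add]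

theorem gegenbauerIntegral_sq_succ (n : ℕ) :
    (n + 1) * (n + 1 + l) * gegenbauerIntegral hl (gegenbauer l (n + 1) ^ 2) =
      (n + l) * (n + 2 * l) * gegenbauerIntegral hl (gegenbauer l n ^ 2) := by
  have hladder : C ((n : ℝ) + 1) * gegenbauer l (n + 1) ^ 2 +
        C 2 * (X * (gegenbauer l n * gegenbauer l (n + 1))) +
        ((1 - X ^ 2) * derivative (gegenbauer l n * gegenbauer l (n + 1)) -
          (2 * C l + 1) * X * (gegenbauer l n * gegenbauer l (n + 1))) =
      C ((n : ℝ) + 2 * l) * gegenbauer l n ^ 2 := by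
    simp only [map_mul, map_add, map_natCast, map_ofNat, map_one, derivative_mul]
    linear_combination gegenbauer l (n + 1) * one_sub_sq_mul_derivative_gegenbauer l n +
      gegenbauer l n * one_sub_sq_mul_derivative_gegenbauer_succ l n
  have hint := congrArg (gegenbauerIntegral hl) hladder
  rw [map_add, map_add, map_sub, gegenbauerIntegral_C_mul, gegenbauerIntegral_C_mul,
    gegenbauerIntegral_C_mul, gegenbauerIntegral_derivative, sub_self, add_zero] at hint
  linear_combination (n + 1 + l) * hint - gegenbauerIntegral_X_mul_mul_succ hl n

theorem gegL2Norm_sq (n : ℕ) :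
    gegL2Norm l n ^ 2 = gegenbauerIntegral hl (gegenbauer l n ^ 2) := by
  have hnonneg : 0 ≤ ∫ x in (-1 : ℝ)..1, gegenbauerR l n x ^ 2 * (1 - x ^ 2) ^ (l - 1 / 2) := by
    refine integral_nonneg (by norm_num) fun x hx => ?_
    have hbase : 0 ≤ 1 - x ^ 2 := by nlinarith [hx.1, hx.2]
    positivity
  rw [gegL2Norm, Real.sq_sqrt hnonneg]
  simp only [gegenbauerR_eq_eval, ← eval_pow]
  rfl

end Functional

theorem add_mul_gegL2Norm_sq {l : ℝ} (hl : -1 / 2 < l) (n : ℕ) :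
    (n + l) * gegL2Norm l n ^ 2 =
      l * gegL2Norm l 0 ^ 2 * ((ascPochhammer ℝ n).eval (2 * l) / n !) := by
  induction n with
  | zero => simp
  | succ n ih =>
    have hstep := gegenbauerIntegral_sq_succ hl n
    rw [← gegL2Norm_sq, ← gegL2Norm_sq] at hstep
    rw [ascPochhammer_succ_eval, Nat.factorial_succ]
    push_cast
    field_simp at ih ⊢
    linear_combination n ! * hstep + (n + 2 * l) * ih

theorem gegL2Norm_zero_pos {l : ℝ} (hl : -1 / 2 < l) : 0 < gegL2Norm l 0 := by
  refine Real.sqrt_pos.2 (intervalIntegral_pos_of_pos_on ?_ (fun x hx => ?_) (by norm_num))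
  · simpa only [gegenbauerR_eq_eval, ← eval_pow] using
      intervalIntegrable_eval_mul_one_sub_sq_rpow hl (gegenbauer l 0 ^ 2)
  · have hbase : 0 < 1 - x ^ 2 := by nlinarith [hx.1, hx.2]
    rw [gegenbauerR_eq_eval, gegenbauer_zero, eval_one]
    positivity

theorem two_mul_ne_neg_natCast {l : ℝ} (hl : -1 / 2 < l) (hl0 : l ≠ 0) (m : ℕ) : 2 * l ≠ -m := by
  rcases m.eq_zero_or_pos with rfl | hm
  · simpa using hl0
  · have hm1 : (1 : ℝ) ≤ m := by exact_mod_cast hm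
    linarith

theorem gegL2Norm_pos {l : ℝ} (hl : -1 / 2 < l) (hl0 : l ≠ 0) (n : ℕ) : 0 < gegL2Norm l n := by
  refine (Real.sqrt_nonneg _).lt_of_ne' fun h => ?_
  have hnorm := add_mul_gegL2Norm_sq hl n
  rw [gegL2Norm, h, zero_pow two_ne_zero, mul_zero] at hnorm
  refine mul_ne_zero (mul_ne_zero hl0 (pow_ne_zero 2 (gegL2Norm_zero_pos hl).ne')) ?_ hnorm.symm
  exact div_ne_zero (ascPochhammer_eval_ne_zero (two_mul_ne_neg_natCast hl hl0) n) (by positivity)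

end Norm

section Asymptotics

open Polynomial Filter Asymptotics
open scoped Nat Topology

theorem natCast_add_isEquivalent (a : ℝ) :
    (fun n : ℕ => (n : ℝ) + a) ~[atTop] fun n => (n : ℝ) := by
  refine IsEquivalent.add_isLittleO .refl ?_
  exact isLittleO_const_id_atTop a |>.comp_tendsto tendsto_natCast_atTop_atTop

theorem ascPochhammer_eval_mul_add_mul_GammaSeq {a : ℝ} (ha : ∀ m : ℕ, a ≠ -m) (n : ℕ) :
    (ascPochhammer ℝ n).eval a / n ! * (n + a) * Real.GammaSeq a n = (n : ℝ) ^ a := by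
  have hprod : ∏ j ∈ Finset.range (n + 1), (a + j) = (ascPochhammer ℝ n).eval a * (n + a) := by
    rw [← ascPochhammer_eval_eq_prod_range, ascPochhammer_succ_eval, add_comm a]
  have hne : (ascPochhammer ℝ (n + 1)).eval a ≠ 0 := ascPochhammer_eval_ne_zero ha (n + 1)
  rw [ascPochhammer_succ_eval, add_comm a] at hne
  rw [Real.GammaSeq, hprod]
  field_simp [left_ne_zero_of_mul hne, right_ne_zero_of_mul hne]

theorem ascPochhammer_eval_div_factorial_isTheta {a : ℝ} (ha : ∀ m : ℕ, a ≠ -m) :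
    (fun n : ℕ => (ascPochhammer ℝ n).eval a / n !) =Θ[atTop] fun n => (n : ℝ) ^ (a - 1) := by
  have hGamma : (fun _ => (1 : ℝ)) =Θ[atTop] Real.GammaSeq a :=
    isTheta_of_div_tendsto_nhds_ne_zero (by simpa using Real.GammaSeq_tendsto_Gamma a)
      (Real.Gamma_ne_zero ha)
  have hquot := (isTheta_refl (fun n : ℕ => (n : ℝ) ^ a) atTop).div
    ((natCast_add_isEquivalent a).isTheta.mul hGamma.symm)
  refine (EventuallyEq.trans_isTheta ?_ hquot).trans_eventuallyEq ?_
  · filter_upwards [Real.GammaSeq_tendsto_Gamma a |>.eventually_ne (Real.Gamma_ne_zero ha)]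
      with n hn
    have hne : (n : ℝ) + a ≠ 0 := fun h => ha n (eq_neg_of_add_eq_zero_right h)
    rw [← ascPochhammer_eval_mul_add_mul_GammaSeq ha, mul_assoc,
      mul_div_cancel_right₀ _ (mul_ne_zero hne hn)]
  · filter_upwards [eventually_ne_atTop 0] with n hn
    rw [mul_one, Real.rpow_sub_one (by exact_mod_cast hn)]

theorem gegenbauer_eval_one_isTheta {l : ℝ} (hl : ∀ m : ℕ, 2 * l ≠ -m) :
    (fun n => (gegenbauer l n).eval 1) =Θ[atTop] fun n : ℕ => (n : ℝ) ^ (2 * l - 1) := by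
  simpa only [gegenbauer_eval_one] using ascPochhammer_eval_div_factorial_isTheta hl

theorem gegL2Norm_isTheta {l : ℝ} (hl : -1 / 2 < l) (hl0 : l ≠ 0) :
    gegL2Norm l =Θ[atTop] fun n : ℕ => (n : ℝ) ^ (l - 1) := by
  have hconst : l * gegL2Norm l 0 ^ 2 ≠ 0 :=
    mul_ne_zero hl0 (pow_ne_zero 2 (gegL2Norm_zero_pos hl).ne')
  have hquot := ((ascPochhammer_eval_div_factorial_isTheta
    (two_mul_ne_neg_natCast hl hl0)).const_mul_left hconst).div
      (natCast_add_isEquivalent l).isTheta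
  have hsq : (fun n => gegL2Norm l n ^ 2) =Θ[atTop] fun n : ℕ => ((n : ℝ) ^ (l - 1)) ^ 2 := by
    refine (EventuallyEq.trans_isTheta ?_ hquot).trans_eventuallyEq ?_
    · filter_upwards [eventually_ge_atTop 1] with n hn
      have hn1 : (1 : ℝ) ≤ n := by exact_mod_cast hn
      rw [← add_mul_gegL2Norm_sq hl, mul_div_cancel_left₀ _ (by linarith)]
    · filter_upwards [eventually_gt_atTop 0] with n hn
      have hn0 : (0 : ℝ) < n := by exact_mod_cast hn
      rw [← Real.rpow_sub_one hn0.ne', ← Real.rpow_mul_natCast hn0.le]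
      congr 1
      push_cast
      ring
  exact ⟨.of_pow two_ne_zero hsq.1, .of_pow two_ne_zero hsq.2⟩

theorem natCast_rpow_isTheta_natCast_add_rpow (N : ℕ) (s : ℝ) :
    (fun n : ℕ => (n : ℝ) ^ s) =Θ[atTop] fun n => ((n + N : ℕ) : ℝ) ^ s := by
  have hequiv := (natCast_add_isEquivalent N).rpow (r := s) (fun n => Nat.cast_nonneg n)
  simp only [Nat.cast_add]
  exact hequiv.isTheta_symm

theorem gegenbauer_add_eval_one_isTheta {lam mu : ℝ} (hlam : ∀ m : ℕ, 2 * lam ≠ -m)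
    (hmu : -1 / 2 < mu) (hmu0 : mu ≠ 0) (N : ℕ) :
    (fun m => (gegenbauer lam (m + N)).eval 1) =Θ[atTop]
      fun m => gegL2Norm mu m * ((m + N : ℕ) : ℝ) ^ (2 * lam - mu) := by
  have hshift := tendsto_add_atTop_nat N
  have hvalue : (fun m => (gegenbauer lam (m + N)).eval 1) =Θ[atTop]
      fun m => ((m + N : ℕ) : ℝ) ^ (2 * lam - 1) :=
    ⟨(gegenbauer_eval_one_isTheta hlam).1.comp_tendsto hshift,
      (gegenbauer_eval_one_isTheta hlam).2.comp_tendsto hshift⟩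
  have hnorm := (gegL2Norm_isTheta hmu hmu0).trans
    (natCast_rpow_isTheta_natCast_add_rpow N (mu - 1))
  refine (hvalue.trans_eventuallyEq ?_).trans (hnorm.symm.mul (isTheta_refl _ _))
  filter_upwards [eventually_gt_atTop 0] with m hm
  rw [← Real.rpow_add (by positivity)]
  ring_nf

end Asymptotics

theorem stmt7_general {lam mu : ℝ} (hlam : 0 < lam) (hmu : -1 / 2 < mu) (hmu0 : mu ≠ 0) (N : ℕ) :
    ∃ d : ℝ, 0 < d ∧
      ∀ m : ℕ, m + N ≠ 0 → ∀ x ∈ Set.Icc (-1 : ℝ) 1,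
        |gegenbauerR lam (m + N) x| ≤
          d * gegL2Norm mu m * ((m + N : ℕ) : ℝ) ^ (2 * lam - mu) := by
  have hratio := gegenbauer_add_eval_one_isTheta
    (two_mul_ne_neg_natCast (by linarith) hlam.ne') hmu hmu0 N
  obtain ⟨d, hd, hbound⟩ := Asymptotics.bound_of_isBigO_nat_atTop hratio.isBigO
  refine ⟨d, hd, fun m hm x hx => ?_⟩
  have hpos : 0 < gegL2Norm mu m * ((m + N : ℕ) : ℝ) ^ (2 * lam - mu) :=
    mul_pos (gegL2Norm_pos hmu hmu0 m)
      (Real.rpow_pos_of_pos (by exact_mod_cast Nat.pos_of_ne_zero hm) _)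
  calc |gegenbauerR lam (m + N) x|
      ≤ |(gegenbauer lam (m + N)).eval 1| := by
        rw [gegenbauerR_eq_eval]
        exact abs_gegenbauer_eval_le_eval_one hlam.le _ hx
    _ ≤ d * |gegL2Norm mu m * ((m + N : ℕ) : ℝ) ^ (2 * lam - mu)| := hbound hpos.ne'
    _ = d * gegL2Norm mu m * ((m + N : ℕ) : ℝ) ^ (2 * lam - mu) := by
        rw [abs_of_pos hpos, mul_assoc]

theorem stmt7 (N : ℕ) (lam : ℝ) (hN : lam < N) (hlam : 0 < lam) :
    ∃ d : ℝ, 0 < d ∧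
      ∀ n : ℕ, N ≤ n → ∀ x ∈ Set.Icc (-1 : ℝ) 1,
        |gegenbauerR lam n x| ≤
          d * gegL2Norm (lam + N) (n - N) * (n : ℝ) ^ (lam - (N : ℝ)) := by
  have hN0 : 0 < N := by exact_mod_cast hlam.trans hN
  obtain ⟨d, hd, hbound⟩ :=
    stmt7_general (mu := lam + N) hlam (by linarith) (by linarith) N
  refine ⟨d, hd, fun n hn x hx => ?_⟩
  have h := hbound (n - N) (by omega) x hx
  rwa [Nat.sub_add_cancel hn, show 2 * lam - (lam + N) = lam - N by ring] at h
end

section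
/- Let ρ ∈ ℂ with Re ρ > 0 and γ ∈ {0,1}. Then for all real φ, ψ, |cos φ + cos ψ|^ρ · sgn(cos φ + cos ψ)^γ = 2^{−ρ} Γ(ρ+1)² · Σ cos(ℓφ) cos(mψ) / ∏_{δ,ε∈{±1}} Γ(1 + (ρ + δℓ + εm)/2), where the sum ranges over all pairs (ℓ, m) ∈ ℤ² with ℓ ≡ m + γ (mod 2). -/
/-!
The function `|x|^ρ sgn(x)^γ` is multiplicative and
`cos φ + cos ψ = 2 cos ((φ + ψ) / 2) cos ((φ - ψ) / 2)`, so the double series is a product of two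
Fourier series of `a ↦ |2 cos a|^ρ sgn(2 cos a)^γ`. Since this function is multiplied by `(-1)^γ`
under `a ↦ a + π`, only frequencies `k ≡ γ (mod 2)` occur, and their coefficients are given by
Cauchy's formula `∫ (2 cos a)^ρ e^{ika} da = π binom(ρ, (ρ + k) / 2)` over `(-π/2, π/2)`. For
`k = 0` that is Euler's beta integral; the other `k` follow from Pascal's rule, which both sides
satisfy. The coefficients are absolutely summable by Raabe's test. In the product, the frequencies
`2n + γ` and `2m + γ` combine to `n + m + γ` and `n - m`, and averaging over the signs of `φ` and
`ψ` turns the exponentials into cosines.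
-/

open Complex Filter Set MeasureTheory

theorem summable_of_eventually_le_sub_succ {a d : ℕ → ℝ} (ha : ∀ᶠ n in atTop, 0 ≤ a n)
    (hd : ∀ᶠ n in atTop, 0 ≤ d n) (h : ∀ᶠ n in atTop, a n ≤ d n - d (n + 1)) : Summable a := by
  obtain ⟨N, hN⟩ := eventually_atTop.1 (ha.and (hd.and h))
  rw [← summable_nat_add_iff N]
  refine summable_of_sum_range_le (c := d N) (fun n => (hN _ (Nat.le_add_left N n)).1) fun M => ?_
  calc ∑ n ∈ Finset.range M, a (n + N)
      ≤ ∑ n ∈ Finset.range M, (d (n + N) - d (n + 1 + N)) := Finset.sum_le_sum fun n _ => by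
        simpa only [add_right_comm] using (hN _ (Nat.le_add_left N n)).2.2
    _ = d N - d (M + N) := by rw [Finset.sum_range_sub' fun n => d (n + N), zero_add]
    _ ≤ d N := sub_le_self _ (hN _ (Nat.le_add_left N M)).2.1

theorem hasSum_fourier_of_periodic {T : ℝ} (hT : 0 < T) {g : ℝ → ℂ} (hg : Continuous g)
    (hper : Function.Periodic g T) {c : ℤ → ℂ} (a : ℝ)
    (hc : ∀ n : ℤ, c n = (T : ℂ)⁻¹ * ∫ x in a..a + T, cexp (-(2 * Real.pi * n * x / T) * I) * g x)
    (hs : Summable c) (x : ℝ) :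
    HasSum (fun n : ℤ => c n * cexp (2 * Real.pi * n * x / T * I)) (g x) := by
  have : Fact (0 < T) := ⟨hT⟩
  let F : C(AddCircle T, ℂ) := ⟨hper.lift, continuous_coinduced_dom.mpr hg⟩
  have hF : ∀ y : ℝ, F y = g y := hper.lift_coe
  have hcoeff : fourierCoeff F = c := by
    ext n
    simp only [hc, fourierCoeff_eq_intervalIntegral _ n a, fourier_coe_apply, hF, smul_eq_mul,
      real_smul, one_div, ofReal_inv]
    congr! 5
    push_cast
    ring_nf
  have hsum := has_pointwise_sum_fourier_series_of_summable (f := F) (hcoeff ▸ hs) x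
  simp only [hF, hcoeff, fourier_coe_apply, smul_eq_mul] at hsum
  refine hsum.congr_fun fun n => ?_
  ring_nf

theorem hasSum_mul_cos {ι : Type*} {a z : ι → ℂ} {s : ℂ}
    (hpos : HasSum (fun i => a i * cexp (z i * I)) s)
    (hneg : HasSum (fun i => a i * cexp (-z i * I)) s) :
    HasSum (fun i => a i * Complex.cos (z i)) s := by
  have h := (hpos.add hneg).div_const 2
  rw [add_self_div_two] at h
  simpa only [Complex.cos, mul_add, add_div, mul_div_assoc] using h

theorem hasSum_ite_emod_two_iff {α : Type*} [AddCommMonoid α] [TopologicalSpace α]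
    (f : ℤ × ℤ → α) (γ : ℤ) (s : α) :
    HasSum (fun p : ℤ × ℤ => if p.1 % 2 = (p.2 + γ) % 2 then f p else 0) s ↔
      HasSum (fun q : ℤ × ℤ => f (q.1 + q.2 + γ, q.1 - q.2)) s := by
  have hinj : Function.Injective fun q : ℤ × ℤ => (q.1 + q.2 + γ, q.1 - q.2) := by
    rintro ⟨n, m⟩ ⟨n', m'⟩ h
    simp only [Prod.mk.injEq] at h ⊢
    omega
  rw [← hinj.hasSum_iff]
  · have hpar (n m : ℤ) : (n + m + γ) % 2 = (n - m + γ) % 2 := by omega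
    simp only [Function.comp_def, hpar, if_true]
  · rintro ⟨l, m⟩ hlm
    refine if_neg fun hpar => hlm ⟨((l + m - γ) / 2, (l - m - γ) / 2), ?_⟩
    simp only [Prod.mk.injEq]
    omega

theorem real_sign_mul (x y : ℝ) : Real.sign (x * y) = Real.sign x * Real.sign y := by
  rcases lt_trichotomy x 0 with hx | rfl | hx <;> rcases lt_trichotomy y 0 with hy | rfl | hy <;>
    simp [*, Real.sign_of_neg, Real.sign_of_pos, mul_pos_of_neg_of_neg, mul_neg_of_neg_of_pos,
      mul_neg_of_pos_of_neg]

/-- The multiplicative character `|x|^ρ sgn(x)^γ` of the nonzero reals, extended to `ℝ` by the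
values of `cpow` and `Real.sign` at `0`: the extension vanishes at `0` when `ρ ≠ 0`, also for
`γ = 0`, where the sign factor is `0 ^ 0 = 1`. -/
noncomputable def signCpow (ρ : ℂ) (γ : ℕ) (x : ℝ) : ℂ :=
  (|x| : ℝ) ^ ρ * ((Real.sign x ^ γ : ℝ) : ℂ)

theorem signCpow_mul (ρ : ℂ) (γ : ℕ) (x y : ℝ) :
    signCpow ρ γ (x * y) = signCpow ρ γ x * signCpow ρ γ y := by
  simp only [signCpow, real_sign_mul, abs_mul, mul_pow, ofReal_mul,
    mul_cpow_ofReal_nonneg (abs_nonneg x) (abs_nonneg y)]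
  ring

theorem signCpow_neg (ρ : ℂ) (γ : ℕ) (x : ℝ) :
    signCpow ρ γ (-x) = (-1) ^ γ * signCpow ρ γ x := by
  simp only [signCpow, abs_neg, Real.sign_neg, neg_pow (Real.sign x), ofReal_mul, ofReal_pow,
    ofReal_neg, ofReal_one]
  ring

theorem signCpow_of_nonneg {ρ : ℂ} (hρ : ρ ≠ 0) (γ : ℕ) {x : ℝ} (hx : 0 ≤ x) :
    signCpow ρ γ x = (x : ℂ) ^ ρ := by
  rcases hx.eq_or_lt with rfl | hx
  · simp [signCpow, hρ]
  · simp [signCpow, Real.sign_of_pos hx, abs_of_pos hx]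

theorem continuous_signCpow {ρ : ℂ} (hρ : 0 < ρ.re) (γ : ℕ) : Continuous (signCpow ρ γ) := by
  have hpow := continuous_ofReal_cpow_const hρ
  have hval {x : ℝ} (hx : 0 ≤ x) := signCpow_of_nonneg (ne_zero_of_re_pos hρ) γ hx
  have hnonneg : ContinuousOn (signCpow ρ γ) (Ici 0) := hpow.continuousOn.congr fun _ => hval
  have hnonpos : ContinuousOn (signCpow ρ γ) (Iic 0) := by
    refine ((hpow.comp continuous_neg).const_mul ((-1) ^ γ)).continuousOn.congr fun x hx => ?_
    simp only [Function.comp_apply, ← hval (neg_nonneg.2 hx), ← signCpow_neg, neg_neg]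
  rw [← continuousOn_univ, ← Iic_union_Ici (a := (0 : ℝ))]
  exact hnonpos.union_of_isClosed hnonneg isClosed_Iic isClosed_Ici

/-- The generalised binomial coefficient `ρ` over `(ρ + k) / 2`, parametrised by the offset `k` from
the centre so that it is even in `k`. It is meant to be `0` where one of the Gamma factors of the
denominator has a pole, as given by Mathlib's `Gamma (-n) = 0` and `x / 0 = 0`. -/
noncomputable def symmBinom (ρ k : ℂ) : ℂ :=
  Gamma (ρ + 1) / (Gamma (1 + (ρ + k) / 2) * Gamma (1 + (ρ - k) / 2))

theorem symmBinom_neg (ρ k : ℂ) : symmBinom ρ (-k) = symmBinom ρ k := by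
  rw [symmBinom, symmBinom, mul_comm, sub_neg_eq_add, ← sub_eq_add_neg]

theorem inv_Gamma_eq_mul_inv_Gamma_one_add (z : ℂ) : (Gamma z)⁻¹ = z * (Gamma (1 + z))⁻¹ := by
  rw [add_comm, one_div_Gamma_eq_self_mul_one_div_Gamma_add_one]

theorem symmBinom_add_one {ρ : ℂ} (hρ : ρ + 1 ≠ 0) (k : ℂ) :
    symmBinom (ρ + 1) k = symmBinom ρ (k + 1) + symmBinom ρ (k - 1) := by
  simp only [symmBinom, div_eq_mul_inv (Gamma _), mul_inv]
  rw [Gamma_add_one _ hρ,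
    show 1 + (ρ + (k - 1)) / 2 = (ρ + 1 + k) / 2 by ring,
    show 1 + (ρ - (k + 1)) / 2 = (ρ + 1 - k) / 2 by ring,
    show 1 + (ρ + (k + 1)) / 2 = 1 + (ρ + 1 + k) / 2 by ring,
    show 1 + (ρ - (k - 1)) / 2 = 1 + (ρ + 1 - k) / 2 by ring,
    inv_Gamma_eq_mul_inv_Gamma_one_add ((ρ + 1 + k) / 2),
    inv_Gamma_eq_mul_inv_Gamma_one_add ((ρ + 1 - k) / 2)]
  ring

theorem add_add_two_mul_symmBinom_add_two (ρ k : ℂ) :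
    (ρ + k + 2) * symmBinom ρ (k + 2) = (ρ - k) * symmBinom ρ k := by
  simp only [symmBinom, div_eq_mul_inv (Gamma _), mul_inv]
  rw [show 1 + (ρ + (k + 2)) / 2 = 1 + (1 + (ρ + k) / 2) by ring,
    show 1 + (ρ - (k + 2)) / 2 = (ρ - k) / 2 by ring,
    inv_Gamma_eq_mul_inv_Gamma_one_add (1 + (ρ + k) / 2),
    inv_Gamma_eq_mul_inv_Gamma_one_add ((ρ - k) / 2)]
  ring

theorem symmBinom_add_mul_symmBinom_sub (ρ l m : ℂ) :
    symmBinom ρ (l + m) * symmBinom ρ (l - m) =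
      Gamma (ρ + 1) ^ 2 /
        (Gamma (1 + (ρ + l + m) / 2) * Gamma (1 + (ρ + l - m) / 2) *
          Gamma (1 + (ρ - l + m) / 2) * Gamma (1 + (ρ - l - m) / 2)) := by
  rw [symmBinom, symmBinom, div_mul_div_comm, ← sq]
  ring_nf

/-- Cauchy's integral `∫ (2 cos a)^ρ e^{ika} da` over `(-π/2, π/2)`. For integers `k ≡ γ (mod 2)` it
is `π` times the `k`-th Fourier coefficient of `a ↦ |2 cos a|^ρ sgn(2 cos a)^γ`. -/
noncomputable def cosPowIntegral (ρ k : ℂ) : ℂ :=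
  ∫ a in -(Real.pi / 2)..Real.pi / 2, ((2 * Real.cos a : ℝ) : ℂ) ^ ρ * cexp (k * a * I)

theorem cosPowIntegral_neg (ρ k : ℂ) : cosPowIntegral ρ (-k) = cosPowIntegral ρ k := by
  have h := intervalIntegral.integral_comp_neg (a := -(Real.pi / 2)) (b := Real.pi / 2)
    fun a : ℝ => ((2 * Real.cos a : ℝ) : ℂ) ^ ρ * cexp (k * a * I)
  simpa only [cosPowIntegral, Real.cos_neg, ofReal_neg, mul_neg, neg_mul, neg_neg] using h

-- The substitution `t = (1 + sin a) / 2` turns `t (1 - t)` into `(cos a / 2) ^ 2`.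
theorem cos_div_two_smul_beta_integrand (u : ℂ) {a : ℝ} (ha : 0 < Real.cos a) :
    (Real.cos a / 2) • ((((1 + Real.sin a) / 2 : ℝ) : ℂ) ^ (u - 1) *
        (1 - (((1 + Real.sin a) / 2 : ℝ) : ℂ)) ^ (u - 1)) =
      4 ^ (1 - 2 * u) * ((2 * Real.cos a : ℝ) : ℂ) ^ (2 * u - 1) := by
  have hc : ((Real.cos a / 2 : ℝ) : ℂ) ≠ 0 := ofReal_ne_zero.2 (half_pos ha).ne'
  have hprod : (1 + Real.sin a) / 2 * ((1 - Real.sin a) / 2) =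
      Real.cos a / 2 * (Real.cos a / 2) := by
    linear_combination (-1 / 4) * Real.sin_sq_add_cos_sq a
  have hsplit : ((2 * Real.cos a : ℝ) : ℂ) ^ (2 * u - 1) =
      4 ^ (2 * u - 1) * ((Real.cos a / 2 : ℝ) : ℂ) ^ (2 * u - 1) := by
    rw [← ofReal_ofNat 4, ← mul_cpow_ofReal_nonneg (by norm_num) (half_pos ha).le, ← ofReal_mul]
    ring_nf
  calc (Real.cos a / 2) • ((((1 + Real.sin a) / 2 : ℝ) : ℂ) ^ (u - 1) *
        (1 - (((1 + Real.sin a) / 2 : ℝ) : ℂ)) ^ (u - 1))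
      = (Real.cos a / 2 : ℝ) * (((Real.cos a / 2 : ℝ) : ℂ) ^ (u - 1) *
          ((Real.cos a / 2 : ℝ) : ℂ) ^ (u - 1)) := by
        rw [show 1 - (((1 + Real.sin a) / 2 : ℝ) : ℂ) = ((1 - Real.sin a) / 2 : ℝ) by
          push_cast; ring, ← mul_cpow_ofReal_nonneg (by linarith [Real.neg_one_le_sin a])
          (by linarith [Real.sin_le_one a]), ← ofReal_mul, hprod, ofReal_mul,
          mul_cpow_ofReal_nonneg (half_pos ha).le (half_pos ha).le, real_smul]
    _ = ((Real.cos a / 2 : ℝ) : ℂ) ^ (2 * u - 1) := by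
        rw [show 2 * u - 1 = 1 + (u - 1 + (u - 1)) by ring, cpow_add _ _ hc, cpow_add _ _ hc,
          cpow_one]
    _ = 4 ^ (1 - 2 * u) * ((2 * Real.cos a : ℝ) : ℂ) ^ (2 * u - 1) := by
        rw [hsplit, ← mul_assoc, ← cpow_add _ _ (by norm_num), sub_add_sub_cancel', sub_self,
          cpow_zero, one_mul]

theorem hasDerivAt_one_add_sin_div_two (a : ℝ) :
    HasDerivAt (fun a => (1 + Real.sin a) / 2) (Real.cos a / 2) a :=
  ((Real.hasDerivAt_sin a).const_add 1).div_const 2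

theorem cos_pos_of_mem_uIoo {a : ℝ} (ha : a ∈ uIoo (-(Real.pi / 2)) (Real.pi / 2)) :
    0 < Real.cos a := by
  rw [uIoo_of_le (by linarith [Real.pi_pos])] at ha
  exact Real.cos_pos_of_mem_Ioo ha

theorem betaIntegral_self (u : ℂ) :
    betaIntegral u u = 4 ^ (1 - 2 * u) *
      ∫ a in -(Real.pi / 2)..Real.pi / 2, ((2 * Real.cos a : ℝ) : ℂ) ^ (2 * u - 1) := by
  rw [← intervalIntegral.integral_const_mul, ← intervalIntegral.integral_congr_uIoo fun a ha =>
    cos_div_two_smul_beta_integrand u (cos_pos_of_mem_uIoo ha)]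
  have h := intervalIntegral.integral_deriv_smul_comp_of_deriv_nonneg
    (a := -(Real.pi / 2)) (b := Real.pi / 2) (f := fun a => (1 + Real.sin a) / 2)
    (g := fun x : ℝ => (x : ℂ) ^ (u - 1) * (1 - (x : ℂ)) ^ (u - 1)) (by fun_prop)
    (fun a _ => hasDerivAt_one_add_sin_div_two a)
    fun a ha => (half_pos (cos_pos_of_mem_uIoo ha)).le
  simp only [Real.sin_neg, Real.sin_pi_div_two, add_neg_cancel, zero_div, add_self_div_two] at h
  exact h.symm

theorem intervalIntegrable_two_mul_cos_cpow {ρ : ℂ} (hρ : -1 < ρ.re) :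
    IntervalIntegrable (fun a : ℝ => ((2 * Real.cos a : ℝ) : ℂ) ^ ρ) volume
      (-(Real.pi / 2)) (Real.pi / 2) := by
  obtain ⟨u, rfl⟩ : ∃ u, ρ = 2 * u - 1 := ⟨(ρ + 1) / 2, by ring⟩
  have hu : 0 < u.re := by simpa using hρ
  have hbeta := (intervalIntegral.integrable_deriv_smul_comp_iff_of_deriv_nonneg
    (a := -(Real.pi / 2)) (b := Real.pi / 2) (f := fun a => (1 + Real.sin a) / 2)
    (g := fun x : ℝ => (x : ℂ) ^ (u - 1) * (1 - (x : ℂ)) ^ (u - 1)) (by fun_prop)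
    (fun a _ => hasDerivAt_one_add_sin_div_two a)
    fun a ha => (half_pos (cos_pos_of_mem_uIoo ha)).le).2
    (by simpa using betaIntegral_convergent hu hu)
  have h4 : (4 : ℂ) ^ (2 * u - 1) * 4 ^ (1 - 2 * u) = 1 := by
    rw [← cpow_add _ _ (by norm_num), sub_add_sub_cancel', sub_self, cpow_zero]
  refine (hbeta.const_mul (4 ^ (2 * u - 1))).congr_uIoo fun a ha => ?_
  simp only [Function.comp_apply, cos_div_two_smul_beta_integrand u (cos_pos_of_mem_uIoo ha),
    ← mul_assoc, h4, one_mul]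

theorem intervalIntegrable_two_mul_cos_cpow_mul_cexp {ρ : ℂ} (hρ : -1 < ρ.re) (k : ℂ) :
    IntervalIntegrable (fun a : ℝ => ((2 * Real.cos a : ℝ) : ℂ) ^ ρ * cexp (k * a * I)) volume
      (-(Real.pi / 2)) (Real.pi / 2) :=
  (intervalIntegrable_two_mul_cos_cpow hρ).mul_continuousOn (by fun_prop)

theorem cosPowIntegral_zero {ρ : ℂ} (hρ : -1 < ρ.re) :
    cosPowIntegral ρ 0 = Real.pi * symmBinom ρ 0 := by
  obtain ⟨u, rfl⟩ : ∃ u, ρ = 2 * u - 1 := ⟨(ρ + 1) / 2, by ring⟩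
  have hu : 0 < u.re := by simpa using hρ
  have hint : betaIntegral u u = 4 ^ (1 - 2 * u) * cosPowIntegral (2 * u - 1) 0 := by
    simp [betaIntegral_self, cosPowIntegral]
  have hbeta := Gamma_mul_Gamma_eq_betaIntegral hu hu
  rw [← two_mul, hint] at hbeta
  have hpi : (√Real.pi : ℂ) ^ 2 = Real.pi := by
    rw [← ofReal_pow, Real.sq_sqrt Real.pi_pos.le]
  have h4 : (4 : ℂ) ^ (1 - 2 * u) = (2 ^ (1 - 2 * u)) ^ 2 := by
    rw [sq, ← ofReal_ofNat 2, ← mul_cpow_ofReal_nonneg two_pos.le two_pos.le]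
    norm_num
  have hΓ : Gamma (2 * u) ≠ 0 := Gamma_ne_zero_of_re_pos (by simpa using hu)
  have hΓ_half : Gamma (u + 1 / 2) ≠ 0 := Gamma_ne_zero_of_re_pos <| by
    rw [add_re, one_div, ← ofReal_ofNat, ← ofReal_inv, ofReal_re]
    positivity
  have hscale : Gamma (2 * u) * 4 ^ (1 - 2 * u) ≠ 0 := mul_ne_zero hΓ (by simp [cpow_eq_zero_iff])
  rw [symmBinom, sub_add_cancel, add_zero, sub_zero, show 1 + (2 * u - 1) / 2 = u + 1 / 2 by ring,
    mul_div_assoc', eq_div_iff (mul_ne_zero hΓ_half hΓ_half)]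
  refine mul_left_cancel₀ hscale ?_
  calc Gamma (2 * u) * 4 ^ (1 - 2 * u) *
        (cosPowIntegral (2 * u - 1) 0 * (Gamma (u + 1 / 2) * Gamma (u + 1 / 2)))
      = (Gamma u * Gamma (u + 1 / 2)) ^ 2 := by linear_combination -Gamma (u + 1 / 2) ^ 2 * hbeta
    _ = (Gamma (2 * u) * 2 ^ (1 - 2 * u) * √Real.pi) ^ 2 := by rw [Gamma_mul_Gamma_add_half]
    _ = Gamma (2 * u) * 4 ^ (1 - 2 * u) * (Real.pi * Gamma (2 * u)) := by
      rw [mul_pow, mul_pow, hpi, h4]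
      ring

theorem cosPowIntegral_add_one {ρ : ℂ} (hρ : -1 < ρ.re) (k : ℂ) :
    cosPowIntegral (ρ + 1) k = cosPowIntegral ρ (k + 1) + cosPowIntegral ρ (k - 1) := by
  simp only [cosPowIntegral]
  rw [← intervalIntegral.integral_add (intervalIntegrable_two_mul_cos_cpow_mul_cexp hρ _)
    (intervalIntegrable_two_mul_cos_cpow_mul_cexp hρ _)]
  refine intervalIntegral.integral_congr_uIoo fun a ha => ?_
  have hcos : ((2 * Real.cos a : ℝ) : ℂ) ≠ 0 :=
    ofReal_ne_zero.2 (mul_pos two_pos (cos_pos_of_mem_uIoo ha)).ne'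
  have heuler : ((2 * Real.cos a : ℝ) : ℂ) = cexp (a * I) + cexp (-(a * I)) := by
    rw [← neg_mul, ← two_cos, ofReal_mul, ofReal_ofNat, ofReal_cos]
  simp only [cpow_add _ _ hcos, cpow_one, add_mul, sub_eq_add_neg, neg_mul, one_mul, exp_add]
  rw [heuler]
  ring

-- Both sides satisfy Pascal's rule, which expresses the value at `(ρ, k + 1)` through those at
-- `(ρ + 1, k)` and `(ρ, k - 1)`; this is why the induction generalizes `ρ`.
theorem cosPowIntegral_natCast (n : ℕ) {ρ : ℂ} (hρ : -1 < ρ.re) :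
    cosPowIntegral ρ n = Real.pi * symmBinom ρ n := by
  have hne {ρ : ℂ} (hρ : -1 < ρ.re) : ρ + 1 ≠ 0 := ne_zero_of_re_pos (by simpa using by linarith)
  have hadd {ρ : ℂ} (hρ : -1 < ρ.re) : -1 < (ρ + 1).re := by simpa using by linarith
  induction n using Nat.twoStepInduction generalizing ρ with
  | zero => simpa using cosPowIntegral_zero hρ
  | one =>
    have hJ := cosPowIntegral_add_one hρ 0
    have hB := symmBinom_add_one (hne hρ) 0
    rw [cosPowIntegral_zero (hadd hρ), zero_add, zero_sub, cosPowIntegral_neg] at hJ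
    rw [zero_add, zero_sub, symmBinom_neg] at hB
    rw [Nat.cast_one]
    linear_combination (Real.pi * hB - hJ) / 2
  | more n ihn ihn' =>
    have hJ := cosPowIntegral_add_one hρ (n + 1 : ℕ)
    have hB := symmBinom_add_one (hne hρ) (n + 1 : ℕ)
    rw [ihn' (hadd hρ), Nat.cast_succ, add_sub_cancel_right, ihn hρ] at hJ
    rw [Nat.cast_succ, add_sub_cancel_right] at hB
    rw [Nat.cast_succ, Nat.cast_succ]
    linear_combination Real.pi * hB - hJ

theorem cosPowIntegral_intCast {ρ : ℂ} (hρ : -1 < ρ.re) (k : ℤ) :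
    cosPowIntegral ρ k = Real.pi * symmBinom ρ k := by
  obtain ⟨n, rfl | rfl⟩ := k.eq_nat_or_neg
  · exact_mod_cast cosPowIntegral_natCast n hρ
  · rw [Int.cast_neg, Int.cast_natCast, cosPowIntegral_neg, symmBinom_neg,
      cosPowIntegral_natCast n hρ]

theorem add_two_mul_norm_sub_le {ρ : ℂ} {x : ℝ} (hρ : 0 ≤ ρ.re) (hx : ρ.re ≤ x)
    (hlarge : ρ.im ^ 2 * (ρ.re + 2) ≤ ρ.re * (x - ρ.re) ^ 2) :
    (x + 2) * ‖ρ - x‖ ≤ (x - ρ.re) * ‖ρ + x + 2‖ := by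
  refine le_of_sq_le_sq ?_ (mul_nonneg (sub_nonneg.2 hx) (norm_nonneg _))
  simp only [mul_pow, ← normSq_eq_norm_sq, normSq_apply, sub_re, sub_im, add_re, add_im, ofReal_re,
    ofReal_im, re_ofNat, im_ofNat, add_zero, sub_zero]
  have hfactor : 0 ≤ 2 * x + 4 + ρ.re := by linarith
  nlinarith [mul_le_mul_of_nonneg_right hlarge hfactor,
    mul_nonneg (mul_nonneg (sq_nonneg ρ.im) (by linarith : 0 ≤ ρ.re + 2))
      (by linarith : 0 ≤ 2 + 2 * ρ.re)]

theorem eventually_add_two_mul_norm_symmBinom_le {ρ : ℂ} (hρ : 0 < ρ.re) :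
    ∀ᶠ x : ℝ in atTop, (x + 2) * ‖symmBinom ρ (x + 2)‖ ≤ (x - ρ.re) * ‖symmBinom ρ x‖ := by
  have hquad : Tendsto (fun x : ℝ => ρ.re * (x - ρ.re) ^ 2) atTop atTop :=
    ((tendsto_pow_atTop two_ne_zero).comp
      (tendsto_atTop_add_const_right _ (-ρ.re) tendsto_id)).const_mul_atTop hρ
  filter_upwards [eventually_ge_atTop ρ.re,
    hquad.eventually_ge_atTop (ρ.im ^ 2 * (ρ.re + 2))] with x hx hlarge
  have hratio := add_two_mul_norm_sub_le hρ.le hx hlarge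
  have hrec := congrArg norm (add_add_two_mul_symmBinom_add_two ρ x)
  simp only [norm_mul] at hrec
  have hpos : 0 < ‖ρ + x + 2‖ := norm_pos_iff.2 <| ne_zero_of_re_pos <| by
    simpa using by linarith
  refine le_of_mul_le_mul_left ?_ hpos
  calc ‖ρ + x + 2‖ * ((x + 2) * ‖symmBinom ρ (x + 2)‖)
      = (x + 2) * ‖ρ - x‖ * ‖symmBinom ρ x‖ := by linear_combination (x + 2) * hrec
    _ ≤ (x - ρ.re) * ‖ρ + x + 2‖ * ‖symmBinom ρ x‖ := by gcongr
    _ = ‖ρ + x + 2‖ * ((x - ρ.re) * ‖symmBinom ρ x‖) := by ring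

-- Raabe's test: the bound on consecutive terms makes `x ‖symmBinom ρ x‖` decrease by at least
-- `ρ.re ‖symmBinom ρ x‖` at each step `x ↦ x + 2`.
theorem summable_norm_symmBinom_nat {ρ : ℂ} (hρ : 0 < ρ.re) (x₀ : ℝ) :
    Summable fun n : ℕ => ‖symmBinom ρ (2 * n + x₀)‖ := by
  have hlim : Tendsto (fun n : ℕ => 2 * (n : ℝ) + x₀) atTop atTop :=
    tendsto_atTop_add_const_right _ _
      (tendsto_natCast_atTop_atTop.const_mul_atTop two_pos)
  refine (summable_mul_left_iff hρ.ne').1 <| summable_of_eventually_le_sub_succ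
    (d := fun n : ℕ => (2 * n + x₀) * ‖symmBinom ρ (2 * n + x₀)‖)
    (.of_forall fun n => by positivity) ?_ ?_
  · filter_upwards [hlim.eventually_ge_atTop 0] with n hn using mul_nonneg hn (norm_nonneg _)
  · filter_upwards [hlim.eventually (eventually_add_two_mul_norm_symmBinom_le hρ)] with n hn
    push_cast at hn ⊢
    rw [mul_add_one, mul_add_one, add_right_comm _ 2 _, add_right_comm _ 2 _]
    linarith

theorem summable_norm_symmBinom_int {ρ : ℂ} (hρ : 0 < ρ.re) (x₀ : ℝ) :
    Summable fun n : ℤ => ‖symmBinom ρ (2 * n + x₀)‖ := by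
  refine .of_nat_of_neg (by exact_mod_cast summable_norm_symmBinom_nat hρ x₀) ?_
  refine (summable_norm_symmBinom_nat hρ (-x₀)).congr fun n => ?_
  rw [← symmBinom_neg]
  push_cast
  ring_nf

theorem periodic_signCpow_two_mul_cos_mul_cexp (ρ : ℂ) (γ : ℕ) :
    Function.Periodic (fun x : ℝ => signCpow ρ γ (2 * Real.cos x) * cexp (-(γ * (x * I))))
      Real.pi := fun x => by
  have hsq : (-1 : ℂ) ^ γ * (-1) ^ γ = 1 := by rw [← mul_pow, neg_one_mul, neg_neg, one_pow]
  simp only [Real.cos_add_pi, mul_neg, signCpow_neg, ofReal_add, add_mul, mul_add, neg_add,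
    exp_add, exp_neg (γ * (Real.pi * I)), exp_nat_mul, exp_pi_mul_I, ← inv_pow, inv_neg, inv_one]
  linear_combination signCpow ρ γ (2 * Real.cos x) * cexp (-(γ * (x * I))) * hsq

theorem hasSum_symmBinom_mul_cexp {ρ : ℂ} (hρ : 0 < ρ.re) (γ : ℕ) (a : ℝ) :
    HasSum (fun n : ℤ => symmBinom ρ (2 * n + γ) * cexp ((2 * n + γ) * a * I))
      (signCpow ρ γ (2 * Real.cos a)) := by
  have hpi : (Real.pi : ℂ) ≠ 0 := ofReal_ne_zero.2 Real.pi_ne_zero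
  let g : ℝ → ℂ := fun x => signCpow ρ γ (2 * Real.cos x) * cexp (-(γ * (x * I)))
  have hcont : Continuous g :=
    ((continuous_signCpow hρ γ).comp (by fun_prop)).mul (by fun_prop)
  have hper : Function.Periodic g Real.pi := periodic_signCpow_two_mul_cos_mul_cexp ρ γ
  have hcoeff (n : ℤ) : symmBinom ρ (2 * n + γ) = (Real.pi : ℂ)⁻¹ *
      ∫ x in -(Real.pi / 2)..-(Real.pi / 2) + Real.pi,
        cexp (-(2 * Real.pi * n * x / Real.pi) * I) * g x := by
    have hJ := cosPowIntegral_intCast (k := -(2 * n + γ)) (by linarith : -1 < ρ.re)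
    push_cast at hJ
    rw [symmBinom_neg] at hJ
    rw [eq_inv_mul_iff_mul_eq₀ hpi, ← hJ, cosPowIntegral, neg_add_eq_sub, sub_half]
    refine intervalIntegral.integral_congr_uIoo fun x hx => ?_
    have hcos := cos_pos_of_mem_uIoo hx
    simp only [g, signCpow_of_nonneg (ne_zero_of_re_pos hρ) γ (mul_pos two_pos hcos).le]
    rw [mul_left_comm, ← exp_add]
    congr 2
    field_simp
    ring
  have hs : Summable fun n : ℤ => symmBinom ρ (2 * n + γ) := by
    exact_mod_cast (summable_norm_symmBinom_int hρ γ).of_norm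
  have hsum := (hasSum_fourier_of_periodic Real.pi_pos hcont hper _ hcoeff hs a).mul_right
    (cexp (γ * (a * I)))
  simp only [g, mul_assoc (signCpow _ _ _), mul_assoc (symmBinom _ _), ← exp_add, neg_add_cancel,
    exp_zero, mul_one] at hsum
  refine hsum.congr_fun fun n => ?_
  congr 2
  field_simp

theorem two_cpow_neg_mul_signCpow_mul_signCpow (ρ : ℂ) (γ : ℕ) (φ ψ : ℝ) :
    2 ^ (-ρ) * (signCpow ρ γ (2 * Real.cos ((φ + ψ) / 2)) *
      signCpow ρ γ (2 * Real.cos ((φ - ψ) / 2))) = signCpow ρ γ (Real.cos φ + Real.cos ψ) := by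
  have htwo : 2 ^ (-ρ) * signCpow ρ γ 2 = 1 := by
    simp [signCpow, Real.sign_of_pos, ← cpow_add]
  rw [← signCpow_mul, Real.cos_add_cos,
    show 2 * Real.cos ((φ + ψ) / 2) * (2 * Real.cos ((φ - ψ) / 2)) =
      2 * (2 * Real.cos ((φ + ψ) / 2) * Real.cos ((φ - ψ) / 2)) by ring, signCpow_mul,
    ← mul_assoc, htwo, one_mul]

theorem hasSum_symmBinom_mul_cexp_mul_cexp {ρ : ℂ} (hρ : 0 < ρ.re) (γ : ℕ) (φ ψ : ℝ) :
    HasSum (fun q : ℤ × ℤ => 2 ^ (-ρ) * (symmBinom ρ (2 * q.1 + γ) * symmBinom ρ (2 * q.2 + γ)) *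
        cexp ((q.1 + q.2 + γ) * φ * I) * cexp ((q.1 - q.2) * ψ * I))
      (signCpow ρ γ (Real.cos φ + Real.cos ψ)) := by
  have hnorm (a : ℝ) : Summable fun n : ℤ =>
      ‖symmBinom ρ (2 * n + γ) * cexp ((2 * n + γ) * a * I)‖ := by
    have hone (n : ℤ) : ‖cexp ((2 * n + γ) * a * I)‖ = 1 := by
      simpa using norm_exp_ofReal_mul_I ((2 * n + γ) * a)
    simpa only [norm_mul, hone, mul_one, ofReal_natCast] using summable_norm_symmBinom_int hρ γ
  have hsummable := summable_mul_of_summable_norm (hnorm ((φ + ψ) / 2)) (hnorm ((φ - ψ) / 2))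
  have hprod := ((hasSum_symmBinom_mul_cexp hρ γ ((φ + ψ) / 2)).mul
    (hasSum_symmBinom_mul_cexp hρ γ ((φ - ψ) / 2)) hsummable).mul_left ((2 : ℂ) ^ (-ρ))
  rw [two_cpow_neg_mul_signCpow_mul_signCpow] at hprod
  refine hprod.congr_fun fun q => ?_
  have hexp : cexp ((q.1 + q.2 + γ) * φ * I) * cexp ((q.1 - q.2) * ψ * I) =
      cexp ((2 * q.1 + γ) * ((φ + ψ) / 2 : ℝ) * I) *
        cexp ((2 * q.2 + γ) * ((φ - ψ) / 2 : ℝ) * I) := by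
    rw [← exp_add, ← exp_add]
    push_cast
    ring_nf
  linear_combination 2 ^ (-ρ) * (symmBinom ρ (2 * q.1 + γ) * symmBinom ρ (2 * q.2 + γ)) * hexp

theorem hasSum_symmBinom_mul_cos_mul_cos {ρ : ℂ} (hρ : 0 < ρ.re) (γ : ℕ) (φ ψ : ℝ) :
    HasSum (fun q : ℤ × ℤ => 2 ^ (-ρ) * (symmBinom ρ (2 * q.1 + γ) * symmBinom ρ (2 * q.2 + γ)) *
        Complex.cos ((q.1 + q.2 + γ) * φ) * Complex.cos ((q.1 - q.2) * ψ))
      (signCpow ρ γ (Real.cos φ + Real.cos ψ)) := by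
  have hφ (ψ : ℝ) : HasSum (fun q : ℤ × ℤ => 2 ^ (-ρ) *
      (symmBinom ρ (2 * q.1 + γ) * symmBinom ρ (2 * q.2 + γ)) *
        cexp ((q.1 - q.2) * ψ * I) * Complex.cos ((q.1 + q.2 + γ) * φ))
      (signCpow ρ γ (Real.cos φ + Real.cos ψ)) := by
    have hneg := hasSum_symmBinom_mul_cexp_mul_cexp hρ γ (-φ) ψ
    rw [Real.cos_neg] at hneg
    refine hasSum_mul_cos ?_ ?_
    · simpa only [mul_right_comm] using hasSum_symmBinom_mul_cexp_mul_cexp hρ γ φ ψ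
    · simpa only [mul_right_comm _ (cexp ((_ - _) * _ * I)), ofReal_neg, mul_neg] using hneg
  have hneg := hφ (-ψ)
  rw [Real.cos_neg] at hneg
  refine hasSum_mul_cos ?_ ?_
  · simpa only [mul_right_comm] using hφ ψ
  · simpa only [mul_right_comm _ (Complex.cos _), ofReal_neg, mul_neg] using hneg

theorem stmt11_general (ρ : ℂ) (hρ : 0 < ρ.re) (γ : ℕ) (φ ψ : ℝ) :
    HasSum
      (fun p : ℤ × ℤ =>
        if p.1 % 2 = (p.2 + γ) % 2 then
          (2 : ℂ) ^ (-ρ) * Complex.Gamma (ρ + 1) ^ 2 *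
            ((Real.cos ((p.1 : ℝ) * φ) : ℂ) * (Real.cos ((p.2 : ℝ) * ψ) : ℂ) /
              (Complex.Gamma (1 + (ρ + (p.1 : ℂ) + (p.2 : ℂ)) / 2) *
                Complex.Gamma (1 + (ρ + (p.1 : ℂ) - (p.2 : ℂ)) / 2) *
                Complex.Gamma (1 + (ρ - (p.1 : ℂ) + (p.2 : ℂ)) / 2) *
                Complex.Gamma (1 + (ρ - (p.1 : ℂ) - (p.2 : ℂ)) / 2)))
        else 0)
      (((|Real.cos φ + Real.cos ψ| : ℝ) : ℂ) ^ ρ *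
        (((Real.sign (Real.cos φ + Real.cos ψ)) ^ γ : ℝ) : ℂ)) := by
  refine (hasSum_ite_emod_two_iff _ γ _).2 ?_
  refine (hasSum_symmBinom_mul_cos_mul_cos hρ γ φ ψ).congr_fun fun q => ?_
  have hcoeff := symmBinom_add_mul_symmBinom_sub ρ (q.1 + q.2 + γ) (q.1 - q.2)
  rw [show (q.1 + q.2 + γ + (q.1 - q.2) : ℂ) = 2 * q.1 + γ by ring,
    show (q.1 + q.2 + γ - (q.1 - q.2) : ℂ) = 2 * q.2 + γ by ring] at hcoeff
  rw [hcoeff]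
  push_cast
  ring

theorem stmt11 (ρ : ℂ) (hρ : 0 < ρ.re) (γ : ℕ) (hγ : γ = 0 ∨ γ = 1) (φ ψ : ℝ) :
    HasSum
      (fun p : ℤ × ℤ =>
        if p.1 % 2 = (p.2 + γ) % 2 then
          (2 : ℂ) ^ (-ρ) * Complex.Gamma (ρ + 1) ^ 2 *
            ((Real.cos ((p.1 : ℝ) * φ) : ℂ) * (Real.cos ((p.2 : ℝ) * ψ) : ℂ) /
              (Complex.Gamma (1 + (ρ + (p.1 : ℂ) + (p.2 : ℂ)) / 2) *
                Complex.Gamma (1 + (ρ + (p.1 : ℂ) - (p.2 : ℂ)) / 2) *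
                Complex.Gamma (1 + (ρ - (p.1 : ℂ) + (p.2 : ℂ)) / 2) *
                Complex.Gamma (1 + (ρ - (p.1 : ℂ) - (p.2 : ℂ)) / 2)))
        else 0)
      (((|Real.cos φ + Real.cos ψ| : ℝ) : ℂ) ^ ρ *
        (((Real.sign (Real.cos φ + Real.cos ψ)) ^ γ : ℝ) : ℂ)) :=
  stmt11_general ρ hρ γ φ ψ
end

section
/- Suppose ℓ, m ∈ ℕ with ℓ + m even, ν ∈ ℂ with Re ν > 0, and −1 ≤ x ≤ 1. Then ∫_{−∞}^∞ ∫_{−∞}^∞ |s − xt|^{2ν} e^{−s²−t²} H_ℓ(s) H_m(t) ds dt = (−ν)_{(ℓ+m)/2} · (−1)^{(ℓ−m)/2} · 2^{ℓ+m} · π^{1/2} · Γ(1/2 + ν) · (x² + 1)^{ν − (ℓ+m)/2} · x^m. -/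
open MeasureTheory

/-- The physicists' Hermite polynomial `H_n(x)`, via its explicit expansion
`H_n(x) = n! Σ_{k≤n/2} (-1)^k (2x)^{n-2k} / (k! (n-2k)!)`. -/
noncomputable def physHermite (n : ℕ) (x : ℝ) : ℝ :=
  ∑ k ∈ Finset.range (n / 2 + 1),
    (-1 : ℝ) ^ k * (Nat.factorial n : ℝ) /
      ((Nat.factorial k : ℝ) * (Nat.factorial (n - 2 * k) : ℝ)) * (2 * x) ^ (n - 2 * k)

/-! With `r = √(x² + 1)`, the factor `|s - x t|^(2ν)` is `r^(2ν)` times a ridge function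
`φ(c s - d t)` with `(c, d) = (1, x) / r` a unit vector. Rotate the plane so that `u = c s - d t` is
a coordinate and integrate over the orthogonal coordinate `v` first. Hermite polynomials are built
by the raising operator `p ↦ 2 X p - p'`, and Gaussian integration by parts in `v` turns raising in
`s` or in `t` into `c` or `-d` times raising in `u`; hence the `v`-integral of
`H_ℓ(s) H_m(t) e^(-v²)` is `√π c^ℓ (-d)^m H_{ℓ+m}(u)`. What is left is the integral of `H_{2n}`
against `|u|^(2ν) e^(-u²)`. The moments of this weight are Gamma values, and the three-term
recurrence gives the integral of `H_{n+2}` as `4ν - 2n` times that of `H_n`. -/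

open Polynomial

section HermitePolynomial

/-- The physicists' Hermite polynomial with coefficients in `R`, built by iterating the raising
operator `p ↦ 2 X p - p'`; over `ℂ` it is the algebraic form of `physHermite`. -/
noncomputable def physHermitePoly (R : Type*) [CommRing R] : ℕ → R[X]
  | 0 => 1
  | n + 1 => 2 * X * physHermitePoly R n - derivative (physHermitePoly R n)

variable (R : Type*) [CommRing R]

lemma physHermitePoly_succ (n : ℕ) : physHermitePoly R (n + 1) =
    2 * X * physHermitePoly R n - derivative (physHermitePoly R n) := rfl

lemma derivative_physHermitePoly_succ (n : ℕ) :
    derivative (physHermitePoly R (n + 1)) = 2 * ((n : R[X]) + 1) * physHermitePoly R n := by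
  induction n with
  | zero => simp [physHermitePoly]
  | succ n ih =>
    rw [physHermitePoly_succ, derivative_sub, derivative_mul, ih]
    simp only [derivative_mul, derivative_X, derivative_ofNat, derivative_add, derivative_one,
      derivative_natCast]
    push_cast
    linear_combination -2 * ((n : R[X]) + 1) * physHermitePoly_succ R n

lemma derivative_physHermitePoly (n : ℕ) :
    derivative (physHermitePoly R n) = ((2 * n : ℕ) : R[X]) * physHermitePoly R (n - 1) := by
  cases n with
  | zero => simp [physHermitePoly]
  | succ n => simpa using derivative_physHermitePoly_succ R n

lemma physHermitePoly_add_two (n : ℕ) :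
    physHermitePoly R (n + 2) =
      2 * X * physHermitePoly R (n + 1) - 2 * ((n : R[X]) + 1) * physHermitePoly R n := by
  rw [physHermitePoly_succ, derivative_physHermitePoly_succ]

end HermitePolynomial

section ExplicitHermite

lemma physHermite_eq_sum_descFactorial {n N : ℕ} (hN : n / 2 < N) (x : ℝ) :
    physHermite n x = ∑ k ∈ Finset.range N,
      (-1) ^ k * (n.descFactorial (2 * k) : ℝ) / (k.factorial : ℝ) * (2 * x) ^ (n - 2 * k) := by
  rw [← Finset.sum_subset (Finset.range_subset_range.mpr hN)]
  · refine Finset.sum_congr rfl fun k hk => ?_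
    have hk : 2 * k ≤ n := by rw [Finset.mem_range] at hk; omega
    rw [← Nat.factorial_mul_descFactorial hk]
    push_cast
    field_simp
  · intro k _ hk
    have hk : n < 2 * k := by rw [Finset.mem_range] at hk; omega
    simp [Nat.descFactorial_of_lt hk]

lemma physHermite_add_two (n : ℕ) (x : ℝ) :
    physHermite (n + 2) x = 2 * x * physHermite (n + 1) x - 2 * (n + 1) * physHermite n x := by
  have term (k : ℕ) :
      (-1) ^ (k + 1) * ((n + 2).descFactorial (2 * (k + 1)) : ℝ) / ((k + 1).factorial : ℝ) *
          (2 * x) ^ (n + 2 - 2 * (k + 1)) =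
        2 * x * ((-1) ^ (k + 1) * ((n + 1).descFactorial (2 * (k + 1)) : ℝ) /
          ((k + 1).factorial : ℝ) * (2 * x) ^ (n + 1 - 2 * (k + 1))) -
        2 * (n + 1) * ((-1) ^ k * (n.descFactorial (2 * k) : ℝ) / (k.factorial : ℝ) *
          (2 * x) ^ (n - 2 * k)) := by
    rw [mul_add_one, Nat.succ_descFactorial_succ (n + 1), Nat.succ_descFactorial_succ n (2 * k + 1),
      Nat.succ_descFactorial_succ n, Nat.descFactorial_succ n, Nat.factorial_succ,
      show n + 2 - (2 * k + 2) = n - 2 * k by omega]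
    push_cast
    rcases lt_trichotomy n (2 * k) with h | rfl | h
    · simp [Nat.descFactorial_of_lt h]
    · simp only [tsub_self, pow_zero, Nat.sub_eq_zero_of_le, le_add_iff_nonneg_right, zero_le,
        Nat.cast_zero, zero_mul, mul_zero, zero_div]
      push_cast
      field_simp
      ring
    · obtain ⟨j, rfl⟩ := Nat.exists_eq_add_of_lt h
      rw [show 2 * k + j + 1 - 2 * k = j + 1 by omega,
        show 2 * k + j + 1 - (2 * k + 1) = j by omega]
      push_cast
      field_simp
      ring
  rw [physHermite_eq_sum_descFactorial (N := n + 3) (by omega),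
    physHermite_eq_sum_descFactorial (n := n + 1) (N := n + 3) (by omega),
    physHermite_eq_sum_descFactorial (n := n) (N := n + 2) (by omega),
    Finset.sum_range_succ', Finset.sum_range_succ' _ (n + 2), mul_add, Finset.mul_sum,
    Finset.mul_sum]
  simp_rw [term]
  rw [Finset.sum_sub_distrib]
  simp only [pow_zero, mul_zero, Nat.descFactorial_zero, Nat.cast_one, mul_one, one_mul,
    Nat.factorial_zero, div_one, tsub_zero]
  ring

lemma ofReal_physHermite (x : ℝ) :
    ∀ n : ℕ, (physHermite n x : ℂ) = (physHermitePoly ℂ n).eval (x : ℂ)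
  | 0 => by simp [physHermite, physHermitePoly]
  | 1 => by simp [physHermite, physHermitePoly]
  | n + 2 => by
    rw [physHermite_add_two, physHermitePoly_add_two]
    simp [ofReal_physHermite x n, ofReal_physHermite x (n + 1)]

end ExplicitHermite

section MomentFunctional

/-- A weight on the line all of whose moments are absolutely convergent, so that every polynomial
can be integrated against it. -/
def HasAllMoments (w : ℝ → ℂ) : Prop := ∀ n : ℕ, Integrable fun u : ℝ => w u * (u : ℂ) ^ n

lemma HasAllMoments.integrable_mul_eval {w : ℝ → ℂ} (hw : HasAllMoments w) (p : ℂ[X]) :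
    Integrable fun u : ℝ => w u * p.eval (u : ℂ) := by
  induction p using Polynomial.induction_on' with
  | add p q hp hq =>
    simp only [eval_add, mul_add]
    exact hp.add hq
  | monomial n a =>
    simpa only [eval_monomial, mul_left_comm] using (hw n).const_mul a

/-- Integration of polynomials against a weight with all moments, as a linear functional on the
polynomial ring, so that the calculus of Gaussian integrals becomes polynomial algebra. -/
noncomputable def momentFunctional {w : ℝ → ℂ} (hw : HasAllMoments w) : ℂ[X] →ₗ[ℂ] ℂ where
  toFun p := ∫ u : ℝ, w u * p.eval (u : ℂ)
  map_add' p q := by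
    simp only [eval_add, mul_add]
    exact integral_add (hw.integrable_mul_eval p) (hw.integrable_mul_eval q)
  map_smul' a p := by
    simp only [eval_smul, smul_eq_mul, mul_left_comm, integral_const_mul, RingHom.id_apply]

lemma momentFunctional_apply {w : ℝ → ℂ} (hw : HasAllMoments w) (p : ℂ[X]) :
    momentFunctional hw p = ∫ u : ℝ, w u * p.eval (u : ℂ) := rfl

lemma momentFunctional_C_mul {w : ℝ → ℂ} (hw : HasAllMoments w) (a : ℂ) (p : ℂ[X]) :
    momentFunctional hw (C a * p) = a * momentFunctional hw p := by
  rw [C_mul', map_smul, smul_eq_mul]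

lemma HasAllMoments.integrable_mul_mvPolynomial {f g : ℝ → ℂ} (hf : HasAllMoments f)
    (hg : HasAllMoments g) (P : MvPolynomial (Fin 2) ℂ) :
    Integrable fun z : ℝ × ℝ => f z.1 * g z.2 * MvPolynomial.eval ![(z.1 : ℂ), (z.2 : ℂ)] P := by
  induction P using MvPolynomial.induction_on' with
  | monomial n a =>
    refine (((hf (n 0)).mul_prod (hg (n 1))).const_mul a).congr (.of_forall fun z => ?_)
    simp only [MvPolynomial.eval_monomial, Finsupp.prod_fintype _ _ fun _ => pow_zero _,
      Fin.prod_univ_two, Matrix.cons_val_zero, Matrix.cons_val_one]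
    ring
  | add P Q hP hQ =>
    simp only [map_add, mul_add]
    exact hP.add hQ

lemma HasAllMoments.integrable_mul_eval_mul_eval {f g : ℝ → ℂ} (hf : HasAllMoments f)
    (hg : HasAllMoments g) (a b a' b' : ℂ) (p q : ℂ[X]) :
    Integrable fun z : ℝ × ℝ => f z.1 * g z.2 *
      (p.eval (a * z.1 + b * z.2) * q.eval (a' * z.1 + b' * z.2)) := by
  let P : MvPolynomial (Fin 2) ℂ :=
    aeval (.C a * .X 0 + .C b * .X 1) p * aeval (.C a' * .X 0 + .C b' * .X 1) q
  refine (hf.integrable_mul_mvPolynomial hg P).congr (.of_forall fun z => ?_)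
  simp only [P, map_mul, ← MvPolynomial.coe_aeval_eq_eval, RingHom.coe_coe,
    ← Polynomial.aeval_algHom_apply]
  simp

end MomentFunctional

section AbsPowGaussian

lemma mellinConvergent_gaussian {s : ℂ} (hs : 0 < s.re) :
    MellinConvergent (fun t : ℝ => (Real.exp (-t ^ 2) : ℂ)) s := by
  have h := (MellinConvergent.comp_rpow (f := fun t : ℝ => (Real.exp (-t) : ℂ)) (s := s)
    two_ne_zero).2 (by
      simpa [MellinConvergent, mul_comm] using
        Complex.GammaIntegral_convergent (s := s / 2) (by simpa using hs))
  simpa using h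

lemma mellin_gaussian {s : ℂ} (hs : 0 < s.re) :
    mellin (fun t : ℝ => (Real.exp (-t ^ 2) : ℂ)) s = Complex.Gamma (s / 2) / 2 := by
  have h := mellin_comp_rpow (fun t : ℝ => (Real.exp (-t) : ℂ)) s 2
  rw [← Complex.GammaIntegral_eq_mellin, Complex.ofReal_ofNat,
    ← Complex.Gamma_eq_integral (by simpa using hs)] at h
  simpa [div_eq_inv_mul] using h

lemma integrable_of_integrableOn_Ioi {E : Type*} [NormedAddCommGroup E] {f : ℝ → E}
    (hf : IntegrableOn f (Set.Ioi 0)) (hf' : IntegrableOn (fun u => f (-u)) (Set.Ioi 0)) :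
    Integrable f := by
  rw [← integrableOn_univ, ← Set.Iic_union_Ioi (a := (0 : ℝ)), integrableOn_union]
  refine ⟨?_, hf⟩
  rw [← neg_zero] at hf'
  rw [integrableOn_Iic_iff_integrableOn_Iio]
  simpa only [neg_neg] using hf'.comp_neg_Iio

lemma integral_eq_integral_Ioi_add_comp_neg {E : Type*} [NormedAddCommGroup E] [NormedSpace ℝ E]
    {f : ℝ → E} (hf : Integrable f) :
    ∫ u, f u = (∫ u in Set.Ioi 0, f u) + ∫ u in Set.Ioi 0, f (-u) := by
  rw [← intervalIntegral.integral_Iic_add_Ioi (b := 0) hf.integrableOn hf.integrableOn,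
    integral_comp_neg_Ioi, neg_zero, add_comm]

/-- The weight `|u|^(2ν) e^(-u²)` to which the double integral reduces. At `u = 0` its value is `0`
for `ν ≠ 0` and `1` for `ν = 0`, the latter making it the Gaussian. -/
noncomputable def absPowGaussian (ν : ℂ) (u : ℝ) : ℂ :=
  ((|u| : ℝ) : ℂ) ^ (2 * ν) * (Real.exp (-u ^ 2) : ℂ)

lemma absPowGaussian_neg_mul_pow (ν : ℂ) (n : ℕ) (u : ℝ) :
    absPowGaussian ν (-u) * ((-u : ℝ) : ℂ) ^ n = (-1) ^ n * (absPowGaussian ν u * (u : ℂ) ^ n) := by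
  rw [absPowGaussian, absPowGaussian, abs_neg, neg_sq, Complex.ofReal_neg, neg_pow (u : ℂ)]
  ring

lemma absPowGaussian_mul_pow_of_pos (ν : ℂ) (n : ℕ) {u : ℝ} (hu : 0 < u) :
    absPowGaussian ν u * (u : ℂ) ^ n =
      (u : ℂ) ^ (2 * ν + n + 1 - 1) • (Real.exp (-u ^ 2) : ℂ) := by
  rw [absPowGaussian, abs_of_pos hu, add_sub_cancel_right,
    Complex.cpow_add _ _ (Complex.ofReal_ne_zero.2 hu.ne'), Complex.cpow_natCast, smul_eq_mul]
  ring

variable {ν : ℂ}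

lemma two_mul_add_natCast_add_one_re_pos (hν : -1 / 2 < ν.re) (n : ℕ) :
    0 < (2 * ν + n + 1).re := by
  simp only [Complex.add_re, Complex.mul_re, Complex.re_ofNat, Complex.im_ofNat, zero_mul, sub_zero,
    Complex.natCast_re, Complex.one_re]
  linarith [n.cast_nonneg (α := ℝ)]

lemma hasAllMoments_absPowGaussian (hν : -1 / 2 < ν.re) : HasAllMoments (absPowGaussian ν) := by
  intro n
  have half_line : IntegrableOn (fun u : ℝ => absPowGaussian ν u * (u : ℂ) ^ n) (Set.Ioi 0) :=
    (mellinConvergent_gaussian (two_mul_add_natCast_add_one_re_pos hν n)).congr_fun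
      (fun u hu => (absPowGaussian_mul_pow_of_pos ν n hu).symm) measurableSet_Ioi
  refine integrable_of_integrableOn_Ioi half_line ?_
  simp only [absPowGaussian_neg_mul_pow]
  exact half_line.const_mul _

lemma integral_absPowGaussian_mul_pow (hν : -1 / 2 < ν.re) (n : ℕ) :
    ∫ u : ℝ, absPowGaussian ν u * (u : ℂ) ^ n =
      (1 + (-1) ^ n) / 2 * Complex.Gamma (ν + (n + 1) / 2) := by
  have half_line : ∫ u in Set.Ioi (0 : ℝ), absPowGaussian ν u * (u : ℂ) ^ n =
      Complex.Gamma (ν + (n + 1) / 2) / 2 := by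
    rw [setIntegral_congr_fun measurableSet_Ioi
      fun u hu => absPowGaussian_mul_pow_of_pos ν n hu]
    exact (mellin_gaussian (two_mul_add_natCast_add_one_re_pos hν n)).trans (by ring_nf)
  rw [integral_eq_integral_Ioi_add_comp_neg (hasAllMoments_absPowGaussian hν n)]
  simp only [absPowGaussian_neg_mul_pow]
  rw [integral_const_mul, half_line]
  ring

lemma momentFunctional_absPowGaussian_X_pow (hν : -1 / 2 < ν.re) (n : ℕ) :
    momentFunctional (hasAllMoments_absPowGaussian hν) (X ^ n) =
      (1 + (-1) ^ n) / 2 * Complex.Gamma (ν + (n + 1) / 2) := by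
  simp only [momentFunctional_apply, eval_pow, eval_X, integral_absPowGaussian_mul_pow hν]

lemma momentFunctional_absPowGaussian_X_pow_add_two (hν : -1 / 2 < ν.re) (n : ℕ) :
    2 * momentFunctional (hasAllMoments_absPowGaussian hν) (X ^ (n + 2)) =
      (2 * ν + 1 + n) * momentFunctional (hasAllMoments_absPowGaussian hν) (X ^ n) := by
  have pole_free : ν + (n + 1) / 2 ≠ 0 := fun h => by
    refine (two_mul_add_natCast_add_one_re_pos hν n).ne' ?_
    rw [show 2 * ν + n + 1 = 2 * (ν + (n + 1) / 2) by ring, h, mul_zero, Complex.zero_re]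
  rw [momentFunctional_absPowGaussian_X_pow hν, momentFunctional_absPowGaussian_X_pow hν,
    show ν + ((n + 2 : ℕ) + 1) / 2 = ν + (n + 1) / 2 + 1 by push_cast; ring,
    Complex.Gamma_add_one _ pole_free]
  ring

lemma momentFunctional_absPowGaussian_X_sq_mul (hν : -1 / 2 < ν.re) (p : ℂ[X]) :
    2 * momentFunctional (hasAllMoments_absPowGaussian hν) (X ^ 2 * p) =
      (2 * ν + 1) * momentFunctional (hasAllMoments_absPowGaussian hν) p +
        momentFunctional (hasAllMoments_absPowGaussian hν) (X * derivative p) := by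
  induction p using Polynomial.induction_on' with
  | add p q hp hq =>
    simp only [mul_add, map_add]
    linear_combination hp + hq
  | monomial n a =>
    have shift : X ^ 2 * monomial n a = C a * X ^ (n + 2) := by
      rw [← C_mul_X_pow_eq_monomial]
      ring
    have euler : X * derivative (monomial n a) = C (a * n) * X ^ n := by
      cases n with
      | zero => simp
      | succ n => rw [derivative_monomial, ← C_mul_X_pow_eq_monomial, Nat.add_sub_cancel]; ring
    rw [shift, euler, ← C_mul_X_pow_eq_monomial]
    simp only [momentFunctional_C_mul]
    linear_combination a * momentFunctional_absPowGaussian_X_pow_add_two hν n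

lemma momentFunctional_absPowGaussian_physHermitePoly_add_two (hν : -1 / 2 < ν.re) (n : ℕ) :
    momentFunctional (hasAllMoments_absPowGaussian hν) (physHermitePoly ℂ (n + 2)) =
      (4 * ν - 2 * n) *
        momentFunctional (hasAllMoments_absPowGaussian hν) (physHermitePoly ℂ n) := by
  have hermite_eq : physHermitePoly ℂ (n + 2) =
      C 4 * (X ^ 2 * physHermitePoly ℂ n) - C 2 * (X * derivative (physHermitePoly ℂ n)) -
        C (2 * n + 2 : ℂ) * physHermitePoly ℂ n := by
    rw [physHermitePoly_add_two, physHermitePoly]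
    simp only [map_add, map_mul, map_natCast, map_ofNat]
    ring
  rw [hermite_eq, map_sub, map_sub]
  simp only [momentFunctional_C_mul]
  linear_combination
    2 * momentFunctional_absPowGaussian_X_sq_mul hν (physHermitePoly ℂ n)

lemma momentFunctional_absPowGaussian_physHermitePoly_two_mul (hν : -1 / 2 < ν.re) (n : ℕ) :
    momentFunctional (hasAllMoments_absPowGaussian hν) (physHermitePoly ℂ (2 * n)) =
      (ascPochhammer ℂ n).eval (-ν) * (-4) ^ n * Complex.Gamma (1 / 2 + ν) := by
  induction n with
  | zero =>
    rw [show physHermitePoly ℂ (2 * 0) = X ^ 0 from (pow_zero X).symm,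
      momentFunctional_absPowGaussian_X_pow hν]
    simp [add_comm]
  | succ n ih =>
    rw [mul_add_one, momentFunctional_absPowGaussian_physHermitePoly_add_two hν, ih,
      ascPochhammer_succ_eval]
    push_cast
    ring

end AbsPowGaussian

section GaussianFiber

lemma absPowGaussian_zero : absPowGaussian 0 = fun v : ℝ => (Real.exp (-v ^ 2) : ℂ) := by
  funext v
  rw [absPowGaussian, mul_zero, Complex.cpow_zero, one_mul]

lemma hasAllMoments_gaussian : HasAllMoments fun v : ℝ => (Real.exp (-v ^ 2) : ℂ) :=
  absPowGaussian_zero ▸ hasAllMoments_absPowGaussian (by norm_num)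

/-- The functional `p ↦ ∫ p(v) e^(-v²) dv` on polynomials, for the Gaussian averages over the
variable on which a ridge function does not depend. -/
noncomputable def gaussianFunctional : ℂ[X] →ₗ[ℂ] ℂ := momentFunctional hasAllMoments_gaussian

lemma gaussianFunctional_eq_absPowGaussian :
    gaussianFunctional =
      momentFunctional (hasAllMoments_absPowGaussian (ν := 0) (by norm_num)) := by
  simp only [gaussianFunctional, absPowGaussian_zero]

lemma gaussianFunctional_C_mul (a : ℂ) (p : ℂ[X]) :
    gaussianFunctional (C a * p) = a * gaussianFunctional p :=
  momentFunctional_C_mul _ a p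

lemma gaussianFunctional_one : gaussianFunctional 1 = √Real.pi := by
  have gamma_half : Complex.Gamma 2⁻¹ = √Real.pi := by
    rw [← Real.Gamma_one_half_eq, ← Complex.Gamma_ofReal]
    norm_num
  rw [gaussianFunctional_eq_absPowGaussian, ← pow_zero X,
    momentFunctional_absPowGaussian_X_pow (by norm_num)]
  simp [gamma_half]

lemma gaussianFunctional_two_mul_X_mul (p : ℂ[X]) :
    gaussianFunctional (2 * X * p) = gaussianFunctional (derivative p) := by
  induction p using Polynomial.induction_on' with
  | add p q hp hq => rw [mul_add, derivative_add, map_add, map_add, hp, hq]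
  | monomial n a =>
    have raise : 2 * X * monomial n a = C (2 * a) * X ^ (n + 1) := by
      rw [← C_mul_X_pow_eq_monomial, C_mul, C_ofNat]
      ring
    rw [raise, derivative_monomial, ← C_mul_X_pow_eq_monomial, gaussianFunctional_C_mul,
      gaussianFunctional_C_mul, gaussianFunctional_eq_absPowGaussian]
    cases n with
    | zero =>
      rw [momentFunctional_absPowGaussian_X_pow (by norm_num)]
      simp
    | succ n =>
      push_cast
      linear_combination
        a * momentFunctional_absPowGaussian_X_pow_add_two (ν := 0) (by norm_num) n

/-- The Gaussian average of `p(s) q(t)` over `v`, where `s = c u + d v` and `t = c v - d u` are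
the coordinates rotated by the unit vector `(c, d)` and `u` is held fixed. -/
noncomputable def gaussianFiber (c d u : ℂ) (p q : ℂ[X]) : ℂ :=
  gaussianFunctional (p.comp (C (c * u) + C d * X) * q.comp (C c * X - C (d * u)))

lemma gaussianFiber_eq_integral (c d u : ℂ) (p q : ℂ[X]) :
    gaussianFiber c d u p q =
      ∫ v : ℝ, (Real.exp (-v ^ 2) : ℂ) * (p.eval (c * u + d * v) * q.eval (c * v - d * u)) := by
  simp [gaussianFiber, gaussianFunctional, momentFunctional_apply]

lemma gaussianFunctional_two_mul_X_mul_comp (c d u : ℂ) (p q : ℂ[X]) :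
    gaussianFunctional (2 * X * (p.comp (C (c * u) + C d * X) * q.comp (C c * X - C (d * u)))) =
      d * gaussianFiber c d u (derivative p) q + c * gaussianFiber c d u p (derivative q) := by
  rw [gaussianFunctional_two_mul_X_mul, gaussianFiber, gaussianFiber, ← gaussianFunctional_C_mul,
    ← gaussianFunctional_C_mul, ← map_add]
  congr 1
  simp only [derivative_mul, derivative_comp, derivative_add, derivative_sub, derivative_C,
    derivative_X]
  ring

variable {c d : ℂ}

/- `c p'(s) q(t) - d p(s) q'(t)` is the `u`-derivative of `p(s) q(t)`: averaging turns the raising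
operators in `s` and `t` into `c` and `-d` times the raising operator in `u`. -/
lemma gaussianFiber_raise_left (h : c ^ 2 + d ^ 2 = 1) (u : ℂ) (p q : ℂ[X]) :
    gaussianFiber c d u (2 * X * p - derivative p) q =
      c * (2 * u * gaussianFiber c d u p q - (c * gaussianFiber c d u (derivative p) q -
        d * gaussianFiber c d u p (derivative q))) := by
  have expand : gaussianFiber c d u (2 * X * p - derivative p) q =
      2 * c * u * gaussianFiber c d u p q +
        d * gaussianFunctional
          (2 * X * (p.comp (C (c * u) + C d * X) * q.comp (C c * X - C (d * u)))) -
        gaussianFiber c d u (derivative p) q := by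
    simp only [gaussianFiber, ← gaussianFunctional_C_mul, ← map_add, ← map_sub]
    congr 1
    simp only [sub_comp, mul_comp, X_comp, ofNat_comp, C_mul, C_ofNat]
    ring
  rw [expand, gaussianFunctional_two_mul_X_mul_comp]
  linear_combination gaussianFiber c d u (derivative p) q * h

lemma gaussianFiber_raise_right (h : c ^ 2 + d ^ 2 = 1) (u : ℂ) (p q : ℂ[X]) :
    gaussianFiber c d u p (2 * X * q - derivative q) =
      -d * (2 * u * gaussianFiber c d u p q - (c * gaussianFiber c d u (derivative p) q -
        d * gaussianFiber c d u p (derivative q))) := by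
  have expand : gaussianFiber c d u p (2 * X * q - derivative q) =
      -2 * d * u * gaussianFiber c d u p q +
        c * gaussianFunctional
          (2 * X * (p.comp (C (c * u) + C d * X) * q.comp (C c * X - C (d * u)))) -
        gaussianFiber c d u p (derivative q) := by
    simp only [gaussianFiber, ← gaussianFunctional_C_mul, ← map_add, ← map_sub]
    congr 1
    simp only [sub_comp, mul_comp, X_comp, ofNat_comp, C_mul, C_neg, C_ofNat]
    ring
  rw [expand, gaussianFunctional_two_mul_X_mul_comp]
  linear_combination gaussianFiber c d u p (derivative q) * h

lemma gaussianFiber_natCast_mul_left (u : ℂ) (n : ℕ) (p q : ℂ[X]) :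
    gaussianFiber c d u (n * p) q = n * gaussianFiber c d u p q := by
  rw [gaussianFiber, gaussianFiber, mul_comp, natCast_comp, mul_assoc, ← nsmul_eq_mul, map_nsmul,
    nsmul_eq_mul]

lemma gaussianFiber_natCast_mul_right (u : ℂ) (n : ℕ) (p q : ℂ[X]) :
    gaussianFiber c d u p (n * q) = n * gaussianFiber c d u p q := by
  rw [gaussianFiber, gaussianFiber, mul_comp, natCast_comp, mul_left_comm, ← nsmul_eq_mul,
    map_nsmul, nsmul_eq_mul]

lemma gaussianFiber_one_one (u : ℂ) : gaussianFiber c d u 1 1 = √Real.pi := by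
  rw [gaussianFiber, one_comp, one_comp, mul_one, gaussianFunctional_one]

lemma gaussianFiber_lower_physHermitePoly (u : ℂ) {ℓ m : ℕ}
    (ih : ∀ i j, i + j + 1 = ℓ + m →
      gaussianFiber c d u (physHermitePoly ℂ i) (physHermitePoly ℂ j) =
        √Real.pi * c ^ i * (-d) ^ j * (physHermitePoly ℂ (i + j)).eval u) :
    c * gaussianFiber c d u (derivative (physHermitePoly ℂ ℓ)) (physHermitePoly ℂ m) -
        d * gaussianFiber c d u (physHermitePoly ℂ ℓ) (derivative (physHermitePoly ℂ m)) =
      √Real.pi * c ^ ℓ * (-d) ^ m * (derivative (physHermitePoly ℂ (ℓ + m))).eval u := by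
  have left : ℓ * (c * gaussianFiber c d u (physHermitePoly ℂ (ℓ - 1)) (physHermitePoly ℂ m)) =
      ℓ * (√Real.pi * c ^ ℓ * (-d) ^ m * (physHermitePoly ℂ (ℓ + m - 1)).eval u) := by
    cases ℓ with
    | zero => simp only [Nat.cast_zero, zero_mul]
    | succ i =>
      rw [Nat.add_sub_cancel, ih i m (by omega), show i + 1 + m - 1 = i + m by omega]
      ring
  have right : m * (d * gaussianFiber c d u (physHermitePoly ℂ ℓ) (physHermitePoly ℂ (m - 1))) =
      -(m * (√Real.pi * c ^ ℓ * (-d) ^ m * (physHermitePoly ℂ (ℓ + m - 1)).eval u)) := by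
    cases m with
    | zero => simp only [Nat.cast_zero, zero_mul, neg_zero]
    | succ j =>
      rw [Nat.add_sub_cancel, ih ℓ j (by omega), ← add_assoc, Nat.add_sub_cancel]
      ring
  simp only [derivative_physHermitePoly, gaussianFiber_natCast_mul_left,
    gaussianFiber_natCast_mul_right, eval_mul, eval_natCast]
  push_cast
  linear_combination 2 * left - 2 * right

theorem gaussianFiber_physHermitePoly (h : c ^ 2 + d ^ 2 = 1) (u : ℂ) (ℓ m : ℕ) :
    gaussianFiber c d u (physHermitePoly ℂ ℓ) (physHermitePoly ℂ m) =
      √Real.pi * c ^ ℓ * (-d) ^ m * (physHermitePoly ℂ (ℓ + m)).eval u := by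
  have raise (n : ℕ) : (physHermitePoly ℂ (n + 1)).eval u =
      2 * u * (physHermitePoly ℂ n).eval u - (derivative (physHermitePoly ℂ n)).eval u := by
    simp only [physHermitePoly_succ, eval_sub, eval_mul, eval_ofNat, eval_X]
  induction hN : ℓ + m using Nat.strong_induction_on generalizing ℓ m with | _ N ih
  subst hN
  have lower (i j : ℕ) (hij : i + j < ℓ + m) :=
    gaussianFiber_lower_physHermitePoly (c := c) (d := d) u (ℓ := i) (m := j)
      fun k l hkl => ih _ (by omega) k l rfl
  obtain _ | ℓ := ℓ
  · obtain _ | m := m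
    · simp only [physHermitePoly, gaussianFiber_one_one, pow_zero, mul_one, eval_one]
    · rw [physHermitePoly_succ ℂ m, gaussianFiber_raise_right h, ih _ (by omega) 0 m rfl,
        lower 0 m (by omega), ← add_assoc, raise]
      ring
  · rw [physHermitePoly_succ ℂ ℓ, gaussianFiber_raise_left h, ih _ (by omega) ℓ m rfl,
      lower ℓ m (by omega), add_right_comm, raise]
    ring

end GaussianFiber

section Rotation

/-- The rotation `(u, v) ↦ (s, t) = (c u + d v, c v - d u)`, for which `c s - d t = u`. The plane is
`ℝ × ℝ`, whose volume is the product measure, so that Fubini applies on both sides. -/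
noncomputable def planeRotation (c d : ℝ) (h : c ^ 2 + d ^ 2 = 1) : (ℝ × ℝ) ≃ₗ[ℝ] ℝ × ℝ where
  toFun z := (c * z.1 + d * z.2, c * z.2 - d * z.1)
  invFun z := (c * z.1 - d * z.2, c * z.2 + d * z.1)
  map_add' z w := by ext <;> simp only [Prod.fst_add, Prod.snd_add] <;> ring
  map_smul' a z := by
    ext <;> simp only [Prod.smul_fst, Prod.smul_snd, smul_eq_mul, RingHom.id_apply] <;> ring
  left_inv z := by
    ext
    · linear_combination z.1 * h
    · linear_combination z.2 * h
  right_inv z := by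
    ext
    · linear_combination z.1 * h
    · linear_combination z.2 * h

variable {c d : ℝ} (h : c ^ 2 + d ^ 2 = 1)

lemma planeRotation_apply (z : ℝ × ℝ) :
    planeRotation c d h z = (c * z.1 + d * z.2, c * z.2 - d * z.1) := rfl

lemma det_planeRotation : LinearMap.det (planeRotation c d h : (ℝ × ℝ) →ₗ[ℝ] ℝ × ℝ) = 1 := by
  rw [← LinearMap.det_toMatrix (Module.Basis.finTwoProd ℝ), Matrix.det_fin_two]
  simp only [LinearMap.toMatrix_apply, Module.Basis.finTwoProd_zero, Module.Basis.finTwoProd_one,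
    Module.Basis.coe_finTwoProd_repr, LinearEquiv.coe_coe, planeRotation_apply,
    Matrix.cons_val_zero, Matrix.cons_val_one, mul_one, mul_zero, add_zero, zero_add, zero_sub,
    sub_zero]
  linear_combination h

lemma measurePreserving_of_abs_det_eq_one {E : Type*} [NormedAddCommGroup E] [NormedSpace ℝ E]
    [MeasurableSpace E] [BorelSpace E] [FiniteDimensional ℝ E] (μ : Measure E)
    [μ.IsAddHaarMeasure] {f : E →ₗ[ℝ] E} (hf : |LinearMap.det f| = 1) :
    MeasurePreserving f μ μ := by
  refine ⟨f.continuous_of_finiteDimensional.measurable, ?_⟩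
  rw [Measure.map_linearMap_addHaar_eq_smul_addHaar μ (abs_pos.1 (hf ▸ one_pos)), abs_inv, hf,
    inv_one, ENNReal.ofReal_one, one_smul]

lemma measurePreserving_planeRotation : MeasurePreserving (planeRotation c d h) volume volume :=
  measurePreserving_of_abs_det_eq_one volume (by rw [det_planeRotation, abs_one])

lemma measurableEmbedding_planeRotation : MeasurableEmbedding (planeRotation c d h) :=
  (planeRotation c d h).toContinuousLinearEquiv.toHomeomorph.measurableEmbedding

end Rotation

section RidgeFunction

lemma integral_ridge_mul_eval {φ : ℝ → ℂ}
    (hφ : HasAllMoments fun u => φ u * (Real.exp (-u ^ 2) : ℂ)) {c d : ℝ} (h : c ^ 2 + d ^ 2 = 1)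
    (p q : ℂ[X]) :
    ∫ s : ℝ, ∫ t : ℝ, φ (c * s - d * t) * (Real.exp (-s ^ 2 - t ^ 2) : ℂ) *
        p.eval (s : ℂ) * q.eval (t : ℂ) =
      ∫ u : ℝ, φ u * (Real.exp (-u ^ 2) : ℂ) * gaussianFiber c d u p q := by
  set F : ℝ × ℝ → ℂ := fun z => φ (c * z.1 - d * z.2) * (Real.exp (-z.1 ^ 2 - z.2 ^ 2) : ℂ) *
    p.eval (z.1 : ℂ) * q.eval (z.2 : ℂ)
  set G : ℝ × ℝ → ℂ := fun z => φ z.1 * (Real.exp (-z.1 ^ 2) : ℂ) * (Real.exp (-z.2 ^ 2) : ℂ) *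
    (p.eval ((c : ℂ) * z.1 + d * z.2) * q.eval ((c : ℂ) * z.2 - d * z.1))
  have F_rotate : F ∘ planeRotation c d h = G := by
    funext z
    have ridge : c * (c * z.1 + d * z.2) - d * (c * z.2 - d * z.1) = z.1 := by
      linear_combination z.1 * h
    have radius : -(c * z.1 + d * z.2) ^ 2 - (c * z.2 - d * z.1) ^ 2 = -z.1 ^ 2 + -z.2 ^ 2 := by
      linear_combination (-z.1 ^ 2 - z.2 ^ 2) * h
    simp only [F, G, Function.comp_apply, planeRotation_apply, ridge, radius, Real.exp_add]
    push_cast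
    ring
  have G_integrable : Integrable G :=
    (hφ.integrable_mul_eval_mul_eval hasAllMoments_gaussian c d (-d) c p q).congr
      (.of_forall fun z => by simp only [G]; ring_nf)
  have F_integrable : Integrable F := by
    rwa [← (measurePreserving_planeRotation h).integrable_comp_emb
      (measurableEmbedding_planeRotation h), F_rotate]
  calc ∫ s : ℝ, ∫ t : ℝ, F (s, t) = ∫ z, F z := (integral_prod F F_integrable).symm
    _ = ∫ z, F (planeRotation c d h z) :=
      ((measurePreserving_planeRotation h).integral_comp
        (measurableEmbedding_planeRotation h) F).symm
    _ = ∫ z, G z := by rw [← F_rotate]; rfl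
    _ = ∫ u : ℝ, ∫ v : ℝ, G (u, v) := integral_prod G G_integrable
    _ = ∫ u : ℝ, φ u * (Real.exp (-u ^ 2) : ℂ) * gaussianFiber c d u p q := by
      simp only [G, gaussianFiber_eq_integral, ← integral_const_mul, mul_assoc]

theorem integral_ridge_mul_physHermite {φ : ℝ → ℂ}
    (hφ : HasAllMoments fun u => φ u * (Real.exp (-u ^ 2) : ℂ)) {c d : ℝ} (h : c ^ 2 + d ^ 2 = 1)
    (ℓ m : ℕ) :
    ∫ s : ℝ, ∫ t : ℝ, φ (c * s - d * t) * (Real.exp (-s ^ 2 - t ^ 2) : ℂ) *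
        (physHermite ℓ s : ℂ) * (physHermite m t : ℂ) =
      √Real.pi * c ^ ℓ * (-d) ^ m * momentFunctional hφ (physHermitePoly ℂ (ℓ + m)) := by
  have h' : (c : ℂ) ^ 2 + (d : ℂ) ^ 2 = 1 := by exact_mod_cast h
  simp only [ofReal_physHermite]
  rw [integral_ridge_mul_eval hφ h, momentFunctional_apply, ← integral_const_mul]
  simp only [gaussianFiber_physHermitePoly h', mul_left_comm]

end RidgeFunction

lemma ofReal_abs_mul_cpow {r : ℝ} (hr : 0 ≤ r) (u : ℝ) (z : ℂ) :
    ((|r * u| : ℝ) : ℂ) ^ z = (r : ℂ) ^ z * ((|u| : ℝ) : ℂ) ^ z := by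
  rw [abs_mul, abs_of_nonneg hr, Complex.ofReal_mul,
    Complex.mul_cpow_ofReal_nonneg hr (abs_nonneg u)]

lemma ofReal_sq_cpow_sub_half {r : ℝ} (hr : 0 < r) (ν : ℂ) (N : ℕ) :
    ((r ^ 2 : ℝ) : ℂ) ^ (ν - N / 2) = (r : ℂ) ^ (2 * ν) * (r : ℂ)⁻¹ ^ N := by
  have hr' : (r : ℂ) ≠ 0 := Complex.ofReal_ne_zero.2 hr.ne'
  rw [sq, Complex.ofReal_mul, Complex.mul_cpow_ofReal_nonneg hr.le hr.le,
    ← Complex.cpow_add _ _ hr', ← two_mul, mul_sub, mul_div_cancel₀ _ (two_ne_zero' ℂ),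
    Complex.cpow_sub _ _ hr', Complex.cpow_natCast, div_eq_mul_inv, inv_pow]

lemma neg_one_zpow_half_sub {ℓ m n : ℕ} (h : ℓ + m = 2 * n) :
    (-1 : ℂ) ^ (((ℓ : ℤ) - m) / 2) = (-1) ^ n * (-1) ^ m := by
  rw [show ((ℓ : ℤ) - m) / 2 = n - m by omega, zpow_sub₀ (neg_ne_zero.2 one_ne_zero),
    zpow_natCast, zpow_natCast, div_eq_mul_inv, ← inv_pow, inv_neg_one]

theorem integral_abs_sub_cpow_mul_physHermite {ν : ℂ} (hν : -1 / 2 < ν.re) {c d : ℝ}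
    (h : c ^ 2 + d ^ 2 = 1) {ℓ m n : ℕ} (hn : ℓ + m = 2 * n) :
    ∫ s : ℝ, ∫ t : ℝ, ((|c * s - d * t| : ℝ) : ℂ) ^ (2 * ν) * (Real.exp (-s ^ 2 - t ^ 2) : ℂ) *
        (physHermite ℓ s : ℂ) * (physHermite m t : ℂ) =
      √Real.pi * c ^ ℓ * (-d) ^ m *
        ((ascPochhammer ℂ n).eval (-ν) * (-4) ^ n * Complex.Gamma (1 / 2 + ν)) := by
  rw [← momentFunctional_absPowGaussian_physHermitePoly_two_mul hν, ← hn]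
  exact integral_ridge_mul_physHermite (hasAllMoments_absPowGaussian hν) h ℓ m

theorem stmt12_general (ℓ m : ℕ) (hpar : Even (ℓ + m)) (ν : ℂ) (hν : -1 / 2 < ν.re) (x : ℝ) :
    (∫ s : ℝ, ∫ t : ℝ,
        ((|s - x * t| : ℝ) : ℂ) ^ (2 * ν) * (Real.exp (-s ^ 2 - t ^ 2) : ℂ) *
          (physHermite ℓ s : ℂ) * (physHermite m t : ℂ)) =
      (ascPochhammer ℂ ((ℓ + m) / 2)).eval (-ν) * (-1 : ℂ) ^ (((ℓ : ℤ) - (m : ℤ)) / 2) *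
        (2 : ℂ) ^ (ℓ + m) * (Real.sqrt Real.pi : ℂ) * Complex.Gamma (1 / 2 + ν) *
        ((x ^ 2 + 1 : ℝ) : ℂ) ^ (ν - ((ℓ : ℂ) + (m : ℂ)) / 2) * (x : ℂ) ^ m := by
  obtain ⟨n, hn⟩ := hpar.two_dvd
  obtain ⟨r, hr, hrx⟩ : ∃ r : ℝ, 0 < r ∧ r ^ 2 = x ^ 2 + 1 :=
    ⟨√(x ^ 2 + 1), by positivity, Real.sq_sqrt (by positivity)⟩
  have unit_direction : r⁻¹ ^ 2 + (x * r⁻¹) ^ 2 = 1 := by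
    field_simp
    linear_combination -hrx
  have ridge (s t : ℝ) : ((|s - x * t| : ℝ) : ℂ) ^ (2 * ν) =
      (r : ℂ) ^ (2 * ν) * ((|r⁻¹ * s - x * r⁻¹ * t| : ℝ) : ℂ) ^ (2 * ν) := by
    rw [← ofReal_abs_mul_cpow hr.le]
    congr 3
    field_simp
  have power : ((x ^ 2 + 1 : ℝ) : ℂ) ^ (ν - ((ℓ : ℂ) + m) / 2) =
      (r : ℂ) ^ (2 * ν) * (r : ℂ)⁻¹ ^ (ℓ + m) := by
    rw [← hrx, ← Nat.cast_add, ofReal_sq_cpow_sub_half hr]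
  simp only [ridge, mul_assoc ((r : ℂ) ^ (2 * ν)), integral_const_mul]
  rw [integral_abs_sub_cpow_mul_physHermite hν unit_direction hn, hn,
    Nat.mul_div_cancel_left n two_pos, neg_one_zpow_half_sub hn, power, pow_mul, neg_pow (4 : ℂ)]
  push_cast
  ring

theorem stmt12 (ℓ m : ℕ) (hpar : Even (ℓ + m)) (ν : ℂ) (hν : 0 < ν.re) (x : ℝ)
    (hx : -1 ≤ x) (hx' : x ≤ 1) :
    (∫ s : ℝ, ∫ t : ℝ,
        ((|s - x * t| : ℝ) : ℂ) ^ (2 * ν) * (Real.exp (-s ^ 2 - t ^ 2) : ℂ) *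
          (physHermite ℓ s : ℂ) * (physHermite m t : ℂ)) =
      (ascPochhammer ℂ ((ℓ + m) / 2)).eval (-ν) * (-1 : ℂ) ^ (((ℓ : ℤ) - (m : ℤ)) / 2) *
        (2 : ℂ) ^ (ℓ + m) * (Real.sqrt Real.pi : ℂ) * Complex.Gamma (1 / 2 + ν) *
        ((x ^ 2 + 1 : ℝ) : ℂ) ^ (ν - ((ℓ : ℂ) + (m : ℂ)) / 2) * (x : ℂ) ^ m :=
  stmt12_general ℓ m hpar ν (by linarith) x
end

section
/- Suppose λ, μ, ν ∈ ℂ with Re λ > −1/2, Re μ > −1/2 and Re ν > 0. Then ∫_{−1}^1 ∫_{−1}^1 |s − t|^{2ν} (1 − s²)^{λ−1/2} (1 − t²)^{μ−1/2} ds dt = π^{1/2} Γ(λ + 1/2) Γ(μ + 1/2) Γ(ν + 1/2) Γ(λ + μ + 2ν + 1) / (Γ(λ + ν + 1) Γ(μ + ν + 1) Γ(λ + μ + ν + 1)). -/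
open MeasureTheory intervalIntegral

/-!
Write `E a b` for the double integral with exponents `a = λ - 1 / 2` and `b = μ - 1 / 2`. For
linear `P` and `Q`, the integrand multiplied by the vector field `((1 - s²) P, (1 - t²) Q)` has no
flux through the boundary of the square, so its divergence integrates to zero; a suitable choice
of `P` and `Q` turns this into a two-term recurrence between `E (a + 1) b` and `E a b`. An
explicit quotient of Gamma functions satisfies the same recurrence, so the ratio of the two is
unchanged under `a ↦ a + 1` and can be evaluated at `a + n` as `n → ∞`. There the weight in `s`
concentrates at `s = 0`, which leaves a single beta integral in `t`, and the limit of the Gamma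
quotient follows from Euler's limit formula.
-/

noncomputable section

open Filter Set Topology
open scoped Pointwise

local notation "ρ" => Measure.restrict (volume : Measure ℝ) (Set.Icc (-1) 1)

section GammaAsymptotics

open Complex

theorem Gamma_add_natCast {s : ℂ} (hs : ∀ m : ℕ, s ≠ -m) (n : ℕ) :
    Gamma (s + n) = Gamma s * ∏ j ∈ Finset.range n, (s + j) := by
  induction n with
  | zero => simp
  | succ n ih =>
    have hsn : s + n ≠ 0 := fun h ↦ hs n (eq_neg_of_add_eq_zero_left h)
    rw [Finset.prod_range_succ, ← mul_assoc, ← ih, Nat.cast_succ, ← add_assoc,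
      Gamma_add_one _ hsn, mul_comm]

theorem tendsto_Gamma_add_natCast_div {s : ℂ} (hs : ∀ m : ℕ, s ≠ -m) :
    Tendsto (fun n : ℕ ↦ Gamma (s + n) / ((n : ℂ) ^ (s - 1) * n.factorial)) atTop (𝓝 1) := by
  have hΓ : Gamma s ≠ 0 := Gamma_ne_zero hs
  have hseq : Tendsto (fun n : ℕ ↦ Gamma s / GammaSeq s n) atTop (𝓝 1) := by
    have h := (tendsto_const_nhds (x := Gamma s)).div (GammaSeq_tendsto_Gamma s) hΓ
    rwa [div_self hΓ] at h
  have hratio : Tendsto (fun n : ℕ ↦ (n : ℂ) / (n + s)) atTop (𝓝 1) :=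
    tendsto_natCast_div_add_atTop s
  have h := hseq.mul hratio
  rw [one_mul] at h
  refine h.congr' ?_
  filter_upwards [eventually_ne_atTop 0] with n hn
  have hn : (n : ℂ) ≠ 0 := Nat.cast_ne_zero.mpr hn
  have hsn (j : ℕ) : s + j ≠ 0 := fun h ↦ hs j (eq_neg_of_add_eq_zero_left h)
  have hprod : ∏ j ∈ Finset.range n, (s + j) ≠ 0 := Finset.prod_ne_zero_iff.mpr fun j _ ↦ hsn j
  have hpow : (n : ℂ) ^ s = (n : ℂ) ^ (s - 1) * n := by
    rw [cpow_sub _ _ hn, cpow_one, div_mul_cancel₀ _ hn]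
  have hpow_ne : (n : ℂ) ^ (s - 1) ≠ 0 := by simp [cpow_eq_zero_iff, hn]
  have := hsn n
  rw [Gamma_add_natCast hs, GammaSeq, Finset.prod_range_succ, hpow, add_comm (n : ℂ) s]
  field_simp

theorem tendsto_prod_Gamma_add_natCast_div {ι : Type*} (t : Finset ι) {u v : ι → ℂ}
    (hu : ∀ i ∈ t, ∀ m : ℕ, u i ≠ -m) (hv : ∀ i ∈ t, ∀ m : ℕ, v i ≠ -m)
    (huv : ∑ i ∈ t, u i = ∑ i ∈ t, v i) :
    Tendsto (fun n : ℕ ↦ ∏ i ∈ t, Gamma (u i + n) / Gamma (v i + n)) atTop (𝓝 1) := by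
  have hlim := tendsto_finsetProd t fun i hi ↦
    (tendsto_Gamma_add_natCast_div (hu i hi)).div (tendsto_Gamma_add_natCast_div (hv i hi))
      one_ne_zero
  rw [div_one, Finset.prod_const_one] at hlim
  refine hlim.congr' ?_
  filter_upwards [eventually_ne_atTop 0] with n hn
  have hn : (n : ℂ) ≠ 0 := Nat.cast_ne_zero.mpr hn
  have hfact : (n.factorial : ℂ) ≠ 0 := Nat.cast_ne_zero.mpr n.factorial_ne_zero
  have hpow : ∏ i ∈ t, (n : ℂ) ^ (u i - 1) = ∏ i ∈ t, (n : ℂ) ^ (v i - 1) := by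
    simp only [cpow_def_of_ne_zero hn, ← Complex.exp_sum, ← Finset.mul_sum,
      Finset.sum_sub_distrib, huv]
  have hpow_ne : ∏ i ∈ t, (n : ℂ) ^ (v i - 1) ≠ 0 := by
    simp [Finset.prod_ne_zero_iff, cpow_eq_zero_iff, hn]
  have hfact_ne : ∏ _i ∈ t, (n.factorial : ℂ) ≠ 0 := Finset.prod_ne_zero_iff.mpr fun _ _ ↦ hfact
  simp only [Pi.div_apply, Finset.prod_div_distrib, Finset.prod_mul_distrib, hpow]
  exact div_div_div_cancel_right₀ (mul_ne_zero hpow_ne hfact_ne) _ _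

end GammaAsymptotics

section IntervalIntegrals

variable {E : Type*} [NormedAddCommGroup E] {f : ℝ → E} {a : ℝ}

theorem intervalIntegrable_neg_zero_of_even (hf : f.Even)
    (h : IntervalIntegrable f volume 0 a) : IntervalIntegrable f volume (-a) 0 := by
  simpa [hf _] using ((IntervalIntegrable.iff_comp_neg (by finiteness)).mp h).symm

theorem intervalIntegrable_neg_self_of_even (hf : f.Even)
    (h : IntervalIntegrable f volume 0 a) : IntervalIntegrable f volume (-a) a :=
  (intervalIntegrable_neg_zero_of_even hf h).trans h

theorem integral_neg_self_of_even [NormedSpace ℝ E] (hf : f.Even)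
    (h : IntervalIntegrable f volume 0 a) :
    ∫ x in -a..a, f x = (2 : ℝ) • ∫ x in 0..a, f x := by
  have hneg : ∫ x in -a..0, f x = ∫ x in 0..a, f x := by
    simpa [hf _] using (intervalIntegral.integral_comp_neg f (a := 0) (b := a)).symm
  rw [← integral_add_adjacent_intervals (intervalIntegrable_neg_zero_of_even hf h) h, hneg,
    two_smul]

theorem image_sq_Ioo_zero_one : (fun x : ℝ ↦ x ^ 2) '' Set.Ioo 0 1 = Set.Ioo 0 1 := by
  ext y
  constructor
  · rintro ⟨x, ⟨hx0, hx1⟩, rfl⟩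
    exact ⟨by positivity, pow_lt_one₀ hx0.le hx1 two_ne_zero⟩
  · rintro ⟨hy0, hy1⟩
    exact ⟨√y, ⟨Real.sqrt_pos.mpr hy0, by rwa [Real.sqrt_lt' one_pos, one_pow]⟩,
      Real.sq_sqrt hy0.le⟩

theorem injOn_sq_Ioo_zero_one : InjOn (fun x : ℝ ↦ x ^ 2) (Ioo 0 1) :=
  fun _ hx _ hy hxy ↦ (sq_eq_sq₀ hx.1.le hy.1.le).mp hxy

theorem integrableOn_Ioo_iff_comp_sq [NormedSpace ℝ E] :
    IntegrableOn f (Ioo 0 1) ↔ IntegrableOn (fun x ↦ |2 * x| • f (x ^ 2)) (Ioo 0 1) := by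
  conv_lhs => rw [← image_sq_Ioo_zero_one]
  exact integrableOn_image_iff_integrableOn_abs_deriv_smul measurableSet_Ioo
    (fun x _ ↦ by simpa using (hasDerivAt_pow 2 x).hasDerivWithinAt) injOn_sq_Ioo_zero_one f

theorem integral_Ioo_comp_sq [NormedSpace ℝ E] :
    ∫ x in Ioo 0 1, |2 * x| • f (x ^ 2) = ∫ x in Ioo 0 1, f x := by
  conv_rhs => rw [← image_sq_Ioo_zero_one]
  exact (integral_image_eq_integral_abs_deriv_smul measurableSet_Ioo
    (fun x _ ↦ by simpa using (hasDerivAt_pow 2 x).hasDerivWithinAt) injOn_sq_Ioo_zero_one f).symm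

end IntervalIntegrals

section CompactConvolution

variable {G 𝕜 : Type*} [AddCommGroup G] [TopologicalSpace G] [IsTopologicalAddGroup G] [T2Space G]
  [SecondCountableTopology G] [MeasurableSpace G] [BorelSpace G] {μ : Measure G}
  [RCLike 𝕜] {s t : Set G} {g h : G → 𝕜}

theorem integrable_prod_mul_comp_sub [SFinite μ] [μ.IsAddLeftInvariant] (hs : IsCompact s)
    (ht : IsCompact t) (hg : IntegrableOn g t μ) (hh : LocallyIntegrable h μ) :
    Integrable (fun z : G × G ↦ g z.2 * h (z.1 - z.2))
      ((μ.restrict s).prod (μ.restrict t)) := by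
  have hst : IsCompact (s - t) := by simpa only [sub_eq_add_neg] using hs.add ht.neg
  have hconv := ((integrable_indicator_iff ht.measurableSet).mpr hg).convolution_integrand
    (ContinuousLinearMap.mul ℝ 𝕜)
    ((integrable_indicator_iff hst.measurableSet).mpr
      (hh.integrableOn_isCompact hst))
  rw [Measure.prod_restrict]
  refine hconv.integrableOn.congr_fun (fun z hz ↦ ?_) (hs.measurableSet.prod ht.measurableSet)
  simp only [ContinuousLinearMap.mul_apply', indicator_of_mem hz.2,
    indicator_of_mem (Set.sub_mem_sub hz.1 hz.2)]

theorem continuousOn_setIntegral_mul_comp_sub (hs : IsCompact s) (ht : IsCompact t)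
    (hg : IntegrableOn g t μ) (hh : Continuous h) :
    ContinuousOn (fun x ↦ ∫ y in t, g y * h (x - y) ∂μ) s := by
  have hst : IsCompact (s - t) := by simpa only [sub_eq_add_neg] using hs.add ht.neg
  obtain ⟨C, hC⟩ := hst.exists_bound_of_continuousOn hh.continuousOn
  apply continuousOn_of_dominated (bound := fun y ↦ ‖g y‖ * C)
  · intro x _
    exact hg.1.mul (by fun_prop)
  · intro x hx
    filter_upwards [ae_restrict_mem ht.measurableSet] with y hy
    rw [norm_mul]
    gcongr
    exact hC _ (Set.sub_mem_sub hx hy)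
  · exact hg.norm.mul_const C
  · exact ae_of_all _ fun y ↦ by fun_prop

end CompactConvolution

theorem ne_neg_one_of_neg_one_lt_re {a : ℂ} (ha : -1 < a.re) : a ≠ -1 := by
  rintro rfl
  simp at ha

theorem neg_one_lt_re_add_natCast {a : ℂ} (ha : -1 < a.re) (n : ℕ) : -1 < (a + n).re := by
  simpa using lt_add_of_lt_of_nonneg ha n.cast_nonneg

theorem neg_one_lt_re_add_one {a : ℂ} (ha : -1 < a.re) : -1 < (a + 1).re :=
  mod_cast neg_one_lt_re_add_natCast ha 1

theorem ne_neg_natCast_of_re_pos {s : ℂ} (hs : 0 < s.re) (m : ℕ) : s ≠ -m := by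
  rintro rfl
  simp [m.cast_nonneg.not_gt] at hs

theorem cpow_add_one {a : ℂ} (ha : a ≠ -1) (x : ℂ) : x ^ (a + 1) = x * x ^ a := by
  rcases eq_or_ne x 0 with rfl | hx
  · rw [Complex.zero_cpow (by rwa [ne_eq, add_eq_zero_iff_eq_neg]), zero_mul]
  · rw [Complex.cpow_add _ _ hx, Complex.cpow_one, mul_comm]

/-- The Gegenbauer weight `(1 - s²) ^ a` on `[-1, 1]`; the classical parameter is `a + 1 / 2`. -/
def gegenbauerWeight (a : ℂ) (s : ℝ) : ℂ := ((1 - s ^ 2 : ℝ) : ℂ) ^ a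

/-- The Riesz kernel `|u| ^ k` on the line. -/
def rieszKernel (k : ℂ) (u : ℝ) : ℂ := ((|u| : ℝ) : ℂ) ^ k

section Weight

variable {a : ℂ}

theorem even_gegenbauerWeight : (gegenbauerWeight a).Even := fun s ↦ by
  rw [gegenbauerWeight, gegenbauerWeight, neg_sq]

theorem gegenbauerWeight_add_one (ha : a ≠ -1) (s : ℝ) :
    gegenbauerWeight (a + 1) s = (1 - (s : ℂ) ^ 2) * gegenbauerWeight a s := by
  rw [gegenbauerWeight, gegenbauerWeight, cpow_add_one ha]
  push_cast
  rfl

theorem continuous_gegenbauerWeight (ha : 0 < a.re) : Continuous (gegenbauerWeight a) :=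
  (Complex.continuous_ofReal_cpow_const ha).comp (by fun_prop)

theorem hasDerivAt_gegenbauerWeight (ha : a ≠ -1) {s : ℝ} (hs : 1 - s ^ 2 ≠ 0) :
    HasDerivAt (gegenbauerWeight (a + 1)) (-(2 * (a + 1) * s) * gegenbauerWeight a s) s := by
  have ha' : a + 1 ≠ 0 := by rwa [ne_eq, add_eq_zero_iff_eq_neg]
  have h := (hasDerivAt_ofReal_cpow_const hs ha').scomp s ((hasDerivAt_pow 2 s).const_sub 1)
  refine h.congr_deriv ?_
  rw [gegenbauerWeight, Complex.real_smul, add_sub_cancel_right]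
  push_cast
  ring

end Weight

section Kernel

variable {k : ℂ}

theorem even_rieszKernel : (rieszKernel k).Even := fun u ↦ by
  rw [rieszKernel, rieszKernel, abs_neg]

theorem continuous_rieszKernel (hk : 0 < k.re) : Continuous (rieszKernel k) :=
  (Complex.continuous_ofReal_cpow_const hk).comp continuous_abs

theorem sq_mul_rieszKernel_sub_two (hk : k ≠ 0) (u : ℝ) :
    (u : ℂ) ^ 2 * rieszKernel (k - 2) u = rieszKernel k u := by
  rcases eq_or_ne u 0 with rfl | hu
  · simp [rieszKernel, hk]
  · have hu' : ((|u| : ℝ) : ℂ) ≠ 0 := mod_cast abs_ne_zero.mpr hu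
    have hsq : (u : ℂ) ^ 2 = ((|u| : ℝ) : ℂ) ^ 2 := mod_cast (sq_abs u).symm
    rw [rieszKernel, rieszKernel, Complex.cpow_sub _ _ hu', Complex.cpow_ofNat, hsq,
      mul_div_cancel₀ _ (pow_ne_zero 2 hu')]

theorem hasDerivAt_rieszKernel (hk : k ≠ 0) {u : ℝ} (hu : u ≠ 0) :
    HasDerivAt (rieszKernel k) (k * (u * rieszKernel (k - 2) u)) u := by
  have hu' : ((|u| : ℝ) : ℂ) ≠ 0 := mod_cast abs_ne_zero.mpr hu
  have h := (hasDerivAt_ofReal_cpow_const (abs_ne_zero.mpr hu) hk).scomp u (hasDerivAt_abs hu)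
  have hsign : (u : ℂ) = (SignType.sign u : ℝ) * (|u| : ℝ) := mod_cast (sign_mul_abs u).symm
  refine h.congr_deriv ?_
  rw [Complex.real_smul, rieszKernel, hsign, show k - 1 = k - 2 + 1 by ring,
    Complex.cpow_add _ _ hu', Complex.cpow_one]
  ring

theorem locallyIntegrable_mul_rieszKernel_sub_two (hk : 0 < k.re) :
    LocallyIntegrable fun u : ℝ ↦ u * rieszKernel (k - 2) u := by
  have hpos (x : ℝ) (hx : 0 < x) :
      IntervalIntegrable (fun u : ℝ ↦ u * rieszKernel (k - 2) u) volume 0 x := by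
    have hcpow : IntervalIntegrable (fun u : ℝ ↦ (u : ℂ) ^ (k - 1)) volume 0 x :=
      intervalIntegrable_cpow' (by simpa using hk)
    refine hcpow.congr fun u hu ↦ ?_
    rw [uIoc_of_le hx.le] at hu
    have hu' : (u : ℂ) ≠ 0 := mod_cast hu.1.ne'
    rw [rieszKernel, abs_of_pos hu.1, show k - 1 = k - 2 + 1 by ring,
      Complex.cpow_add _ _ hu', Complex.cpow_one, mul_comm]
  refine fun x ↦ ⟨Ioc (x - 1) (x + 1), Ioc_mem_nhds (by linarith) (by linarith), ?_⟩
  rw [← intervalIntegrable_iff_integrableOn_Ioc_of_le (by linarith)]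
  refine intervalIntegrable_of_odd (fun u ↦ ?_) hpos
  simp only [even_rieszKernel u, Complex.ofReal_neg, neg_mul]

end Kernel

section Beta

variable {b k : ℂ}

theorem even_gegenbauerWeight_mul_rieszKernel :
    Function.Even fun t ↦ gegenbauerWeight b t * rieszKernel k t :=
  even_gegenbauerWeight.mul_even even_rieszKernel

theorem abs_smul_betaIntegrand_sq {x : ℝ} (hx : x ∈ Ioo (0 : ℝ) 1) :
    |2 * x| • (((x ^ 2 : ℝ) : ℂ) ^ ((k + 1) / 2 - 1) * (1 - ((x ^ 2 : ℝ) : ℂ)) ^ (b + 1 - 1)) =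
      2 * (gegenbauerWeight b x * rieszKernel k x) := by
  have hx' : (x : ℂ) ≠ 0 := mod_cast hx.1.ne'
  have hpow : x * ((x ^ 2 : ℝ) : ℂ) ^ ((k + 1) / 2 - 1) = x ^ k := by
    nth_rw 1 [← Complex.cpow_one (x : ℂ)]
    rw [sq, Complex.ofReal_mul, Complex.mul_cpow_ofReal_nonneg hx.1.le hx.1.le,
      ← Complex.cpow_add _ _ hx', ← Complex.cpow_add _ _ hx']
    ring_nf
  rw [rieszKernel, gegenbauerWeight, abs_of_pos hx.1, abs_of_pos (mul_pos two_pos hx.1), ← hpow,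
    Complex.real_smul, add_sub_cancel_right]
  push_cast
  ring

theorem intervalIntegrable_gegenbauerWeight_mul_rieszKernel (hb : -1 < b.re) (hk : -1 < k.re) :
    IntervalIntegrable (fun t ↦ gegenbauerWeight b t * rieszKernel k t) volume 0 1 := by
  have hbeta := Complex.betaIntegral_convergent (u := (k + 1) / 2) (v := b + 1)
    (by norm_num; linarith) (by norm_num; linarith)
  rw [intervalIntegrable_iff_integrableOn_Ioo_of_le zero_le_one] at hbeta ⊢
  rw [integrableOn_Ioo_iff_comp_sq,
    integrableOn_congr_fun (fun x hx ↦ abs_smul_betaIntegrand_sq hx) measurableSet_Ioo] at hbeta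
  exact (integrable_const_mul_iff (by simp) _).mp hbeta

theorem integrable_gegenbauerWeight_mul_rieszKernel (hb : -1 < b.re) (hk : -1 < k.re) :
    Integrable (fun t ↦ gegenbauerWeight b t * rieszKernel k t) ρ := by
  have h := intervalIntegrable_neg_self_of_even even_gegenbauerWeight_mul_rieszKernel
    (intervalIntegrable_gegenbauerWeight_mul_rieszKernel hb hk)
  rwa [intervalIntegrable_iff_integrableOn_Icc_of_le (by norm_num)] at h

theorem integral_gegenbauerWeight_mul_rieszKernel (hb : -1 < b.re) (hk : -1 < k.re) :
    ∫ t, gegenbauerWeight b t * rieszKernel k t ∂ρ =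
      Complex.betaIntegral ((k + 1) / 2) (b + 1) := by
  rw [integral_Icc_eq_integral_Ioc, ← integral_of_le (by norm_num),
    integral_neg_self_of_even even_gegenbauerWeight_mul_rieszKernel
      (intervalIntegrable_gegenbauerWeight_mul_rieszKernel hb hk), Complex.betaIntegral]
  simp only [integral_of_le zero_le_one, integral_Ioc_eq_integral_Ioo]
  rw [← integral_Ioo_comp_sq
    (f := fun x : ℝ ↦ (x : ℂ) ^ ((k + 1) / 2 - 1) * (1 - (x : ℂ)) ^ (b + 1 - 1)),
    setIntegral_congr_fun measurableSet_Ioo fun x hx ↦ abs_smul_betaIntegrand_sq hx,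
    MeasureTheory.integral_const_mul, Complex.real_smul, Complex.ofReal_ofNat]

theorem integrable_gegenbauerWeight (hb : -1 < b.re) : Integrable (gegenbauerWeight b) ρ := by
  simpa [rieszKernel] using integrable_gegenbauerWeight_mul_rieszKernel (k := 0) hb (by simp)

theorem integral_gegenbauerWeight (hb : -1 < b.re) :
    ∫ s, gegenbauerWeight b s ∂ρ = Complex.betaIntegral (1 / 2) (b + 1) := by
  simpa [rieszKernel] using integral_gegenbauerWeight_mul_rieszKernel (k := 0) hb (by simp)

end Beta


/-- The integrand of the mutual energy: two Gegenbauer weights coupled by a Riesz kernel. -/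
def energyDensity (a b k : ℂ) (z : ℝ × ℝ) : ℂ :=
  gegenbauerWeight a z.1 * gegenbauerWeight b z.2 * rieszKernel k (z.1 - z.2)

/-- The mutual Riesz energy of the Gegenbauer weights of exponents `a` and `b`. -/
def rieszEnergy (a b k : ℂ) : ℂ := ∫ z, energyDensity a b k z ∂(Measure.prod ρ ρ)

/-- The partial derivative in `z.1` of `G z * energyDensity (a + 1) b k z`, where `G'` is the
partial derivative of `G`. -/
def energyDivergence (a b k : ℂ) (G G' : ℝ × ℝ → ℂ) (z : ℝ × ℝ) : ℂ :=
  ((1 - (z.1 : ℂ) ^ 2) * G' z - 2 * (a + 1) * z.1 * G z) * energyDensity a b k z +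
    k * (1 - (z.1 : ℂ) ^ 2) * (z.1 - z.2) * G z * energyDensity a b (k - 2) z

section Energy

variable {a b k : ℂ}

theorem energyDensity_swap (z : ℝ × ℝ) : energyDensity b a k z.swap = energyDensity a b k z := by
  rw [energyDensity, energyDensity, Prod.fst_swap, Prod.snd_swap, ← neg_sub, even_rieszKernel,
    mul_comm (gegenbauerWeight b z.2)]

theorem energyDensity_add_one (ha : a ≠ -1) (z : ℝ × ℝ) :
    energyDensity (a + 1) b k z = (1 - (z.1 : ℂ) ^ 2) * energyDensity a b k z := by
  simp only [energyDensity, gegenbauerWeight_add_one ha, mul_assoc]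

theorem sq_mul_energyDensity_sub_two (hk : k ≠ 0) (z : ℝ × ℝ) :
    ((z.1 : ℂ) - z.2) ^ 2 * energyDensity a b (k - 2) z = energyDensity a b k z := by
  rw [energyDensity, energyDensity, ← sq_mul_rieszKernel_sub_two hk, Complex.ofReal_sub]
  ring

theorem integrable_continuous_mul {p f : ℝ × ℝ → ℂ} (hp : Continuous p)
    (hf : Integrable f (Measure.prod ρ ρ)) : Integrable (fun z ↦ p z * f z) (Measure.prod ρ ρ) := by
  rw [Measure.prod_restrict] at hf ⊢
  exact IntegrableOn.continuousOn_mul hp.continuousOn hf (isCompact_Icc.prod isCompact_Icc)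

theorem integrable_energyDensity (ha : -1 < a.re) (hb : -1 < b.re) (hk : 0 < k.re) :
    Integrable (energyDensity a b k) (Measure.prod ρ ρ) := by
  have hK : Continuous fun z : ℝ × ℝ ↦ rieszKernel k (z.1 - z.2) :=
    (continuous_rieszKernel hk).comp (by fun_prop)
  refine (integrable_continuous_mul hK ((integrable_gegenbauerWeight ha).mul_prod
    (integrable_gegenbauerWeight hb))).congr (ae_of_all _ fun z ↦ ?_)
  rw [energyDensity, mul_comm]

theorem integrable_one_sub_sq_mul_sub_mul_energyDensity (ha : -1 < a.re) (hb : -1 < b.re)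
    (hk : 0 < k.re) :
    Integrable (fun z ↦ (1 - (z.1 : ℂ) ^ 2) * (z.1 - z.2) * energyDensity a b (k - 2) z)
      (Measure.prod ρ ρ) := by
  have ha' : a ≠ -1 := ne_neg_one_of_neg_one_lt_re ha
  have hW : Continuous fun z : ℝ × ℝ ↦ gegenbauerWeight (a + 1) z.1 :=
    (continuous_gegenbauerWeight (by simpa [neg_lt_iff_pos_add] using ha)).comp continuous_fst
  have hK : Integrable (fun z : ℝ × ℝ ↦ gegenbauerWeight b z.2 *
      (((z.1 - z.2 : ℝ) : ℂ) * rieszKernel (k - 2) (z.1 - z.2))) (Measure.prod ρ ρ) :=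
    integrable_prod_mul_comp_sub (h := fun u : ℝ ↦ (u : ℂ) * rieszKernel (k - 2) u)
      isCompact_Icc isCompact_Icc (integrable_gegenbauerWeight hb)
      (locallyIntegrable_mul_rieszKernel_sub_two hk)
  refine (integrable_continuous_mul hW hK).congr (ae_of_all _ fun z ↦ ?_)
  simp only [energyDensity, gegenbauerWeight_add_one ha', Complex.ofReal_sub]
  ring

theorem integrable_energyDivergence (ha : -1 < a.re) (hb : -1 < b.re) (hk : 0 < k.re)
    {G G' : ℝ × ℝ → ℂ} (hG : Continuous G) (hG' : Continuous G') :
    Integrable (energyDivergence a b k G G') (Measure.prod ρ ρ) := by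
  have hreg := integrable_continuous_mul
    (p := fun z ↦ (1 - (z.1 : ℂ) ^ 2) * G' z - 2 * (a + 1) * z.1 * G z) (by fun_prop)
    (integrable_energyDensity ha hb hk)
  have hsing := integrable_continuous_mul (hG.const_mul k)
    (integrable_one_sub_sq_mul_sub_mul_energyDensity ha hb hk)
  refine (hreg.add hsing).congr (ae_of_all _ fun z ↦ ?_)
  simp only [energyDivergence, Pi.add_apply]
  ring

theorem hasDerivAt_mul_energyDensity (ha : a ≠ -1) (hk : k ≠ 0) {G G' : ℝ × ℝ → ℂ} {s t : ℝ}
    (hG : HasDerivAt (fun s ↦ G (s, t)) (G' (s, t)) s) (hs : 1 - s ^ 2 ≠ 0) (hst : s ≠ t) :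
    HasDerivAt (fun s ↦ G (s, t) * energyDensity (a + 1) b k (s, t))
      (energyDivergence a b k G G' (s, t)) s := by
  have hK : HasDerivAt (fun s ↦ rieszKernel k (s - t))
      (k * ((s - t : ℝ) * rieszKernel (k - 2) (s - t))) s :=
    (hasDerivAt_rieszKernel hk (sub_ne_zero.mpr hst)).comp_sub_const s t
  have hΦ := ((hasDerivAt_gegenbauerWeight ha hs).mul_const (gegenbauerWeight b t)).mul hK
  refine (hG.mul hΦ).congr_deriv ?_
  simp only [energyDivergence, energyDensity, gegenbauerWeight_add_one ha, Complex.ofReal_sub,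
    Pi.mul_apply]
  ring

theorem integral_energyDivergence (ha : -1 < a.re) (hb : -1 < b.re) (hk : 0 < k.re)
    {G G' : ℝ × ℝ → ℂ} (hG : Continuous G) (hG' : Continuous G')
    (hGG' : ∀ s t, HasDerivAt (fun s ↦ G (s, t)) (G' (s, t)) s) :
    ∫ z, energyDivergence a b k G G' z ∂(Measure.prod ρ ρ) = 0 := by
  have ha' : a ≠ -1 := ne_neg_one_of_neg_one_lt_re ha
  have hk' : k ≠ 0 := Complex.ne_zero_of_re_pos hk
  have hW := continuous_gegenbauerWeight (a := a + 1) (by simpa [neg_lt_iff_pos_add] using ha)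
  have hK := continuous_rieszKernel hk
  have hint := integrable_energyDivergence ha hb hk hG hG'
  rw [integral_prod_symm _ hint]
  refine integral_eq_zero_of_ae ?_
  filter_upwards [hint.prod_left_ae] with t ht
  have hF : Continuous fun s ↦ G (s, t) * energyDensity (a + 1) b k (s, t) := by
    simp only [energyDensity]
    fun_prop
  have hftc := integral_eq_of_hasDerivAt_off_countable_of_le _ _ (by norm_num : (-1 : ℝ) ≤ 1)
    (countable_singleton t) hF.continuousOn
    (fun s hs ↦ hasDerivAt_mul_energyDensity ha' hk' (hGG' s t)
      (by nlinarith [hs.1.1, hs.1.2]) hs.2)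
    ((intervalIntegrable_iff_integrableOn_Icc_of_le (by norm_num)).mpr ht)
  rw [integral_Icc_eq_integral_Ioc, ← integral_of_le (by norm_num), hftc]
  simp [energyDensity_add_one ha']

end Energy

section Recurrence

variable {a b ν : ℂ}

-- With `s = z.1` and `t = z.2`, the kernel of exponent `2 * ν - 2` appears multiplied by
-- `(s - t) ^ 2` or by `s * (s - t) * ((1 - s ^ 2) - (1 - t ^ 2))`. Both are
-- multiples of `(s - t) ^ 2`, which restores the exponent `2 * ν`; the coefficient `b + 1 + ν` then
-- cancels the terms in `s * t`.
theorem energyDivergence_add_energyDivergence_swap (ha : a ≠ -1) (hν : ν ≠ 0) (z : ℝ × ℝ) :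
    energyDivergence a b (2 * ν)
        (fun w ↦ (b + 1 + ν) * (w.1 - w.2) + (a + 1) * w.1) (fun _ ↦ b + 1 + ν + (a + 1)) z +
      energyDivergence b a (2 * ν) (fun w ↦ (a + 1) * w.2) (fun _ ↦ 0) z.swap =
    2 * (a + ν + 3 / 2) * (a + b + ν + 2) * energyDensity (a + 1) b (2 * ν) z -
      2 * (a + 1) * (a + b + 2 * ν + 2) * energyDensity a b (2 * ν) z := by
  rw [energyDivergence, energyDivergence, energyDensity_swap, energyDensity_swap,
    energyDensity_add_one ha, ← sq_mul_energyDensity_sub_two (mul_ne_zero two_ne_zero hν),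
    Prod.fst_swap, Prod.snd_swap]
  ring

theorem integral_energyDensity_recurrence_eq_zero (ha : -1 < a.re) (hb : -1 < b.re)
    (hν : 0 < ν.re) :
    ∫ z, (2 * (a + ν + 3 / 2) * (a + b + ν + 2) * energyDensity (a + 1) b (2 * ν) z -
      2 * (a + 1) * (a + b + 2 * ν + 2) * energyDensity a b (2 * ν) z) ∂(Measure.prod ρ ρ) = 0 := by
  have ha' : a ≠ -1 := ne_neg_one_of_neg_one_lt_re ha
  have hν' : ν ≠ 0 := Complex.ne_zero_of_re_pos hν
  have hk : 0 < (2 * ν).re := by simpa using hν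
  set D₁ := energyDivergence a b (2 * ν)
    (fun w ↦ (b + 1 + ν) * (w.1 - w.2) + (a + 1) * w.1) (fun _ ↦ b + 1 + ν + (a + 1))
  set D₂ := energyDivergence b a (2 * ν) (fun w ↦ (a + 1) * w.2) (fun _ ↦ 0)
  have hi₁ : Integrable D₁ (Measure.prod ρ ρ) :=
    integrable_energyDivergence ha hb hk (by fun_prop) continuous_const
  have hi₂ : Integrable D₂ (Measure.prod ρ ρ) :=
    integrable_energyDivergence hb ha hk (by fun_prop) continuous_const
  have hI₁ : ∫ z, D₁ z ∂(Measure.prod ρ ρ) = 0 := by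
    refine integral_energyDivergence ha hb hk (by fun_prop) continuous_const fun s t ↦ ?_
    have hs : HasDerivAt (fun s : ℝ ↦ (s : ℂ)) 1 s := (hasDerivAt_id s).ofReal_comp
    simpa using ((hs.sub_const _).const_mul (b + 1 + ν)).fun_add (hs.const_mul (a + 1))
  have hI₂ : ∫ z, D₂ z ∂(Measure.prod ρ ρ) = 0 :=
    integral_energyDivergence hb ha hk (by fun_prop) continuous_const
      fun s t ↦ hasDerivAt_const s ((a + 1) * (t : ℂ))
  calc _ = ∫ z, (D₁ z + D₂ z.swap) ∂(Measure.prod ρ ρ) := by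
        simp only [D₁, D₂, energyDivergence_add_energyDivergence_swap ha' hν']
    _ = ∫ z, D₁ z ∂(Measure.prod ρ ρ) + ∫ z, D₂ z.swap ∂(Measure.prod ρ ρ) :=
        integral_add hi₁ hi₂.swap
    _ = 0 := by rw [integral_prod_swap, hI₁, hI₂, add_zero]

theorem rieszEnergy_add_one (ha : -1 < a.re) (hb : -1 < b.re) (hν : 0 < ν.re) :
    (a + ν + 3 / 2) * (a + b + ν + 2) * rieszEnergy (a + 1) b (2 * ν) =
      (a + 1) * (a + b + 2 * ν + 2) * rieszEnergy a b (2 * ν) := by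
  have hk : 0 < (2 * ν).re := by simpa using hν
  have h := integral_energyDensity_recurrence_eq_zero ha hb hν
  rw [integral_sub
    ((integrable_energyDensity (neg_one_lt_re_add_one ha) hb hk).const_mul _)
    ((integrable_energyDensity ha hb hk).const_mul _),
    MeasureTheory.integral_const_mul, MeasureTheory.integral_const_mul,
    ← rieszEnergy, ← rieszEnergy] at h
  linear_combination h / 2

end Recurrence

/-- The Riesz potential of the Gegenbauer weight of exponent `b`. -/
def rieszPotential (b k : ℂ) (s : ℝ) : ℂ := ∫ t, gegenbauerWeight b t * rieszKernel k (s - t) ∂ρ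

/-- The Gamma quotient that satisfies the same recurrence in `a` as `rieszEnergy a b (2 * ν)`. -/
def gammaQuotient (a b ν : ℂ) : ℂ :=
  Complex.Gamma (a + 1) * Complex.Gamma (a + b + 2 * ν + 2) /
    (Complex.Gamma (a + ν + 3 / 2) * Complex.Gamma (a + b + ν + 2))

section Concentration

variable {a b k : ℂ}

theorem gegenbauerWeight_add_natCast (ha : -1 < a.re) (n : ℕ) (s : ℝ) :
    gegenbauerWeight (a + n) s = (1 - (s : ℂ) ^ 2) ^ n * gegenbauerWeight a s := by
  induction n with
  | zero => simp
  | succ n ih =>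
    have hn : a + n ≠ -1 := ne_neg_one_of_neg_one_lt_re (neg_one_lt_re_add_natCast ha n)
    rw [Nat.cast_succ, ← add_assoc, gegenbauerWeight_add_one hn, ih, pow_succ (_ - _), mul_assoc,
      mul_left_comm]

theorem rieszPotential_zero (hb : -1 < b.re) (hk : -1 < k.re) :
    rieszPotential b k 0 = Complex.betaIntegral ((k + 1) / 2) (b + 1) := by
  simp only [rieszPotential, zero_sub, even_rieszKernel _,
    integral_gegenbauerWeight_mul_rieszKernel hb hk]

theorem rieszEnergy_eq_integral_rieszPotential (ha : -1 < a.re) (hb : -1 < b.re) (hk : 0 < k.re) :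
    rieszEnergy a b k = ∫ s, gegenbauerWeight a s * rieszPotential b k s ∂ρ := by
  rw [rieszEnergy, integral_prod _ (integrable_energyDensity ha hb hk)]
  simp only [energyDensity, mul_assoc, MeasureTheory.integral_const_mul, rieszPotential]

theorem integrable_gegenbauerWeight_mul_rieszPotential (ha : -1 < a.re) (hb : -1 < b.re)
    (hk : 0 < k.re) : Integrable (fun s ↦ gegenbauerWeight a s * rieszPotential b k s) ρ := by
  have h := (integrable_energyDensity ha hb hk).integral_prod_left
  simpa only [energyDensity, mul_assoc, MeasureTheory.integral_const_mul, rieszPotential] using h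

theorem continuousWithinAt_gegenbauerWeight_mul_rieszPotential (hb : -1 < b.re) (hk : 0 < k.re) :
    ContinuousWithinAt (fun s ↦ gegenbauerWeight a s * rieszPotential b k s) (Icc (-1) 1) 0 := by
  have hW : ContinuousAt (gegenbauerWeight a) 0 :=
    ContinuousAt.cpow (by fun_prop) continuousAt_const (by simp)
  have hf : ContinuousOn (rieszPotential b k) (Icc (-1) 1) :=
    continuousOn_setIntegral_mul_comp_sub isCompact_Icc isCompact_Icc
      (integrable_gegenbauerWeight hb) (continuous_rieszKernel hk)
  exact hW.continuousWithinAt.mul (hf 0 (by norm_num))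

theorem integral_one_sub_sq_pow (n : ℕ) :
    ((∫ s, (1 - s ^ 2) ^ n ∂ρ : ℝ) : ℂ) = Complex.betaIntegral (1 / 2) (n + 1) := by
  have hn : -1 < (n : ℂ).re := by simpa using neg_one_lt_zero.trans_le n.cast_nonneg
  rw [← integral_gegenbauerWeight hn, ← integral_complex_ofReal]
  simp only [gegenbauerWeight, Complex.cpow_natCast, Complex.ofReal_pow]

theorem tendsto_rieszEnergy_div_betaIntegral (ha : -1 < a.re) (hb : -1 < b.re) (hk : 0 < k.re) :
    Tendsto (fun n : ℕ ↦ rieszEnergy (a + n) b k / Complex.betaIntegral (1 / 2) (n + 1)) atTop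
      (𝓝 (Complex.betaIntegral ((k + 1) / 2) (b + 1))) := by
  have hpeak := tendsto_setIntegral_pow_smul_of_unique_maximum_of_isCompact_of_integrableOn
    (c := fun s : ℝ ↦ 1 - s ^ 2) isCompact_Icc (by fun_prop)
    (fun s _ hs ↦ by simpa using pow_pos (abs_pos.mpr hs) 2)
    (fun s hs ↦ by nlinarith [hs.1, hs.2]) (by norm_num)
    (by rw [interior_Icc, closure_Ioo (by norm_num)]; norm_num)
    (integrable_gegenbauerWeight_mul_rieszPotential ha hb hk)
    (continuousWithinAt_gegenbauerWeight_mul_rieszPotential hb hk)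
  have hzero : gegenbauerWeight a 0 = 1 := by simp [gegenbauerWeight]
  rw [hzero, one_mul, rieszPotential_zero hb (by linarith)] at hpeak
  refine hpeak.congr fun n ↦ ?_
  rw [rieszEnergy_eq_integral_rieszPotential (neg_one_lt_re_add_natCast ha n) hb hk, div_eq_inv_mul,
    ← integral_one_sub_sq_pow, Complex.real_smul, Complex.ofReal_inv]
  simp only [gegenbauerWeight_add_natCast ha, mul_assoc, Complex.real_smul, Complex.ofReal_pow,
    Complex.ofReal_sub, Complex.ofReal_one]

end Concentration

section GammaQuotient

open Complex

variable {a b ν : ℂ}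

theorem Gamma_one_half : Gamma (1 / 2) = (√Real.pi : ℝ) := by
  rw [← Real.Gamma_one_half_eq, ← Complex.Gamma_ofReal]
  norm_num

theorem gammaQuotient_args_re_pos (ha : -1 < a.re) (hb : -1 < b.re) (hν : 0 < ν.re) :
    0 < (a + 1).re ∧ 0 < (a + b + 2 * ν + 2).re ∧
      0 < (a + ν + 3 / 2).re ∧ 0 < (a + b + ν + 2).re := by
  refine ⟨?_, ?_, ?_, ?_⟩ <;> norm_num <;> linarith

theorem gammaQuotient_ne_zero (ha : -1 < a.re) (hb : -1 < b.re) (hν : 0 < ν.re) :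
    gammaQuotient a b ν ≠ 0 := by
  obtain ⟨h₁, h₂, h₃, h₄⟩ := gammaQuotient_args_re_pos ha hb hν
  exact div_ne_zero
    (mul_ne_zero (Gamma_ne_zero_of_re_pos h₁) (Gamma_ne_zero_of_re_pos h₂))
    (mul_ne_zero (Gamma_ne_zero_of_re_pos h₃) (Gamma_ne_zero_of_re_pos h₄))

theorem gammaQuotient_add_one (ha : -1 < a.re) (hb : -1 < b.re) (hν : 0 < ν.re) :
    (a + ν + 3 / 2) * (a + b + ν + 2) * gammaQuotient (a + 1) b ν =
      (a + 1) * (a + b + 2 * ν + 2) * gammaQuotient a b ν := by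
  obtain ⟨h₁, h₂, h₃, h₄⟩ := gammaQuotient_args_re_pos ha hb hν
  have h₃' := ne_zero_of_re_pos h₃
  have h₄' := ne_zero_of_re_pos h₄
  rw [gammaQuotient, gammaQuotient, Gamma_add_one _ (ne_zero_of_re_pos h₁),
    show a + 1 + b + 2 * ν + 2 = a + b + 2 * ν + 2 + 1 by ring,
    Gamma_add_one _ (ne_zero_of_re_pos h₂),
    show a + 1 + ν + 3 / 2 = a + ν + 3 / 2 + 1 by ring, Gamma_add_one _ h₃',
    show a + 1 + b + ν + 2 = a + b + ν + 2 + 1 by ring, Gamma_add_one _ h₄',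
    mul_mul_mul_comm (a + ν + 3 / 2), mul_div_mul_comm, ← mul_assoc,
    mul_div_cancel₀ _ (mul_ne_zero h₃' h₄')]
  ring

theorem rieszEnergy_div_gammaQuotient_add_one (ha : -1 < a.re) (hb : -1 < b.re) (hν : 0 < ν.re) :
    rieszEnergy (a + 1) b (2 * ν) / gammaQuotient (a + 1) b ν =
      rieszEnergy a b (2 * ν) / gammaQuotient a b ν := by
  obtain ⟨-, -, h₃, h₄⟩ := gammaQuotient_args_re_pos ha hb hν
  have hcoeff : (a + ν + 3 / 2) * (a + b + ν + 2) ≠ 0 :=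
    mul_ne_zero (ne_zero_of_re_pos h₃) (ne_zero_of_re_pos h₄)
  rw [div_eq_div_iff (gammaQuotient_ne_zero (neg_one_lt_re_add_one ha) hb hν)
    (gammaQuotient_ne_zero ha hb hν)]
  refine mul_left_cancel₀ hcoeff ?_
  linear_combination gammaQuotient a b ν * rieszEnergy_add_one ha hb hν -
    rieszEnergy a b (2 * ν) * gammaQuotient_add_one ha hb hν

theorem rieszEnergy_div_gammaQuotient_add_natCast (ha : -1 < a.re) (hb : -1 < b.re)
    (hν : 0 < ν.re) (n : ℕ) :
    rieszEnergy (a + n) b (2 * ν) / gammaQuotient (a + n) b ν =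
      rieszEnergy a b (2 * ν) / gammaQuotient a b ν := by
  induction n with
  | zero => simp
  | succ n ih =>
    rw [Nat.cast_succ, ← add_assoc, rieszEnergy_div_gammaQuotient_add_one
      (neg_one_lt_re_add_natCast ha n) hb hν, ih]

theorem betaIntegral_one_half_natCast_add_one (n : ℕ) :
    betaIntegral (1 / 2) (n + 1) = Gamma (1 / 2) * (Gamma (1 + n) / Gamma (3 / 2 + n)) := by
  have hn : 0 < ((n : ℂ) + 1).re := mod_cast n.cast_add_one_pos
  rw [betaIntegral_eq_Gamma_mul_div _ _ (by norm_num) hn, mul_div_assoc, add_comm 1,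
    show (1 / 2 : ℂ) + (n + 1) = 3 / 2 + n by ring]

theorem betaIntegral_one_half_natCast_add_one_ne_zero (n : ℕ) :
    betaIntegral (1 / 2) (n + 1) ≠ 0 := by
  have hΓ {x : ℂ} (hx : 0 < x.re) : Gamma (x + n) ≠ 0 :=
    Gamma_ne_zero_of_re_pos (by simpa using add_pos_of_pos_of_nonneg hx n.cast_nonneg)
  rw [betaIntegral_one_half_natCast_add_one]
  refine mul_ne_zero (Gamma_ne_zero_of_re_pos (by norm_num))
    (div_ne_zero (hΓ (by norm_num)) (hΓ (by norm_num)))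

theorem tendsto_betaIntegral_div_gammaQuotient (ha : -1 < a.re) (hb : -1 < b.re) (hν : 0 < ν.re) :
    Tendsto (fun n : ℕ ↦ betaIntegral (1 / 2) (n + 1) / gammaQuotient (a + n) b ν) atTop
      (𝓝 (Gamma (1 / 2))) := by
  obtain ⟨h₁, h₂, h₃, h₄⟩ := gammaQuotient_args_re_pos ha hb hν
  have hlim := tendsto_prod_Gamma_add_natCast_div Finset.univ
    (u := ![1, a + ν + 3 / 2, a + b + ν + 2]) (v := ![3 / 2, a + 1, a + b + 2 * ν + 2])
    (fun i _ ↦ ne_neg_natCast_of_re_pos (by fin_cases i <;> first | assumption | simp))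
    (fun i _ ↦ ne_neg_natCast_of_re_pos (by fin_cases i <;> first | assumption | simp))
    (by simp only [Fin.sum_univ_three, Matrix.cons_val]; ring)
  rw [← mul_one (Gamma (1 / 2))]
  refine (hlim.const_mul _).congr fun n ↦ ?_
  rw [betaIntegral_one_half_natCast_add_one, gammaQuotient]
  simp only [Fin.prod_univ_three, Matrix.cons_val, div_div_eq_mul_div]
  ring_nf

theorem rieszEnergy_eq_betaIntegral_mul_gammaQuotient (ha : -1 < a.re) (hb : -1 < b.re)
    (hν : 0 < ν.re) :
    rieszEnergy a b (2 * ν) =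
      betaIntegral (ν + 1 / 2) (b + 1) * Gamma (1 / 2) * gammaQuotient a b ν := by
  have hlim := (tendsto_rieszEnergy_div_betaIntegral ha hb (k := 2 * ν) (by simpa)).mul
    (tendsto_betaIntegral_div_gammaQuotient ha hb hν)
  have hconst (n : ℕ) : rieszEnergy (a + n) b (2 * ν) / betaIntegral (1 / 2) (n + 1) *
      (betaIntegral (1 / 2) (n + 1) / gammaQuotient (a + n) b ν) =
      rieszEnergy a b (2 * ν) / gammaQuotient a b ν := by
    rw [div_mul_div_cancel₀ (betaIntegral_one_half_natCast_add_one_ne_zero n),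
      rieszEnergy_div_gammaQuotient_add_natCast ha hb hν]
  simp only [hconst] at hlim
  rw [show (2 * ν + 1) / 2 = ν + 1 / 2 by ring] at hlim
  exact (div_eq_iff (gammaQuotient_ne_zero ha hb hν)).mp
    (tendsto_nhds_unique tendsto_const_nhds hlim)

end GammaQuotient

theorem rieszEnergy_eq_intervalIntegral {a b k : ℂ} (ha : -1 < a.re) (hb : -1 < b.re)
    (hk : 0 < k.re) :
    rieszEnergy a b k = ∫ s in (-1 : ℝ)..1, ∫ t in (-1 : ℝ)..1,
      rieszKernel k (s - t) * gegenbauerWeight a s * gegenbauerWeight b t := by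
  rw [rieszEnergy, integral_prod _ (integrable_energyDensity ha hb hk)]
  simp only [integral_of_le (neg_one_lt_zero.trans zero_lt_one).le, ← integral_Icc_eq_integral_Ioc,
    energyDensity, mul_assoc, mul_comm (rieszKernel _ _)]

end

theorem stmt13 (lam mu ν : ℂ) (hlam : -(1 / 2 : ℝ) < lam.re)
    (hmu : -(1 / 2 : ℝ) < mu.re) (hν : 0 < ν.re) :
    (∫ s in (-1 : ℝ)..1, ∫ t in (-1 : ℝ)..1,
        ((|s - t| : ℝ) : ℂ) ^ (2 * ν) * ((1 - s ^ 2 : ℝ) : ℂ) ^ (lam - 1 / 2 : ℂ) *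
          ((1 - t ^ 2 : ℝ) : ℂ) ^ (mu - 1 / 2 : ℂ)) =
      (Real.sqrt Real.pi : ℂ) * Complex.Gamma (lam + 1 / 2) * Complex.Gamma (mu + 1 / 2) *
          Complex.Gamma (ν + 1 / 2) * Complex.Gamma (lam + mu + 2 * ν + 1) /
        (Complex.Gamma (lam + ν + 1) * Complex.Gamma (mu + ν + 1) *
          Complex.Gamma (lam + mu + ν + 1)) := by
  have hlam' : -1 < (lam - 1 / 2).re := by norm_num; linarith
  have hmu' : -1 < (mu - 1 / 2).re := by norm_num; linarith
  have hk : 0 < (2 * ν).re := by simpa using hν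
  have henergy := rieszEnergy_eq_intervalIntegral hlam' hmu' hk
  simp only [rieszKernel, gegenbauerWeight] at henergy
  rw [← henergy, rieszEnergy_eq_betaIntegral_mul_gammaQuotient hlam' hmu' hν,
    Complex.betaIntegral_eq_Gamma_mul_div _ _ (by norm_num; linarith) (by norm_num; linarith),
    Gamma_one_half, gammaQuotient]
  ring_nf
end

section
/- Suppose λ, ν ∈ ℂ with Re λ > −1/2 and Re ν > 0. Then ∫_{−1}^1 ∫_{−1}^1 (1 − s²)^{λ−1/2} (1 − t²)^{λ−1/2} |s − t|^{2ν} ds dt = (2^{4λ+2ν} Γ(λ+1/2)² / Γ(2λ+1+ν)) · (Γ(λ+ν+1/2)² Γ(1+2ν) / (Γ(2λ+2ν+1) Γ(1+ν))). (This is the n = 2, α = β = λ + 1/2 case of the Selberg integral, after the change of variables t_i = (1 + x_i)/2.) -/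
open MeasureTheory intervalIntegral

/-!
Anderson's argument for Selberg's integral in two variables. Insert a point `y` between `s` and `t`
and integrate the function
`(t - s) ((s - a) (t - a)) ^ (α - 1) ((b - s) (b - t)) ^ (β - 1) ((y - s) (t - y)) ^ (γ - 1)`
over `a < s < y < t < b` in two ways. Integrating over `y` first gives a Beta integral times the
Selberg integrand on `s < t`. For fixed `y`, on the other hand, the residues of
`(x - s) (x - t) / ((x - a) (x - y) (x - b))` at `a` and `b` are coordinates for the pair `(s, t)`
whose Jacobian is proportional to `t - s`; they turn the integral over `(s, t)` into Dirichlet's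
integral over a triangle, and what is left is a Beta integral in `y`.
-/

open Set

section TruncatedPowers

/-- The truncated power `x₊ ^ (u - 1)`, equal to `x ^ (u - 1)` for `0 < x` and to zero otherwise.
The shift of the exponent makes the convolution of the powers with parameters `u` and `v` a multiple
of the one with parameter `u + v`. Integrals of products of truncated powers may be taken over the
whole space, as the factors carry the domain of integration. -/
noncomputable def truncCpow (u : ℂ) (x : ℝ) : ℂ :=
  if 0 < x then (x : ℂ) ^ (u - 1) else 0

lemma truncCpow_of_pos (u : ℂ) {x : ℝ} (hx : 0 < x) : truncCpow u x = (x : ℂ) ^ (u - 1) :=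
  if_pos hx

lemma truncCpow_of_nonpos (u : ℂ) {x : ℝ} (hx : x ≤ 0) : truncCpow u x = 0 :=
  if_neg hx.not_gt

lemma truncCpow_two_of_pos {x : ℝ} (hx : 0 < x) : truncCpow 2 x = x := by
  rw [truncCpow_of_pos 2 hx, show (2 : ℂ) - 1 = 1 by norm_num, Complex.cpow_one]

lemma truncCpow_ne_zero (u : ℂ) {x : ℝ} (hx : 0 < x) : truncCpow u x ≠ 0 := by
  rw [truncCpow_of_pos u hx]
  exact fun h ↦ hx.ne' (Complex.ofReal_eq_zero.1 ((Complex.cpow_eq_zero_iff _ _).1 h).1)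

@[fun_prop]
lemma measurable_truncCpow (u : ℂ) : Measurable (truncCpow u) :=
  Measurable.ite measurableSet_Ioi (by fun_prop) measurable_const

lemma ofReal_norm_truncCpow (u : ℂ) (x : ℝ) : ((‖truncCpow u x‖ : ℝ) : ℂ) = truncCpow u.re x := by
  rcases lt_or_ge 0 x with hx | hx
  · rw [truncCpow_of_pos _ hx, truncCpow_of_pos _ hx, Complex.norm_cpow_eq_rpow_re_of_pos hx,
      Complex.ofReal_cpow hx.le]
    simp
  · simp [truncCpow_of_nonpos _ hx]

lemma truncCpow_mul_of_pos (u : ℂ) {x : ℝ} (hx : 0 < x) (y : ℝ) :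
    truncCpow u (x * y) = truncCpow u x * truncCpow u y := by
  rcases lt_or_ge 0 y with hy | hy
  · rw [truncCpow_of_pos u (mul_pos hx hy), truncCpow_of_pos u hx, truncCpow_of_pos u hy,
      Complex.ofReal_mul, Complex.mul_cpow_ofReal_nonneg hx.le hy.le]
  · rw [truncCpow_of_nonpos u hy, truncCpow_of_nonpos u (mul_nonpos_of_nonneg_of_nonpos hx.le hy),
      mul_zero]

lemma truncCpow_mul_truncCpow (u v : ℂ) (x : ℝ) :
    truncCpow u x * truncCpow v x = truncCpow (u + v - 1) x := by
  rcases lt_or_ge 0 x with hx | hx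
  · have hx0 : (x : ℂ) ≠ 0 := by exact_mod_cast hx.ne'
    simp only [truncCpow_of_pos _ hx, ← Complex.cpow_add _ _ hx0]
    ring_nf
  · simp [truncCpow_of_nonpos _ hx]

lemma truncCpow_add (u v : ℂ) (x : ℝ) :
    truncCpow (u + v) x = truncCpow 2 x * truncCpow u x * truncCpow v x := by
  rw [truncCpow_mul_truncCpow, truncCpow_mul_truncCpow]
  ring_nf

lemma ofReal_abs_cpow_eq_truncCpow_add {u : ℂ} (hu : u ≠ 0) (x : ℝ) :
    ((|x| : ℝ) : ℂ) ^ u = truncCpow (u + 1) x + truncCpow (u + 1) (-x) := by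
  rcases lt_trichotomy x 0 with hx | rfl | hx
  · rw [abs_of_neg hx, truncCpow_of_nonpos _ hx.le, truncCpow_of_pos _ (neg_pos.2 hx)]
    simp
  · simp [truncCpow, hu]
  · rw [abs_of_pos hx, truncCpow_of_pos _ hx, truncCpow_of_nonpos _ (neg_nonpos.2 hx.le)]
    simp

end TruncatedPowers

section BetaWeight

/-- The Beta weight `(x - a) ^ (u - 1) * (b - x) ^ (v - 1)` on the interval `(a, b)`, extended by
zero to the real line. -/
noncomputable def betaWeight (a b : ℝ) (u v : ℂ) (x : ℝ) : ℂ :=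
  truncCpow u (x - a) * truncCpow v (b - x)

lemma betaWeight_of_mem {a b : ℝ} (u v : ℂ) {x : ℝ} (hx : x ∈ Ioo a b) :
    betaWeight a b u v x = ((x - a : ℝ) : ℂ) ^ (u - 1) * ((b - x : ℝ) : ℂ) ^ (v - 1) := by
  rw [betaWeight, truncCpow_of_pos u (sub_pos.2 hx.1), truncCpow_of_pos v (sub_pos.2 hx.2)]

lemma betaWeight_of_notMem {a b : ℝ} (u v : ℂ) {x : ℝ} (hx : x ∉ Ioo a b) :
    betaWeight a b u v x = 0 := by
  rcases not_and_or.1 hx with h | h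
  · rw [betaWeight, truncCpow_of_nonpos u (by linarith), zero_mul]
  · rw [betaWeight, truncCpow_of_nonpos v (by linarith), mul_zero]

lemma betaWeight_eq_zero_of_le {a b : ℝ} (u v : ℂ) (hba : b ≤ a) : betaWeight a b u v = 0 :=
  funext fun x ↦ betaWeight_of_notMem u v (by simp [Ioo_eq_empty hba.not_gt])

lemma ofReal_norm_betaWeight (a b : ℝ) (u v : ℂ) (x : ℝ) :
    ((‖betaWeight a b u v x‖ : ℝ) : ℂ) = betaWeight a b u.re v.re x := by
  simp only [betaWeight, norm_mul, Complex.ofReal_mul, ofReal_norm_truncCpow]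

lemma intervalIntegral_mul_eq_integral_betaWeight_mul {a b : ℝ} (hab : a ≤ b) (u v : ℂ)
    (f : ℝ → ℂ) :
    ∫ x in a..b, ((x - a : ℝ) : ℂ) ^ (u - 1) * ((b - x : ℝ) : ℂ) ^ (v - 1) * f x =
      ∫ x, betaWeight a b u v x * f x := by
  rw [integral_of_le hab, integral_Ioc_eq_integral_Ioo,
    ← setIntegral_eq_integral_of_forall_compl_eq_zero (s := Ioo a b) (μ := volume)
      fun x hx ↦ by rw [betaWeight_of_notMem u v hx, zero_mul]]
  exact setIntegral_congr_fun measurableSet_Ioo fun x hx ↦ by simp only [betaWeight_of_mem u v hx]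

lemma integral_betaWeight (a b : ℝ) (u v : ℂ) :
    ∫ x, betaWeight a b u v x = Complex.betaIntegral u v * truncCpow (u + v) (b - a) := by
  rcases lt_or_ge a b with hab | hab
  · have translate := integral_comp_sub_right (a := a) (b := b)
      (fun x : ℝ ↦ (x : ℂ) ^ (u - 1) * (((b - a : ℝ) : ℂ) - x) ^ (v - 1)) a
    rw [sub_self, Complex.betaIntegral_scaled u v (sub_pos.2 hab)] at translate
    have cut := intervalIntegral_mul_eq_integral_betaWeight_mul hab.le u v fun _ ↦ 1
    simp only [mul_one] at cut
    rw [← cut, truncCpow_of_pos _ (sub_pos.2 hab), mul_comm, ← translate]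
    congr! 4 with x
    push_cast
    ring
  · simp [betaWeight_eq_zero_of_le u v hab, truncCpow_of_nonpos _ (sub_nonpos.2 hab)]

lemma betaIntegral_ne_zero {u v : ℂ} (hu : 0 < u.re) (hv : 0 < v.re) :
    Complex.betaIntegral u v ≠ 0 := by
  have : 0 < (u + v).re := by simpa using add_pos hu hv
  rw [Complex.betaIntegral_eq_Gamma_mul_div u v hu hv]
  exact div_ne_zero (mul_ne_zero (Complex.Gamma_ne_zero_of_re_pos hu)
    (Complex.Gamma_ne_zero_of_re_pos hv)) (Complex.Gamma_ne_zero_of_re_pos this)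

lemma integrable_betaWeight (a b : ℝ) {u v : ℂ} (hu : 0 < u.re) (hv : 0 < v.re) :
    Integrable (betaWeight a b u v) := by
  rcases lt_or_ge a b with hab | hab
  · -- The integral of a non-integrable function is `0` by convention.
    refine Integrable.of_integral_ne_zero ?_
    rw [integral_betaWeight]
    exact mul_ne_zero (betaIntegral_ne_zero hu hv) (truncCpow_ne_zero _ (sub_pos.2 hab))
  · exact betaWeight_eq_zero_of_le u v hab ▸ integrable_zero ℝ ℂ volume

end BetaWeight

lemma integrable_prod_of_integral_norm {X Y : Type*} [MeasurableSpace X] [MeasurableSpace Y]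
    {μ : Measure X} {ν : Measure Y} [SFinite ν] {f g : X × Y → ℂ}
    (hf : AEStronglyMeasurable f (μ.prod ν)) (hg : ∀ z, ((‖f z‖ : ℝ) : ℂ) = g z)
    (hsection : ∀ x, Integrable (fun y ↦ f (x, y)) ν)
    (hint : Integrable (fun x ↦ ∫ y, g (x, y) ∂ν) μ) : Integrable f (μ.prod ν) := by
  rw [integrable_prod_iff hf]
  refine ⟨.of_forall hsection, ?_⟩
  simp only [← hg, integral_complex_ofReal] at hint
  simpa using hint.re

section Dirichlet

/-- The density `p ^ (α - 1) * q ^ (β - 1) * (1 - p - q) ^ (γ - 1)` of Dirichlet's integral on the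
triangle `0 < p`, `0 < q`, `p + q < 1`, extended by zero to the plane. -/
noncomputable def dirichletDensity (α β γ : ℂ) (p : ℝ × ℝ) : ℂ :=
  truncCpow α p.1 * truncCpow β p.2 * truncCpow γ (1 - p.1 - p.2)

lemma dirichletDensity_eq_mul_betaWeight (α β γ : ℂ) (x y : ℝ) :
    dirichletDensity α β γ (x, y) = truncCpow α x * betaWeight 0 (1 - x) β γ y := by
  simp only [dirichletDensity, betaWeight, sub_zero, mul_assoc]

lemma integral_dirichletDensity_right (α β γ : ℂ) (x : ℝ) :
    ∫ y, dirichletDensity α β γ (x, y) =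
      Complex.betaIntegral β γ * betaWeight 0 1 α (β + γ) x := by
  simp only [dirichletDensity_eq_mul_betaWeight, MeasureTheory.integral_const_mul,
    integral_betaWeight]
  rw [betaWeight, sub_zero, sub_zero]
  ring

variable {α β γ : ℂ}

lemma integrable_dirichletDensity (hα : 0 < α.re) (hβ : 0 < β.re) (hγ : 0 < γ.re) :
    Integrable (dirichletDensity α β γ) := by
  refine integrable_prod_of_integral_norm (g := dirichletDensity α.re β.re γ.re)
    (by unfold dirichletDensity; fun_prop) (fun z ↦ ?_) (fun x ↦ ?_) ?_
  · simp only [dirichletDensity, norm_mul, Complex.ofReal_mul, ofReal_norm_truncCpow]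
  · simpa only [dirichletDensity_eq_mul_betaWeight]
      using (integrable_betaWeight 0 (1 - x) hβ hγ).const_mul _
  · simpa only [integral_dirichletDensity_right] using
      (integrable_betaWeight 0 1 (by simpa) (by simpa using add_pos hβ hγ)).const_mul _

lemma integral_dirichletDensity (hα : 0 < α.re) (hβ : 0 < β.re) (hγ : 0 < γ.re) :
    ∫ p, dirichletDensity α β γ p =
      Complex.Gamma α * Complex.Gamma β * Complex.Gamma γ / Complex.Gamma (α + β + γ) := by
  have hβγ : 0 < (β + γ).re := by simpa using add_pos hβ hγ
  have integral_eq : ∫ p, dirichletDensity α β γ p =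
      Complex.betaIntegral β γ * Complex.betaIntegral α (β + γ) := by
    rw [Measure.volume_eq_prod, integral_prod _ (integrable_dirichletDensity hα hβ hγ)]
    simp only [integral_dirichletDensity_right, MeasureTheory.integral_const_mul,
      integral_betaWeight]
    simp [truncCpow]
  rw [integral_eq, Complex.betaIntegral_eq_Gamma_mul_div β γ hβ hγ,
    Complex.betaIntegral_eq_Gamma_mul_div α (β + γ) hα hβγ, ← add_assoc]
  field_simp [Complex.Gamma_ne_zero_of_re_pos hβγ]

end Dirichlet

section AndersonMap

/-- Anderson's change of variables: the pair `(s, t)` is sent to the residues of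
`(x - s) * (x - t) / ((x - a) * (x - y) * (x - b))` at `x = a` and `x = b`. -/
noncomputable def andersonMap (a b y : ℝ) (p : ℝ × ℝ) : ℝ × ℝ :=
  ((p.1 - a) * (p.2 - a) / ((y - a) * (b - a)), (b - p.1) * (b - p.2) / ((b - y) * (b - a)))

/-- The derivative of `andersonMap a b y` at `p`, given by its Jacobian matrix. -/
noncomputable def andersonMapDeriv (a b y : ℝ) (p : ℝ × ℝ) : ℝ × ℝ →L[ℝ] ℝ × ℝ :=
  (Matrix.toLin (.finTwoProd ℝ) (.finTwoProd ℝ)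
    !![(p.2 - a) / ((y - a) * (b - a)), (p.1 - a) / ((y - a) * (b - a));
      -(b - p.2) / ((b - y) * (b - a)), -(b - p.1) / ((b - y) * (b - a))]).toContinuousLinearMap

lemma hasFDerivAt_andersonMap (a b y : ℝ) (p : ℝ × ℝ) :
    HasFDerivAt (andersonMap a b y) (andersonMapDeriv a b y p) p := by
  have h1 : HasFDerivAt (fun p : ℝ × ℝ ↦ p.1) (ContinuousLinearMap.fst ℝ ℝ ℝ) p := hasFDerivAt_fst
  have h2 : HasFDerivAt (fun p : ℝ × ℝ ↦ p.2) (ContinuousLinearMap.snd ℝ ℝ ℝ) p := hasFDerivAt_snd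
  simp only [andersonMapDeriv, Matrix.toLin_finTwoProd_toContinuousLinearMap]
  refine (HasFDerivAt.prodMk
    (((h1.sub_const a).mul (h2.sub_const a)).mul_const ((y - a) * (b - a))⁻¹)
    (((h1.const_sub b).mul (h2.const_sub b)).mul_const ((b - y) * (b - a))⁻¹)).congr_fderiv ?_
  ext <;> simp [div_eq_mul_inv, -mul_inv_rev] <;> ring

variable {a b y : ℝ}

lemma det_andersonMapDeriv (hy : y ∈ Ioo a b) (p : ℝ × ℝ) :
    (andersonMapDeriv a b y p).det = -(p.2 - p.1) / ((y - a) * (b - y) * (b - a)) := by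
  have hya : y - a ≠ 0 := (sub_pos.2 hy.1).ne'
  have hby : b - y ≠ 0 := (sub_pos.2 hy.2).ne'
  have hba : b - a ≠ 0 := (sub_pos.2 (hy.1.trans hy.2)).ne'
  simp only [andersonMapDeriv, LinearMap.det_toContinuousLinearMap, LinearMap.det_toLin,
    Matrix.det_fin_two_of]
  field_simp
  ring

lemma one_sub_andersonMap (hy : y ∈ Ioo a b) (p : ℝ × ℝ) :
    1 - (andersonMap a b y p).1 - (andersonMap a b y p).2 =
      (y - p.1) * (p.2 - y) / ((y - a) * (b - y)) := by
  have hya : y - a ≠ 0 := (sub_pos.2 hy.1).ne'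
  have hby : b - y ≠ 0 := (sub_pos.2 hy.2).ne'
  have hba : b - a ≠ 0 := (sub_pos.2 (hy.1.trans hy.2)).ne'
  simp only [andersonMap]
  field_simp
  ring

lemma andersonMap_eq_iff (hy : y ∈ Ioo a b) {p q : ℝ × ℝ} :
    andersonMap a b y p = q ↔
      (p.1 - a) * (p.2 - a) = q.1 * ((y - a) * (b - a)) ∧
        (b - p.1) * (b - p.2) = q.2 * ((b - y) * (b - a)) := by
  have hba : 0 < b - a := sub_pos.2 (hy.1.trans hy.2)
  rw [Prod.ext_iff, andersonMap, div_eq_iff (mul_pos (sub_pos.2 hy.1) hba).ne',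
    div_eq_iff (mul_pos (sub_pos.2 hy.2) hba).ne']

lemma injOn_andersonMap (hy : y ∈ Ioo a b) : InjOn (andersonMap a b y) (Iio y ×ˢ Ioi y) := by
  rintro ⟨s, t⟩ ⟨hs, ht⟩ ⟨s', t'⟩ ⟨hs', ht'⟩ h
  have hba : b - a ≠ 0 := (sub_pos.2 (hy.1.trans hy.2)).ne'
  obtain ⟨h_left, h_right⟩ := (andersonMap_eq_iff hy).1 h
  rw [← ((andersonMap_eq_iff hy).1 rfl).1] at h_left
  rw [← ((andersonMap_eq_iff hy).1 rfl).2] at h_right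
  simp only [mem_Iio, mem_Ioi] at hs ht hs' ht' h_left h_right
  have sum_eq : s + t = s' + t' := mul_left_cancel₀ hba (by linarith)
  have roots : (s - s') * (s - t') = 0 := by
    obtain rfl : t' = s + t - s' := by linarith
    linarith
  have s_eq : s = s' := by
    rcases mul_eq_zero.1 roots with h | h <;> linarith
  exact Prod.ext s_eq (by linarith)

lemma exists_add_eq_mul_eq_of_quadratic_neg {e f y : ℝ} (h : y ^ 2 - e * y + f < 0) :
    ∃ s t, s < y ∧ y < t ∧ s + t = e ∧ s * t = f := by
  have hdisc : (y - e / 2) ^ 2 < (e / 2) ^ 2 - f := by linarith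
  have hsq := Real.sq_sqrt ((sq_nonneg _).trans hdisc.le)
  obtain ⟨hlower, hupper⟩ := abs_lt_of_sq_lt_sq' (hsq.symm ▸ hdisc) (Real.sqrt_nonneg _)
  exact ⟨e / 2 - √((e / 2) ^ 2 - f), e / 2 + √((e / 2) ^ 2 - f), by linarith, by linarith,
    by ring, by linarith⟩

lemma image_andersonMap (hy : y ∈ Ioo a b) :
    andersonMap a b y '' (Iio y ×ˢ Ioi y) = {q : ℝ × ℝ | q.1 + q.2 < 1} := by
  have hya : 0 < y - a := sub_pos.2 hy.1
  have hby : 0 < b - y := sub_pos.2 hy.2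
  ext ⟨u, v⟩
  constructor
  · rintro ⟨p, ⟨hs, ht⟩, hp⟩
    have hpos : 0 < (y - p.1) * (p.2 - y) / ((y - a) * (b - y)) :=
      div_pos (mul_pos (sub_pos.2 hs) (sub_pos.2 ht)) (mul_pos hya hby)
    rw [← one_sub_andersonMap hy, hp] at hpos
    simp only [mem_ofPred_eq]
    linarith
  · intro (huv : u + v < 1)
    -- The values of `s + t` and `s * t` forced by `andersonMap a b y (s, t) = (u, v)`.
    let e := a + b + (y - a) * u - (b - y) * v
    let f := (y - a) * (b - a) * u + a * e - a ^ 2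
    have hneg : y ^ 2 - e * y + f < 0 := by
      have : 0 < (y - a) * (b - y) * (1 - u - v) :=
        mul_pos (mul_pos hya hby) (by linarith)
      linear_combination this
    obtain ⟨s, t, hs, ht, hsum, hprod⟩ := exists_add_eq_mul_eq_of_quadratic_neg hneg
    refine ⟨(s, t), ⟨hs, ht⟩, (andersonMap_eq_iff hy).2 ⟨?_, ?_⟩⟩
    · linear_combination hprod - a * hsum
    · linear_combination hprod - b * hsum

end AndersonMap

section AndersonKernel

/-- The integrand of Anderson's argument at `(y, s, t)`: the pair `(s, t)` is the unknown of
Selberg's integral over `(a, b)` and `y` is the auxiliary point. It vanishes unless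
`a < s < y < t < b`. -/
noncomputable def andersonKernel (a b : ℝ) (α β γ : ℂ) (z : ℝ × ℝ × ℝ) : ℂ :=
  betaWeight a b α β z.2.1 * betaWeight a b α β z.2.2 * truncCpow 2 (z.2.2 - z.2.1) *
    betaWeight z.2.1 z.2.2 γ γ z.1

/-- The integrand of Selberg's integral in two variables, restricted to `a < s < t < b`. -/
noncomputable def orderedSelbergKernel (a b : ℝ) (α β γ : ℂ) (p : ℝ × ℝ) : ℂ :=
  betaWeight a b α β p.1 * betaWeight a b α β p.2 * truncCpow (2 * γ + 1) (p.2 - p.1)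

lemma integral_andersonKernel_left (a b : ℝ) (α β γ : ℂ) (p : ℝ × ℝ) :
    ∫ y, andersonKernel a b α β γ (y, p) =
      Complex.betaIntegral γ γ * orderedSelbergKernel a b α β γ p := by
  simp only [andersonKernel, orderedSelbergKernel, MeasureTheory.integral_const_mul,
    integral_betaWeight]
  rw [show 2 * γ + 1 = 2 + (γ + γ) - 1 by ring, ← truncCpow_mul_truncCpow]
  ring

lemma andersonKernel_eq_zero_of_notMem_Ioo {a b y : ℝ} (α β γ : ℂ) (hy : y ∉ Ioo a b) (p : ℝ × ℝ) :
    andersonKernel a b α β γ (y, p) = 0 := by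
  by_contra hne
  simp only [andersonKernel, mul_ne_zero_iff] at hne
  obtain ⟨⟨⟨hs, ht⟩, -⟩, hyst⟩ := hne
  have hs := not_imp_comm.1 (betaWeight_of_notMem α β) hs
  have ht := not_imp_comm.1 (betaWeight_of_notMem α β) ht
  have hyst := not_imp_comm.1 (betaWeight_of_notMem γ γ) hyst
  exact hy ⟨hs.1.trans hyst.1, hyst.2.trans ht.2⟩

lemma andersonKernel_eq_zero_of_notMem_prod (a b : ℝ) (α β γ : ℂ) {y : ℝ} {p : ℝ × ℝ}
    (hp : p ∉ Iio y ×ˢ Ioi y) : andersonKernel a b α β γ (y, p) = 0 := by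
  rw [andersonKernel, betaWeight_of_notMem γ γ fun hy ↦ hp ⟨hy.1, hy.2⟩, mul_zero]

lemma truncCpow_two_sub_eq_mul_abs_det {a b y : ℝ} (hy : y ∈ Ioo a b) {p : ℝ × ℝ}
    (hp : p.1 < p.2) :
    truncCpow 2 (p.2 - p.1) = truncCpow 2 (y - a) * truncCpow 2 (b - y) * truncCpow 2 (b - a) *
      |(andersonMapDeriv a b y p).det| := by
  have hya : 0 < y - a := sub_pos.2 hy.1
  have hby : 0 < b - y := sub_pos.2 hy.2
  have hba : 0 < b - a := sub_pos.2 (hy.1.trans hy.2)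
  have hts : 0 < p.2 - p.1 := sub_pos.2 hp
  rw [det_andersonMapDeriv hy, neg_div, abs_neg, abs_of_pos (by positivity),
    truncCpow_two_of_pos hya, truncCpow_two_of_pos hby, truncCpow_two_of_pos hba,
    truncCpow_two_of_pos hts]
  norm_cast
  field_simp

lemma andersonKernel_eq_abs_det_smul {a b y : ℝ} (α β γ : ℂ) (hy : y ∈ Ioo a b) {p : ℝ × ℝ}
    (hp : p ∈ Iio y ×ˢ Ioi y) :
    andersonKernel a b α β γ (y, p) =
      truncCpow (α + β) (b - a) * betaWeight a b (α + γ) (β + γ) y *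
        (|(andersonMapDeriv a b y p).det| • dirichletDensity α β γ (andersonMap a b y p)) := by
  have hya : 0 < y - a := sub_pos.2 hy.1
  have hby : 0 < b - y := sub_pos.2 hy.2
  have hba : 0 < b - a := by linarith
  obtain ⟨hs : p.1 < y, ht : y < p.2⟩ := hp
  have left_weights : truncCpow α (p.1 - a) * truncCpow α (p.2 - a) =
      truncCpow α (y - a) * truncCpow α (b - a) * truncCpow α (andersonMap a b y p).1 := by
    rw [mul_comm, ← truncCpow_mul_of_pos α (by linarith), ← truncCpow_mul_of_pos α hya,
      ← truncCpow_mul_of_pos α (mul_pos hya hba), mul_comm (p.2 - a),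
      ((andersonMap_eq_iff hy).1 rfl).1, mul_comm]
  have right_weights : truncCpow β (b - p.1) * truncCpow β (b - p.2) =
      truncCpow β (b - y) * truncCpow β (b - a) * truncCpow β (andersonMap a b y p).2 := by
    rw [← truncCpow_mul_of_pos β (by linarith), ← truncCpow_mul_of_pos β hby,
      ← truncCpow_mul_of_pos β (mul_pos hby hba), ((andersonMap_eq_iff hy).1 rfl).2, mul_comm]
  have middle_weights : betaWeight p.1 p.2 γ γ y = truncCpow γ (y - a) * truncCpow γ (b - y) *
      truncCpow γ (1 - (andersonMap a b y p).1 - (andersonMap a b y p).2) := by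
    rw [betaWeight, ← truncCpow_mul_of_pos γ (sub_pos.2 hs), ← truncCpow_mul_of_pos γ hya,
      ← truncCpow_mul_of_pos γ (mul_pos hya hby), one_sub_andersonMap hy,
      mul_div_cancel₀ _ (mul_pos hya hby).ne']
  calc andersonKernel a b α β γ (y, p)
      = (truncCpow α (p.1 - a) * truncCpow α (p.2 - a)) *
          (truncCpow β (b - p.1) * truncCpow β (b - p.2)) * truncCpow 2 (p.2 - p.1) *
          betaWeight p.1 p.2 γ γ y := by
        simp only [andersonKernel, betaWeight]
        ring
    _ = _ := by
        rw [left_weights, right_weights, middle_weights,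
          truncCpow_two_sub_eq_mul_abs_det hy (hs.trans ht), betaWeight, dirichletDensity,
          truncCpow_add α β, truncCpow_add α γ, truncCpow_add β γ, Complex.real_smul]
        ring

lemma integral_andersonKernel_right_of_mem {a b y : ℝ} (α β γ : ℂ) (hy : y ∈ Ioo a b) :
    ∫ p, andersonKernel a b α β γ (y, p) =
      truncCpow (α + β) (b - a) * betaWeight a b (α + γ) (β + γ) y *
        ∫ p, dirichletDensity α β γ p := by
  have hmeas : MeasurableSet (Iio y ×ˢ Ioi y) := measurableSet_Iio.prod measurableSet_Ioi
  have change_variables := integral_image_eq_integral_abs_det_fderiv_smul volume hmeas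
    (fun p _ ↦ (hasFDerivAt_andersonMap a b y p).hasFDerivWithinAt) (injOn_andersonMap hy)
    (dirichletDensity α β γ)
  have vanish : ∀ q ∉ {q : ℝ × ℝ | q.1 + q.2 < 1}, dirichletDensity α β γ q = 0 := by
    intro q (hq : ¬q.1 + q.2 < 1)
    have : 1 - q.1 - q.2 ≤ 0 := by linarith
    rw [dirichletDensity, truncCpow_of_nonpos γ this, mul_zero]
  rw [image_andersonMap hy, setIntegral_eq_integral_of_forall_compl_eq_zero vanish]
    at change_variables
  rw [change_variables, ← MeasureTheory.integral_const_mul,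
    ← setIntegral_eq_integral_of_forall_compl_eq_zero
      fun p ↦ andersonKernel_eq_zero_of_notMem_prod a b α β γ]
  exact setIntegral_congr_fun hmeas fun p ↦ andersonKernel_eq_abs_det_smul α β γ hy

lemma integral_andersonKernel_right (a b y : ℝ) (α β γ : ℂ) :
    ∫ p, andersonKernel a b α β γ (y, p) =
      truncCpow (α + β) (b - a) * (∫ p, dirichletDensity α β γ p) *
        betaWeight a b (α + γ) (β + γ) y := by
  by_cases hy : y ∈ Ioo a b
  · rw [integral_andersonKernel_right_of_mem α β γ hy]
    ring
  · simp [andersonKernel_eq_zero_of_notMem_Ioo α β γ hy, betaWeight_of_notMem _ _ hy]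

variable {α β γ : ℂ}

lemma integrable_andersonKernel_right (hα : 0 < α.re) (hβ : 0 < β.re) (hγ : 0 < γ.re)
    (a b y : ℝ) : Integrable (fun p ↦ andersonKernel a b α β γ (y, p)) := by
  by_cases hy : y ∈ Ioo a b
  · have hmeas : MeasurableSet (Iio y ×ˢ Ioi y) := measurableSet_Iio.prod measurableSet_Ioi
    have change_variables := (integrableOn_image_iff_integrableOn_abs_det_fderiv_smul volume hmeas
      (fun p _ ↦ (hasFDerivAt_andersonMap a b y p).hasFDerivWithinAt) (injOn_andersonMap hy) _).1
      (integrable_dirichletDensity hα hβ hγ).integrableOn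
    refine IntegrableOn.integrable_of_forall_notMem_eq_zero (s := Iio y ×ˢ Ioi y) ?_
      fun p ↦ andersonKernel_eq_zero_of_notMem_prod a b α β γ
    exact IntegrableOn.congr_fun (change_variables.const_mul _)
      (fun p hp ↦ (andersonKernel_eq_abs_det_smul α β γ hy hp).symm) hmeas
  · simp [andersonKernel_eq_zero_of_notMem_Ioo α β γ hy]

lemma ofReal_norm_andersonKernel (a b : ℝ) (α β γ : ℂ) (z : ℝ × ℝ × ℝ) :
    ((‖andersonKernel a b α β γ z‖ : ℝ) : ℂ) = andersonKernel a b α.re β.re γ.re z := by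
  simp only [andersonKernel, norm_mul, Complex.ofReal_mul, ofReal_norm_betaWeight,
    ofReal_norm_truncCpow, Complex.re_ofNat, Complex.ofReal_ofNat]

lemma integrable_andersonKernel (hα : 0 < α.re) (hβ : 0 < β.re) (hγ : 0 < γ.re) (a b : ℝ) :
    Integrable (andersonKernel a b α β γ) := by
  refine integrable_prod_of_integral_norm (g := andersonKernel a b α.re β.re γ.re)
    (by unfold andersonKernel betaWeight; fun_prop) (ofReal_norm_andersonKernel a b α β γ)
    (integrable_andersonKernel_right hα hβ hγ a b) ?_
  simp only [integral_andersonKernel_right]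
  exact (integrable_betaWeight a b (by simpa using add_pos hα hγ)
    (by simpa using add_pos hβ hγ)).const_mul _

end AndersonKernel

section Selberg

variable {α β γ : ℂ}

lemma integrable_orderedSelbergKernel (hα : 0 < α.re) (hβ : 0 < β.re) (hγ : 0 < γ.re) (a b : ℝ) :
    Integrable (orderedSelbergKernel a b α β γ) := by
  have h := (integrable_andersonKernel hα hβ hγ a b).integral_prod_right
  simp only [integral_andersonKernel_left] at h
  exact (integrable_const_mul_iff (betaIntegral_ne_zero hγ hγ).isUnit _).1 h

lemma betaIntegral_mul_integral_orderedSelbergKernel (hα : 0 < α.re) (hβ : 0 < β.re)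
    (hγ : 0 < γ.re) (a b : ℝ) :
    Complex.betaIntegral γ γ * ∫ p, orderedSelbergKernel a b α β γ p =
      truncCpow (α + β) (b - a) * (∫ p, dirichletDensity α β γ p) *
        (Complex.betaIntegral (α + γ) (β + γ) * truncCpow (α + γ + (β + γ)) (b - a)) := by
  have fubini := integral_integral_swap (f := fun y p ↦ andersonKernel a b α β γ (y, p))
    (integrable_andersonKernel hα hβ hγ a b)
  simpa only [integral_andersonKernel_left, integral_andersonKernel_right,
    MeasureTheory.integral_const_mul, integral_betaWeight] using fubini.symm

lemma integral_orderedSelbergKernel {a b : ℝ} (hab : a < b) (hα : 0 < α.re) (hβ : 0 < β.re)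
    (hγ : 0 < γ.re) :
    ∫ p, orderedSelbergKernel a b α β γ p =
      ((b - a : ℝ) : ℂ) ^ (2 * α + 2 * β + 2 * γ - 2) *
        (Complex.Gamma α * Complex.Gamma β * Complex.Gamma (α + γ) * Complex.Gamma (β + γ) *
            Complex.Gamma (2 * γ) /
          (Complex.Gamma γ * Complex.Gamma (α + β + γ) * Complex.Gamma (α + β + 2 * γ))) := by
  have hαγ : 0 < (α + γ).re := by simpa using add_pos hα hγ
  have hβγ : 0 < (β + γ).re := by simpa using add_pos hβ hγ
  have h2γ : 0 < (2 * γ).re := by simpa using hγ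
  have two_ways := betaIntegral_mul_integral_orderedSelbergKernel hα hβ hγ a b
  have powers : truncCpow (α + β) (b - a) * truncCpow (α + β + 2 * γ) (b - a) =
      ((b - a : ℝ) : ℂ) ^ (2 * α + 2 * β + 2 * γ - 2) := by
    rw [truncCpow_mul_truncCpow, truncCpow_of_pos _ (sub_pos.2 hab)]
    ring_nf
  rw [Complex.betaIntegral_eq_Gamma_mul_div _ _ hγ hγ, integral_dirichletDensity hα hβ hγ,
    Complex.betaIntegral_eq_Gamma_mul_div _ _ hαγ hβγ, ← two_mul,
    show α + γ + (β + γ) = α + β + 2 * γ by ring] at two_ways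
  have hΓγ := Complex.Gamma_ne_zero_of_re_pos hγ
  have hΓ2γ := Complex.Gamma_ne_zero_of_re_pos h2γ
  rw [← powers]
  field_simp at two_ways ⊢
  linear_combination two_ways

lemma orderedSelbergKernel_add_swap (a b : ℝ) (hγ : γ ≠ 0) (s t : ℝ) :
    orderedSelbergKernel a b α β γ (s, t) + orderedSelbergKernel a b α β γ (t, s) =
      betaWeight a b α β s * (betaWeight a b α β t * ((|s - t| : ℝ) : ℂ) ^ (2 * γ)) := by
  rw [ofReal_abs_cpow_eq_truncCpow_add (mul_ne_zero two_ne_zero hγ), neg_sub]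
  simp only [orderedSelbergKernel]
  ring

lemma integral_selberg_eq_two_mul_integral_ordered {a b : ℝ} (hab : a ≤ b) (hα : 0 < α.re)
    (hβ : 0 < β.re) (hγ : 0 < γ.re) :
    (∫ s in a..b, ∫ t in a..b,
        (((s - a : ℝ) : ℂ) ^ (α - 1) * ((b - s : ℝ) : ℂ) ^ (β - 1)) *
          ((((t - a : ℝ) : ℂ) ^ (α - 1) * ((b - t : ℝ) : ℂ) ^ (β - 1)) *
            ((|s - t| : ℝ) : ℂ) ^ (2 * γ))) =
      2 * ∫ p, orderedSelbergKernel a b α β γ p := by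
  have hγ0 : γ ≠ 0 := fun h ↦ by simp [h] at hγ
  have hint := integrable_orderedSelbergKernel hα hβ hγ a b
  calc _ = ∫ s, ∫ t, betaWeight a b α β s *
            (betaWeight a b α β t * ((|s - t| : ℝ) : ℂ) ^ (2 * γ)) := by
        simp only [intervalIntegral.integral_const_mul, MeasureTheory.integral_const_mul,
          intervalIntegral_mul_eq_integral_betaWeight_mul hab]
    _ = ∫ p : ℝ × ℝ, orderedSelbergKernel a b α β γ p + orderedSelbergKernel a b α β γ p.swap := by
        simp only [← orderedSelbergKernel_add_swap a b hγ0]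
        exact (integral_prod _ (hint.add hint.swap)).symm
    _ = 2 * ∫ p, orderedSelbergKernel a b α β γ p := by
        rw [two_mul]
        exact (integral_add hint hint.swap).trans
          (congrArg _ (integral_prod_swap (orderedSelbergKernel a b α β γ)))

end Selberg

lemma one_sub_sq_cpow (μ : ℂ) {x : ℝ} (hx : x ∈ Icc (-1 : ℝ) 1) :
    ((1 - x ^ 2 : ℝ) : ℂ) ^ μ = ((x - -1 : ℝ) : ℂ) ^ μ * ((1 - x : ℝ) : ℂ) ^ μ := by
  rw [show 1 - x ^ 2 = (x - -1) * (1 - x) by ring, Complex.ofReal_mul,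
    Complex.mul_cpow_ofReal_nonneg (by linarith [hx.1]) (by linarith [hx.2])]

theorem stmt14_general {a b : ℝ} (hab : a < b) {α β γ : ℂ} (hα : 0 < α.re) (hβ : 0 < β.re)
    (hγ : 0 < γ.re) :
    (∫ s in a..b, ∫ t in a..b,
        (((s - a : ℝ) : ℂ) ^ (α - 1) * ((b - s : ℝ) : ℂ) ^ (β - 1)) *
          ((((t - a : ℝ) : ℂ) ^ (α - 1) * ((b - t : ℝ) : ℂ) ^ (β - 1)) *
            ((|s - t| : ℝ) : ℂ) ^ (2 * γ))) =
      ((b - a : ℝ) : ℂ) ^ (2 * α + 2 * β + 2 * γ - 2) *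
        (Complex.Gamma α * Complex.Gamma β * Complex.Gamma (α + γ) * Complex.Gamma (β + γ) *
            Complex.Gamma (1 + 2 * γ) /
          (Complex.Gamma (α + β + γ) * Complex.Gamma (α + β + 2 * γ) * Complex.Gamma (1 + γ))) := by
  have hγ0 : γ ≠ 0 := fun h ↦ by simp [h] at hγ
  have hΓγ := Complex.Gamma_ne_zero_of_re_pos hγ
  rw [integral_selberg_eq_two_mul_integral_ordered hab.le hα hβ hγ,
    integral_orderedSelbergKernel hab hα hβ hγ, add_comm 1 γ, add_comm 1 (2 * γ),
    Complex.Gamma_add_one γ hγ0, Complex.Gamma_add_one (2 * γ) (mul_ne_zero two_ne_zero hγ0)]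
  field_simp

theorem stmt14 (lam ν : ℂ) (hlam : -(1 / 2 : ℝ) < lam.re) (hν : 0 < ν.re) :
    (∫ s in (-1 : ℝ)..1, ∫ t in (-1 : ℝ)..1,
        ((1 - s ^ 2 : ℝ) : ℂ) ^ (lam - 1 / 2 : ℂ) *
          ((1 - t ^ 2 : ℝ) : ℂ) ^ (lam - 1 / 2 : ℂ) *
          ((|s - t| : ℝ) : ℂ) ^ (2 * ν)) =
      (2 : ℂ) ^ (4 * lam + 2 * ν) * Complex.Gamma (lam + 1 / 2) ^ 2 /
          Complex.Gamma (2 * lam + 1 + ν) *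
        (Complex.Gamma (lam + ν + 1 / 2) ^ 2 * Complex.Gamma (1 + 2 * ν) /
          (Complex.Gamma (2 * lam + 2 * ν + 1) * Complex.Gamma (1 + ν))) := by
  have hα : 0 < (lam + 1 / 2).re := by
    rw [Complex.add_re, show (1 / 2 : ℂ).re = 1 / 2 by norm_num]
    linarith
  convert stmt14_general (by norm_num : (-1 : ℝ) < 1) hα hα hν using 1
  · refine integral_congr fun s hs ↦ integral_congr fun t ht ↦ ?_
    rw [uIcc_of_le (by norm_num)] at hs ht
    simp only [one_sub_sq_cpow _ hs, one_sub_sq_cpow _ ht, mul_assoc]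
    ring_nf
  · push_cast
    ring_nf
end
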